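/- arXiv:1412.0562 — 2 statements merged into one kernel-verified Lean document; each statement's English description precedes it below -/
import Mathlib

section
/- Being an $\mathcal{S}$-domain is not a local property of the boundary: there exist $n \ge 2$ and a bounded domain $D \subseteq \mathbb{C}^n$ with smooth boundary such that $D$ is not an $\mathcal{S}$-domain, yet every boundary point $P \in \partial D$ has an open neighbourhood $U$ such that $D \cap U$ is an $\mathcal{S}$-domain. -/
open MeasureTheory Real Filter Topology Metric

noncomputable section

/-- Encoding of the circle mean `(2π)⁻¹ ∫₀^{2π} u(a+e^{iθ}b) dθ` for an `EReal`-valued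
(upper semicontinuous) function `u`, as the infimum of the means of the truncations
`max (u ·) (-m)`. -/
def circleMean {n : ℕ} (u : EuclideanSpace ℂ (Fin n) → EReal)
    (a b : EuclideanSpace ℂ (Fin n)) : EReal :=
  ⨅ m : ℕ, (((2 * π)⁻¹ *
      ∫ θ in (0:ℝ)..(2 * π),
        (u (a + Complex.exp ((θ : ℂ) * Complex.I) • b) ⊔ ((-(m : ℝ) : ℝ) : EReal)).toReal : ℝ)
      : EReal)

/-- `u : Ω → [-∞, ∞)` is plurisubharmonic on an open `Ω ⊆ ℂⁿ`. -/
def IsPSHOn {n : ℕ} (Ω : Set (EuclideanSpace ℂ (Fin n)))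
    (u : EuclideanSpace ℂ (Fin n) → EReal) : Prop :=
  UpperSemicontinuousOn u Ω ∧
  (∀ z ∈ Ω, u z ≠ ⊤) ∧
  (∀ z ∈ Ω, ∃ w ∈ connectedComponentIn Ω z, u w ≠ ⊥) ∧
  ∀ a b : EuclideanSpace ℂ (Fin n),
    (∀ l : ℂ, ‖l‖ ≤ 1 → a + l • b ∈ Ω) → u a ≤ circleMean u a b

/-- `D` is an `𝒮`-domain: a domain on which every plurisubharmonic function is the
pointwise limit of a decreasing sequence of smooth plurisubharmonic functions. -/
def IsSDomain {n : ℕ} (D : Set (EuclideanSpace ℂ (Fin n))) : Prop :=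
  IsOpen D ∧ IsConnected D ∧
  ∀ u : EuclideanSpace ℂ (Fin n) → EReal, IsPSHOn D u →
    ∃ v : ℕ → EuclideanSpace ℂ (Fin n) → ℝ,
      (∀ k, ContDiffOn ℝ (⊤ : ℕ∞) (v k) D) ∧
      (∀ k, IsPSHOn D (fun z => ((v k z : ℝ) : EReal))) ∧
      (∀ k, ∀ z ∈ D, v (k+1) z ≤ v k z) ∧
      (∀ z ∈ D, Tendsto (fun k => ((v k z : ℝ) : EReal)) atTop (nhds (u z)))

/-- `D ⊆ ℂⁿ` has Lipschitz boundary: near each boundary point, after a rigid motion of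
(the real) coordinates, the boundary is the graph of a Lipschitz function and the domain
is the region below the graph. -/
def HasLipschitzBoundary {n : ℕ} (D : Set (EuclideanSpace ℂ (Fin n))) : Prop :=
  ∀ p ∈ frontier D,
    ∃ (φ : EuclideanSpace ℂ (Fin n) ≃ᵢ WithLp 2 (EuclideanSpace ℝ (Fin (2*n-1)) × ℝ))
      (F : EuclideanSpace ℝ (Fin (2*n-1)) → ℝ) (L : NNReal)
      (V : Set (WithLp 2 (EuclideanSpace ℝ (Fin (2*n-1)) × ℝ))),
      LipschitzWith L F ∧ IsOpen V ∧ φ p ∈ V ∧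
      ∀ q ∈ V, (φ.symm q ∈ D ↔
        (WithLp.equiv 2 (EuclideanSpace ℝ (Fin (2*n-1)) × ℝ) q).2 <
          F (WithLp.equiv 2 (EuclideanSpace ℝ (Fin (2*n-1)) × ℝ) q).1)

/-- `D ⊆ ℂⁿ` has smooth boundary: near each boundary point, after a rigid motion of (the
real) coordinates, the boundary is the graph of a smooth function and the domain is the
region below the graph. -/
def HasSmoothBoundary {n : ℕ} (D : Set (EuclideanSpace ℂ (Fin n))) : Prop :=
  ∀ p ∈ frontier D,
    ∃ (φ : EuclideanSpace ℂ (Fin n) ≃ᵢ WithLp 2 (EuclideanSpace ℝ (Fin (2*n-1)) × ℝ))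
      (F : EuclideanSpace ℝ (Fin (2*n-1)) → ℝ)
      (V : Set (WithLp 2 (EuclideanSpace ℝ (Fin (2*n-1)) × ℝ))),
      ContDiff ℝ (⊤ : ℕ∞) F ∧ IsOpen V ∧ φ p ∈ V ∧
      ∀ q ∈ V, (φ.symm q ∈ D ↔
        (WithLp.equiv 2 (EuclideanSpace ℝ (Fin (2*n-1)) × ℝ) q).2 <
          F (WithLp.equiv 2 (EuclideanSpace ℝ (Fin (2*n-1)) × ℝ) q).1)

/-- The circle point. -/
abbrev circPt {n : ℕ} (a b : EuclideanSpace ℂ (Fin n)) (θ : ℝ) : EuclideanSpace ℂ (Fin n) :=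
  a + Complex.exp ((θ : ℂ) * Complex.I) • b

/-- Sub-mean value property on all closed discs, for real functions. -/
def RPSH {n : ℕ} (Ω : Set (EuclideanSpace ℂ (Fin n))) (f : EuclideanSpace ℂ (Fin n) → ℝ) : Prop :=
  ∀ a b : EuclideanSpace ℂ (Fin n), (∀ l : ℂ, ‖l‖ ≤ 1 → a + l • b ∈ Ω) →
    f a ≤ (2 * π)⁻¹ * ∫ θ in (0:ℝ)..(2 * π), f (circPt a b θ)

/-- Smooth psh functions. -/
def SPSH {n : ℕ} (Ω : Set (EuclideanSpace ℂ (Fin n))) (f : EuclideanSpace ℂ (Fin n) → ℝ) : Prop :=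
  ContDiffOn ℝ (⊤ : ℕ∞) f Ω ∧ RPSH Ω f

section basics
variable {n : ℕ}

lemma norm_cexp (θ : ℝ) : ‖Complex.exp ((θ : ℂ) * Complex.I)‖ = 1 :=
  Complex.norm_exp_ofReal_mul_I θ

lemma circPt_mem {Ω : Set (EuclideanSpace ℂ (Fin n))} {a b : EuclideanSpace ℂ (Fin n)}
    (h : ∀ l : ℂ, ‖l‖ ≤ 1 → a + l • b ∈ Ω) (θ : ℝ) : circPt a b θ ∈ Ω :=
  h _ (norm_cexp θ).le

lemma continuous_circPt (a b : EuclideanSpace ℂ (Fin n)) : Continuous (circPt a b) := by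
  unfold circPt; fun_prop

lemma circ_intervalIntegrable {Ω : Set (EuclideanSpace ℂ (Fin n))}
    {f : EuclideanSpace ℂ (Fin n) → ℝ}
    (hf : ContinuousOn f Ω) {a b : EuclideanSpace ℂ (Fin n)}
    (h : ∀ l : ℂ, ‖l‖ ≤ 1 → a + l • b ∈ Ω) :
    IntervalIntegrable (fun θ => f (circPt a b θ)) volume 0 (2 * π) := by
  apply Continuous.intervalIntegrable
  rw [← continuousOn_univ]
  exact hf.comp (continuous_circPt a b).continuousOn (fun θ _ => circPt_mem h θ)

/-- A real continuous function with the submean property is psh. -/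
lemma RPSH.isPSHOn {Ω : Set (EuclideanSpace ℂ (Fin n))} {f : EuclideanSpace ℂ (Fin n) → ℝ}
    (hc : ContinuousOn f Ω) (hf : RPSH Ω f) : IsPSHOn Ω (fun z => ((f z : ℝ) : EReal)) := by
  refine ⟨?_, fun z _ => EReal.coe_ne_top _, fun z hz => ⟨z, mem_connectedComponentIn hz,
    EReal.coe_ne_bot _⟩, ?_⟩
  · have : ContinuousOn (fun z => ((f z : ℝ) : EReal)) Ω :=
      continuous_coe_real_ereal.comp_continuousOn hc
    exact this.upperSemicontinuousOn
  · intro a b h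
    unfold circleMean
    refine le_iInf fun m => ?_
    rw [EReal.coe_le_coe_iff]
    refine (hf a b h).trans ?_
    have hpi : 0 < 2 * π := by positivity
    refine mul_le_mul_of_nonneg_left ?_ (by positivity)
    have e : ∀ θ : ℝ, (((f (circPt a b θ) : ℝ) : EReal) ⊔ ((-(m : ℝ) : ℝ) : EReal)).toReal
        = max (f (circPt a b θ)) (-(m : ℝ)) := by
      intro θ
      rw [← EReal.coe_strictMono.monotone.map_max, EReal.toReal_coe]
    refine intervalIntegral.integral_mono_on hpi.le (circ_intervalIntegrable hc h) ?_ ?_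
    · simp only [e]
      exact circ_intervalIntegrable (f := fun z => max (f z) (-(m:ℝ)))
        (hc.sup continuousOn_const) h
    · intro θ _
      have := e θ
      simp only [circPt] at this ⊢
      rw [this]
      exact le_max_left _ _

/-- Truncation from below, as a real function. -/
def trunc (u : EuclideanSpace ℂ (Fin n) → EReal) (m : ℕ) (z : EuclideanSpace ℂ (Fin n)) : ℝ :=
  (u z ⊔ ((-(m : ℝ) : ℝ) : EReal)).toReal

lemma coe_trunc {u : EuclideanSpace ℂ (Fin n) → EReal} {m : ℕ} {z : EuclideanSpace ℂ (Fin n)}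
    (hz : u z ≠ ⊤) : ((trunc u m z : ℝ) : EReal) = u z ⊔ ((-(m : ℝ) : ℝ) : EReal) := by
  unfold trunc
  apply EReal.coe_toReal
  · exact (max_lt (lt_top_iff_ne_top.2 hz) (EReal.coe_lt_top _)).ne
  · exact (lt_of_lt_of_le (EReal.bot_lt_coe _) (le_max_right _ _)).ne'

lemma le_trunc {u : EuclideanSpace ℂ (Fin n) → EReal} {m : ℕ} {z : EuclideanSpace ℂ (Fin n)}
    (hz : u z ≠ ⊤) : u z ≤ ((trunc u m z : ℝ) : EReal) := by
  rw [coe_trunc hz]; exact le_max_left _ _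

lemma neg_le_trunc {u : EuclideanSpace ℂ (Fin n) → EReal} {m : ℕ} {z : EuclideanSpace ℂ (Fin n)}
    (hz : u z ≠ ⊤) : -(m : ℝ) ≤ trunc u m z := by
  rw [← EReal.coe_le_coe_iff, coe_trunc hz]; exact le_max_right _ _

lemma trunc_le {u : EuclideanSpace ℂ (Fin n) → EReal} {m : ℕ} {z : EuclideanSpace ℂ (Fin n)}
    {c : ℝ} (hz : u z ≠ ⊤) (h1 : u z ≤ (c : EReal)) (h2 : -(m : ℝ) ≤ c) : trunc u m z ≤ c := by
  rw [← EReal.coe_le_coe_iff, coe_trunc hz]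
  exact max_le h1 (EReal.coe_le_coe_iff.2 h2)

lemma trunc_usc {Ω : Set (EuclideanSpace ℂ (Fin n))} {u : EuclideanSpace ℂ (Fin n) → EReal}
    (hu : IsPSHOn Ω u) (m : ℕ) : UpperSemicontinuousOn (trunc u m) Ω := by
  intro x hx c hc
  have h1 : u x < (c : EReal) := (le_trunc (hu.2.1 x hx)).trans_lt (EReal.coe_lt_coe_iff.2 hc)
  have h2 : -(m : ℝ) < c := (neg_le_trunc (hu.2.1 x hx)).trans_lt hc
  filter_upwards [hu.1 x hx _ h1, self_mem_nhdsWithin] with y hy hyΩ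
  rw [← EReal.coe_lt_coe_iff, coe_trunc (hu.2.1 y hyΩ)]
  exact max_lt hy (EReal.coe_lt_coe_iff.2 h2)

lemma trunc_rpsh {Ω : Set (EuclideanSpace ℂ (Fin n))} {u : EuclideanSpace ℂ (Fin n) → EReal}
    (hu : IsPSHOn Ω u) (m : ℕ) : RPSH Ω (trunc u m) := by
  intro a b h
  have ha : a ∈ Ω := by simpa using h 0 (by simp)
  refine trunc_le (hu.2.1 a ha) ?_ ?_
  · refine (hu.2.2.2 a b h).trans ?_
    exact iInf_le _ m
  · have hpi : 0 < 2 * π := by positivity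
    by_cases hI : IntervalIntegrable (fun θ => trunc u m (circPt a b θ)) volume 0 (2 * π)
    · have : ∫ θ in (0:ℝ)..(2 * π), (-(m:ℝ)) ≤ ∫ θ in (0:ℝ)..(2 * π), trunc u m (circPt a b θ) :=
        intervalIntegral.integral_mono_on hpi.le (by simp) hI
          (fun θ _ => neg_le_trunc (hu.2.1 _ (circPt_mem h θ)))
      rw [intervalIntegral.integral_const, smul_eq_mul, sub_zero] at this
      calc -(m:ℝ) = (2 * π)⁻¹ * (2 * π * -(m:ℝ)) := by field_simp
        _ ≤ _ := mul_le_mul_of_nonneg_left this (by positivity)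
    · rw [intervalIntegral.integral_undef hI]; simp

/-- Smooth convex function used for the regularised maximum. -/
lemma exists_theta {η : ℝ} (hη : 0 < η) : ∃ Θ : ℝ → ℝ, ContDiff ℝ (⊤ : ℕ∞) Θ ∧
    (∀ t, 0 ≤ Θ t) ∧ (∀ t, t ≤ Θ t) ∧ (∀ t, t ≤ -η → Θ t = 0) ∧ (∀ t, Θ t ≤ max t 0 + η) ∧
    (∀ t0, ∃ s, 0 ≤ s ∧ s ≤ 1 ∧ ∀ t, Θ t0 + s * (t - t0) ≤ Θ t) := by
  set τ : ℝ → ℝ := fun s => smoothTransition ((s + η) / η) with hτ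
  have hτc : ContDiff ℝ (⊤ : ℕ∞) τ := by
    have : ContDiff ℝ (⊤ : ℕ∞) (fun s : ℝ => (s + η) / η) := by fun_prop
    exact (smoothTransition.contDiff (n := ⊤)).comp this
  have hcont : Continuous τ := hτc.continuous
  have hII : ∀ a b, IntervalIntegrable τ volume a b := fun a b => hcont.intervalIntegrable a b
  set Θ : ℝ → ℝ := fun t => ∫ s in (-η)..t, τ s with hΘ
  have hd : ∀ t, HasDerivAt Θ (τ t) t := fun t =>
    intervalIntegral.integral_hasDerivAt_right (hII _ _)
      (hcont.stronglyMeasurableAtFilter _ _) hcont.continuousAt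
  have hmono : Monotone τ := fun x y h => smoothTransition.monotone (by gcongr)
  have h0 : ∀ s, 0 ≤ τ s := fun s => smoothTransition.nonneg _
  have h1 : ∀ s, τ s ≤ 1 := fun s => smoothTransition.le_one _
  have hz : ∀ s, s ≤ -η → τ s = 0 := fun s hs => smoothTransition.zero_of_nonpos
    (div_nonpos_of_nonpos_of_nonneg (by linarith) hη.le)
  have ho : ∀ s, 0 ≤ s → τ s = 1 := fun s hs => smoothTransition.one_of_one_le
    (by rw [le_div_iff₀ hη]; linarith)
  have sub : ∀ a b, Θ b - Θ a = ∫ s in a..b, τ s := fun a b => by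
    simp only [hΘ]; rw [intervalIntegral.integral_interval_sub_left (hII _ _) (hII _ _)]
  have zero : ∀ t, t ≤ -η → Θ t = 0 := by
    intro t ht
    simp only [hΘ]
    rw [intervalIntegral.integral_congr (g := fun _ => (0:ℝ))]
    · simp
    · intro s hs
      rw [Set.uIcc_of_ge ht] at hs
      exact hz s hs.2
  have lip : ∀ a b, a ≤ b → 0 ≤ Θ b - Θ a ∧ Θ b - Θ a ≤ b - a := by
    intro a b hab
    rw [sub]
    refine ⟨intervalIntegral.integral_nonneg hab (fun s _ => h0 s), ?_⟩
    have := intervalIntegral.integral_mono_on hab (hII a b) (by simp) (fun s _ => h1 s)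
    simpa using this
  have big : ∀ t, 0 ≤ t → Θ t - Θ 0 = t := by
    intro t ht
    rw [sub, intervalIntegral.integral_congr (g := fun _ => (1:ℝ))]
    · simp
    · intro s hs
      rw [Set.uIcc_of_le ht] at hs
      exact ho s hs.1
  have hnn : ∀ t, 0 ≤ Θ t := by
    intro t
    rcases le_total t (-η) with h | h
    · rw [zero t h]
    · have := (lip (-η) t h).1
      rw [zero (-η) le_rfl] at this; linarith
  have hΘ0 : Θ 0 ≤ η := by
    have := (lip (-η) 0 (by linarith)).2
    rw [zero (-η) le_rfl] at this; linarith
  refine ⟨Θ, ?_, hnn, ?_, zero, ?_, ?_⟩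
  · have : ContDiff ℝ ((⊤ : ℕ∞) + 1) Θ := by
      rw [contDiff_succ_iff_deriv]
      refine ⟨fun t => (hd t).differentiableAt, by simp, ?_⟩
      have : deriv Θ = τ := funext fun t => (hd t).deriv
      rw [this]; exact hτc
    exact this.of_le (by simp)
  · intro t
    rcases le_total t 0 with h | h
    · exact h.trans (hnn t)
    · have := big t h
      linarith [hnn 0]
  · intro t
    rcases le_total t 0 with h | h
    · rw [max_eq_right h]; linarith [(lip t 0 h).1]
    · rw [max_eq_left h]; linarith [big t h]
  · intro t0
    refine ⟨τ t0, h0 _, h1 _, fun t => ?_⟩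
    rcases le_total t0 t with h | h
    · have e : ∫ s in t0..t, τ t0 ≤ ∫ s in t0..t, τ s :=
        intervalIntegral.integral_mono_on h (by simp) (hII _ _) (fun s hs => hmono hs.1)
      rw [← sub] at e
      simp only [intervalIntegral.integral_const, smul_eq_mul] at e
      linarith
    · have e : ∫ s in t..t0, τ s ≤ ∫ s in t..t0, τ t0 :=
        intervalIntegral.integral_mono_on h (hII _ _) (by simp) (fun s hs => hmono hs.2)
      rw [← sub] at e
      simp only [intervalIntegral.integral_const, smul_eq_mul] at e
      linarith

/-- regularised maximum preserves smooth psh. -/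
lemma SPSH.regmax {Ω : Set (EuclideanSpace ℂ (Fin n))} {f g : EuclideanSpace ℂ (Fin n) → ℝ}
    (hf : SPSH Ω f) (hg : SPSH Ω g) {Θ : ℝ → ℝ} (hΘ : ContDiff ℝ (⊤ : ℕ∞) Θ)
    (hconv : ∀ t0, ∃ s, 0 ≤ s ∧ s ≤ 1 ∧ ∀ t, Θ t0 + s * (t - t0) ≤ Θ t) :
    SPSH Ω (fun z => f z + Θ (g z - f z)) := by
  refine ⟨hf.1.add (hΘ.comp_contDiffOn (hg.1.sub hf.1)), ?_⟩
  intro a b h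
  obtain ⟨s, hs0, hs1, hs⟩ := hconv (g a - f a)
  have If := circ_intervalIntegrable hf.1.continuousOn h
  have Ig := circ_intervalIntegrable hg.1.continuousOn h
  have IM := circ_intervalIntegrable (f := fun z => f z + Θ (g z - f z))
    (hf.1.add (hΘ.comp_contDiffOn (hg.1.sub hf.1))).continuousOn h
  have hpi : 0 < 2 * π := by positivity
  set c := Θ (g a - f a) - s * (g a - f a) with hc
  have key : ∫ θ in (0:ℝ)..(2 * π), ((1 - s) * f (circPt a b θ) + s * g (circPt a b θ) + c) ≤
      ∫ θ in (0:ℝ)..(2 * π), (f (circPt a b θ) + Θ (g (circPt a b θ) - f (circPt a b θ))) := by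
    refine intervalIntegral.integral_mono_on hpi.le ?_ IM ?_
    · exact ((If.const_mul _).add (Ig.const_mul _)).add (by simp)
    · intro θ _
      have := hs (g (circPt a b θ) - f (circPt a b θ))
      rw [hc]; linarith
  rw [intervalIntegral.integral_add ((If.const_mul _).add (Ig.const_mul _)) (by simp),
    intervalIntegral.integral_add (If.const_mul _) (Ig.const_mul _),
    intervalIntegral.integral_const_mul, intervalIntegral.integral_const_mul,
    intervalIntegral.integral_const, sub_zero, smul_eq_mul] at key
  have hfa := mul_le_mul_of_nonneg_left (hf.2 a b h) (sub_nonneg.2 hs1)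
  have hga := mul_le_mul_of_nonneg_left (hg.2 a b h) hs0
  have key2 := mul_le_mul_of_nonneg_left key (inv_nonneg.2 hpi.le)
  have e : (2 * π)⁻¹ * (2 * π * c) = c := by field_simp
  have e2 : (2 * π)⁻¹ * ((1 - s) * (∫ θ in (0:ℝ)..(2 * π), f (circPt a b θ)) +
     s * (∫ θ in (0:ℝ)..(2 * π), g (circPt a b θ)) + 2 * π * c) =
     (1 - s) * ((2 * π)⁻¹ * ∫ θ in (0:ℝ)..(2 * π), f (circPt a b θ)) +
     s * ((2 * π)⁻¹ * ∫ θ in (0:ℝ)..(2 * π), g (circPt a b θ)) + c := by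
    rw [mul_add, e]; ring
  rw [e2] at key2
  refine le_trans ?_ key2
  rw [hc]; linarith

lemma SPSH.add_const {Ω : Set (EuclideanSpace ℂ (Fin n))} {f : EuclideanSpace ℂ (Fin n) → ℝ}
    (hf : SPSH Ω f) (c : ℝ) : SPSH Ω (fun z => f z + c) := by
  refine ⟨hf.1.add contDiffOn_const, ?_⟩
  intro a b h
  have If := circ_intervalIntegrable hf.1.continuousOn h
  rw [intervalIntegral.integral_add If (by simp), intervalIntegral.integral_const, sub_zero,
    smul_eq_mul, mul_add]
  have e : (2 * π)⁻¹ * (2 * π * c) = c := by field_simp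
  rw [e]
  linarith [hf.2 a b h]

lemma exists_finmax {Ω : Set (EuclideanSpace ℂ (Fin n))} {ι : Type*} (t : Finset ι)
    (ht : t.Nonempty) (s : ι → EuclideanSpace ℂ (Fin n) → ℝ)
    (hs : ∀ i ∈ t, SPSH Ω (s i)) (η : ℝ) (hη : 0 < η) :
    ∃ w, SPSH Ω w ∧ (∀ i ∈ t, ∀ z, s i z ≤ w z) ∧
      ∀ z c, (∀ i ∈ t, s i z ≤ c) → w z ≤ c + η := by
  classical
  induction ht using Finset.Nonempty.cons_induction generalizing η with
  | singleton i =>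
    refine ⟨s i, hs i (by simp), by simp, fun z c h => ?_⟩
    have := h i (by simp)
    linarith
  | cons i t hi ht ih =>
    obtain ⟨w, hw, h1, h2⟩ := ih (fun j hj => hs j (Finset.mem_cons_of_mem hj)) (η / 2)
      (by positivity)
    obtain ⟨Θ, hΘ, p0, p1, -, p3, p4⟩ := exists_theta (η := η / 2) (by positivity)
    refine ⟨_, (hs i (Finset.mem_cons_self i t)).regmax hw hΘ p4, ?_, ?_⟩
    · intro j hj z
      rcases Finset.mem_cons.1 hj with rfl | hj
      · linarith [p0 (w z - s j z)]
      · linarith [p1 (w z - s i z), h1 j hj z]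
    · intro z c h
      have a1 := h i (Finset.mem_cons_self i t)
      have a2 := h2 z c (fun j hj => h j (Finset.mem_cons_of_mem hj))
      have a3 := p3 (w z - s i z)
      rcases le_total (w z - s i z) 0 with h0 | h0
      · rw [max_eq_right h0] at a3; linarith
      · rw [max_eq_left h0] at a3; linarith

end basics

section mollify
variable {n : ℕ}

/-- Multiplication by a unimodular number as a real isometry. -/
def rotIso (c : ℂ) (hc : ‖c‖ = 1) :
    EuclideanSpace ℂ (Fin n) ≃ₗᵢ[ℝ] EuclideanSpace ℂ (Fin n) where
  toLinearEquiv := (LinearEquiv.smulOfNeZero ℂ (EuclideanSpace ℂ (Fin n)) c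
    (by rintro rfl; simp at hc)).restrictScalars ℝ
  norm_map' := fun x => by
    change ‖c • x‖ = ‖x‖
    rw [norm_smul, hc, one_mul]

lemma rotIso_apply (c : ℂ) (hc : ‖c‖ = 1) (y : EuclideanSpace ℂ (Fin n)) :
    rotIso c hc y = c • y := rfl

lemma integral_rot (c : ℂ) (hc : ‖c‖ = 1) (g : EuclideanSpace ℂ (Fin n) → ℝ) :
    ∫ y, g (c • y) = ∫ y, g y := by
  have h := (rotIso (n := n) c hc).measurePreserving
  exact h.integral_comp (rotIso (n := n) c hc).toHomeomorph.measurableEmbedding g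

/-- Mollification of a bounded measurable function with a rotation invariant kernel. -/
lemma exists_mollify (f : EuclideanSpace ℂ (Fin n) → ℝ) (hf : Measurable f) (B : ℝ)
    (hB : ∀ z, |f z| ≤ B) (ε : ℝ) (hε : 0 < ε) :
    ∃ s : EuclideanSpace ℂ (Fin n) → ℝ, ContDiff ℝ (⊤ : ℕ∞) s ∧
      (∀ a b, (∀ y, ‖y‖ < ε → f (a - y) ≤
          (2 * π)⁻¹ * ∫ θ in (0:ℝ)..(2 * π), f (circPt (a - y) b θ)) →
        s a ≤ (2 * π)⁻¹ * ∫ θ in (0:ℝ)..(2 * π), s (circPt a b θ)) ∧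
      (∀ z c, (∀ y, ‖y‖ < ε → f (z - y) ≤ c) → s z ≤ c) ∧
      (∀ z, (∀ y, ‖y‖ < ε → f z ≤
          (2 * π)⁻¹ * ∫ θ in (0:ℝ)..(2 * π), f (circPt z y θ)) → f z ≤ s z) := by
  set ψ : EuclideanSpace ℂ (Fin n) → ℝ := fun y => expNegInvGlue (ε ^ 2 - ‖y‖ ^ 2) with hψ
  have hψs : ContDiff ℝ (⊤ : ℕ∞) ψ := by
    have h1 : ContDiff ℝ (⊤ : ℕ∞) (fun y : EuclideanSpace ℂ (Fin n) => ε ^ 2 - ‖y‖ ^ 2) :=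
      contDiff_const.sub (contDiff_norm_sq ℝ)
    exact expNegInvGlue.contDiff.comp h1
  have hψ0 : ∀ y, 0 ≤ ψ y := fun y => expNegInvGlue.nonneg _
  have hψz : ∀ y, ε ≤ ‖y‖ → ψ y = 0 := fun y hy =>
    expNegInvGlue.zero_of_nonpos (by nlinarith [norm_nonneg y])
  have hψc : HasCompactSupport ψ := by
    refine HasCompactSupport.intro (isCompact_closedBall (0 : EuclideanSpace ℂ (Fin n)) ε) ?_
    intro y hy
    refine hψz y ?_
    simp only [mem_closedBall, dist_zero_right, not_le] at hy
    exact hy.le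
  have hψi : Integrable ψ := hψs.continuous.integrable_of_hasCompactSupport hψc
  have hI : 0 < ∫ y, ψ y :=
    hψs.continuous.integral_pos_of_hasCompactSupport_nonneg_nonzero hψc hψ0 (x := 0)
      (by simp only [hψ]; exact (expNegInvGlue.pos_of_pos (by simp; positivity)).ne')
  set I := ∫ y, ψ y with hIdef
  have hloc : LocallyIntegrable f := by
    have : LocallyIntegrable (fun _ : EuclideanSpace ℂ (Fin n) => B) := locallyIntegrable_const _
    refine this.mono hf.aestronglyMeasurable ?_
    refine Filter.Eventually.of_forall fun z => ?_
    rw [Real.norm_eq_abs, Real.norm_eq_abs]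
    exact (hB z).trans (le_abs_self B)
  have hpi : 0 < 2 * π := by positivity
  have hintegrable : ∀ g : EuclideanSpace ℂ (Fin n) → ℝ, Measurable g → (∀ z, |g z| ≤ B) →
      Integrable (fun y => ψ y * g y) := by
    intro g hg hgB
    have := hψi.bdd_mul (f := g) hg.aestronglyMeasurable (Filter.Eventually.of_forall hgB)
    simpa only [mul_comm] using this
  -- Fubini
  have fub : ∀ G : ℝ → EuclideanSpace ℂ (Fin n) → ℝ, Measurable (Function.uncurry G) →
      (∀ θ y, |G θ y| ≤ B) →
      ∫ θ in (0:ℝ)..(2 * π), ∫ y, ψ y * G θ y = ∫ y, ψ y * ∫ θ in (0:ℝ)..(2 * π), G θ y := by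
    intro G hG hGB
    simp only [intervalIntegral.integral_of_le hpi.le]
    rw [integral_integral_swap]
    · simp only [integral_const_mul]
    · have h1 := (hψi.comp_snd (volume.restrict (Set.Ioc (0:ℝ) (2 * π)))).bdd_mul
        (f := Function.uncurry G) (c := B) hG.aestronglyMeasurable
        (Filter.Eventually.of_forall fun p => hGB p.1 p.2)
      refine h1.congr (Filter.Eventually.of_forall fun p => ?_)
      simp [Function.uncurry, mul_comm]
  have meanint : ∀ G : ℝ → EuclideanSpace ℂ (Fin n) → ℝ, Measurable (Function.uncurry G) →
      (∀ θ y, |G θ y| ≤ B) →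
      Integrable (fun y => ψ y * ∫ θ in (0:ℝ)..(2 * π), G θ y) := by
    intro G hG hGB
    simp only [intervalIntegral.integral_of_le hpi.le]
    have h1 := (hψi.comp_snd (volume.restrict (Set.Ioc (0:ℝ) (2 * π)))).bdd_mul
        (f := Function.uncurry G) (c := B) hG.aestronglyMeasurable
        (Filter.Eventually.of_forall fun p => hGB p.1 p.2)
    have h2 := h1.integral_prod_right
    refine h2.congr (Filter.Eventually.of_forall fun y => ?_)
    simp only [Function.uncurry]
    rw [← integral_const_mul]
    simp [mul_comm]
  refine ⟨fun z => I⁻¹ * ∫ y, ψ y * f (z - y), ?_, ?_, ?_, ?_⟩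
  · have := hψc.contDiff_convolution_left (ContinuousLinearMap.lsmul ℝ ℝ) hψs hloc
    refine contDiff_const.mul ?_
    exact this
  · intro a b h
    have e : ∀ θ, circPt a b θ = a + Complex.exp ((θ : ℂ) * Complex.I) • b := fun _ => rfl
    rw [intervalIntegral.integral_const_mul]
    have hG : Measurable (Function.uncurry fun (θ : ℝ) (y : EuclideanSpace ℂ (Fin n)) =>
        f (circPt a b θ - y)) := by
      refine hf.comp ?_
      apply Continuous.measurable
      have := continuous_circPt a b
      fun_prop
    rw [fub (fun θ y => f (circPt a b θ - y)) hG (fun _ _ => hB _)]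
    have i2 := meanint (fun θ y => f (circPt a b θ - y)) hG (fun _ _ => hB _)
    have key : ∫ y, ψ y * f (a - y) ≤
        (2 * π)⁻¹ * ∫ y, ψ y * ∫ θ in (0:ℝ)..(2 * π), f (circPt a b θ - y) := by
      rw [← integral_const_mul]
      refine integral_mono ?_ (i2.const_mul _) ?_
      · exact hintegrable (fun y => f (a - y)) (hf.comp (by fun_prop)) (fun _ => hB _)
      · intro y
        dsimp only
        rcases lt_or_ge ‖y‖ ε with hy | hy
        · have := mul_le_mul_of_nonneg_left (h y hy) (hψ0 y)
          refine this.trans (le_of_eq ?_)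
          have e2 : ∀ θ, circPt a b θ - y = circPt (a - y) b θ := fun θ => by
            simp only [circPt]; abel
          simp only [e2]; ring
        · simp [hψz y hy]
    have := mul_le_mul_of_nonneg_left key (inv_nonneg.2 hI.le)
    linarith
  · intro z c h
    have : ∫ y, ψ y * f (z - y) ≤ ∫ y, ψ y * c := by
      refine integral_mono (hintegrable (fun y => f (z - y)) (hf.comp (by fun_prop)) (fun _ => hB _))
        (hψi.mul_const c) ?_
      intro y
      dsimp only
      rcases lt_or_ge ‖y‖ ε with hy | hy
      · exact mul_le_mul_of_nonneg_left (h y hy) (hψ0 y)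
      · simp [hψz y hy]
    rw [integral_mul_const] at this
    have := mul_le_mul_of_nonneg_left this (inv_nonneg.2 hI.le)
    refine this.trans (le_of_eq ?_)
    rw [← hIdef]; field_simp
  · intro z h
    have rot : ∀ θ : ℝ, ∫ y, ψ y * f (circPt z y θ) = ∫ y, ψ y * f (z - y) := by
      intro θ
      have h1 := integral_rot (n := n) (-Complex.exp ((θ : ℂ) * Complex.I))
        (by rw [norm_neg]; exact norm_cexp θ) (fun y => ψ y * f (z - y))
      rw [← h1]
      congr 1
      ext y
      simp only [hψ, norm_smul, norm_neg, norm_cexp, one_mul, circPt, neg_smul, sub_neg_eq_add]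
    have hG : Measurable (Function.uncurry fun (θ : ℝ) (y : EuclideanSpace ℂ (Fin n)) =>
        f (circPt z y θ)) := by
      refine hf.comp ?_
      apply Continuous.measurable
      unfold circPt
      fun_prop
    have h1 := fub (fun θ y => f (circPt z y θ)) hG (fun _ _ => hB _)
    simp only [rot] at h1
    rw [intervalIntegral.integral_const, smul_eq_mul, sub_zero] at h1
    have i2 := meanint (fun θ y => f (circPt z y θ)) hG (fun _ _ => hB _)
    have key : ∫ y, ψ y * f z ≤
        (2 * π)⁻¹ * ∫ y, ψ y * ∫ θ in (0:ℝ)..(2 * π), f (circPt z y θ) := by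
      rw [← integral_const_mul]
      refine integral_mono (hψi.mul_const _) (i2.const_mul _) ?_
      intro y
      dsimp only
      rcases lt_or_ge ‖y‖ ε with hy | hy
      · have := mul_le_mul_of_nonneg_left (h y hy) (hψ0 y)
        refine this.trans (le_of_eq ?_)
        ring
      · simp [hψz y hy]
    rw [← h1, integral_mul_const, ← mul_assoc, inv_mul_cancel₀ hpi.ne', one_mul, ← hIdef] at key
    have := mul_le_mul_of_nonneg_left key (inv_nonneg.2 hI.le)
    rw [← mul_assoc, inv_mul_cancel₀ hI.ne', one_mul] at this
    exact this

end mollify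

/-- Short name for complex Euclidean space. -/
abbrev CE (n : ℕ) := EuclideanSpace ℂ (Fin n)

section star
variable {n : ℕ}

lemma trunc_anti {u : CE n → EReal} {m m' : ℕ} (h : m ≤ m') {z : CE n} (hz : u z ≠ ⊤) :
    trunc u m' z ≤ trunc u m z := by
  refine trunc_le hz (le_trunc hz) ?_
  have := neg_le_trunc (m := m) hz
  have h2 : (m : ℝ) ≤ m' := by exact_mod_cast h
  linarith

lemma smooth_one {D0 : Set (CE n)} (hD : IsOpen D0) (hb : Bornology.IsBounded D0) {q : CE n}
    {u : CE n → EReal} (hu : IsPSHOn D0 u) (m : ℕ) (l : ℂ)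
    (hl : ∀ z ∈ closure D0, z + l • (q - z) ∈ D0) (δ : ℝ) (hδ : 0 < δ)
    (hlδ : ∀ z ∈ D0, ‖l • (q - z)‖ < δ / 2) :
    ∃ s, SPSH D0 s ∧ (∀ z ∈ D0, trunc u m (z + l • (q - z)) ≤ s z) ∧
      ∀ z ∈ D0, ∀ c, (∀ y ∈ ball z δ ∩ D0, trunc u m y ≤ c) → s z ≤ c := by
  classical
  set A : CE n → CE n := fun z => z + l • (q - z) with hA
  have hAc : Continuous A := by fun_prop
  have hcl : IsCompact (closure D0) := hb.isCompact_closure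
  have hK : IsCompact (A '' closure D0) := hcl.image hAc
  have hKD : A '' closure D0 ⊆ D0 := by rintro _ ⟨z, hz, rfl⟩; exact hl z hz
  obtain ⟨ε0, hε0, hsub⟩ := hK.exists_cthickening_subset_open hD hKD
  set L := cthickening ε0 (A '' closure D0) with hL
  have hLc : IsCompact L := hK.cthickening
  set U1 : CE n → ℝ := fun y => if y ∈ L then trunc u m y else -(m : ℝ) with hU1
  have hU1L : ∀ y ∈ L, U1 y = trunc u m y := fun y hy => by simp [hU1, hy]
  have husc : UpperSemicontinuous U1 := by
    intro y c hc
    by_cases hy : y ∈ L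
    · rw [hU1L y hy] at hc
      have h1 := (trunc_usc hu m y (hsub hy)) c hc
      rw [hD.nhdsWithin_eq (hsub hy)] at h1
      have h2 := (neg_le_trunc (m := m) (hu.2.1 y (hsub hy))).trans_lt hc
      filter_upwards [h1] with z hz
      simp only [hU1]; split_ifs <;> assumption
    · have h1 : ∀ᶠ z in 𝓝 y, z ∉ L := hLc.isClosed.isOpen_compl.mem_nhds hy
      have h2 : -(m : ℝ) < c := by simpa [hU1, hy] using hc
      filter_upwards [h1] with z hz
      simpa [hU1, hz] using h2
  have hlow : ∀ y, -(m : ℝ) ≤ U1 y := by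
    intro y
    simp only [hU1]; split_ifs with hy
    · exact neg_le_trunc (hu.2.1 y (hsub hy))
    · exact le_rfl
  obtain ⟨B0, hB0⟩ := (husc.upperSemicontinuousOn L).bddAbove_of_isCompact hLc
  have hup : ∀ y, U1 y ≤ |B0| := by
    intro y
    by_cases hy : y ∈ L
    · exact (hB0 ⟨y, hy, rfl⟩).trans (le_abs_self _)
    · simp only [hU1, hy, if_false]
      have := abs_nonneg B0
      have h2 : (0:ℝ) ≤ m := m.cast_nonneg
      linarith
  have hbd : ∀ y, |U1 y| ≤ |B0| + m := by
    intro y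
    rw [abs_le]
    have h2 : (0:ℝ) ≤ m := m.cast_nonneg
    constructor <;> linarith [hlow y, hup y, abs_nonneg B0]
  set ε := min ε0 (δ / 2) with hε
  have hεp : 0 < ε := lt_min hε0 (by linarith)
  obtain ⟨s, hs, h1, h2, h3⟩ := exists_mollify U1 husc.measurable _ hbd ε hεp
  have memL : ∀ z ∈ closure D0, ∀ y, ‖y‖ < ε → A z - y ∈ L := by
    intro z hz y hy
    refine mem_cthickening_of_dist_le _ (A z) _ _ ⟨z, hz, rfl⟩ ?_
    rw [dist_eq_norm]
    simpa using (hy.le.trans (min_le_left _ _))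
  refine ⟨fun z => s (A z), ⟨?_, ?_⟩, ?_, ?_⟩
  · have : ContDiff ℝ (⊤ : ℕ∞) A := by fun_prop
    exact (hs.comp this).contDiffOn
  · intro a b hab
    have e : ∀ μ : ℂ, A (a + μ • b) = A a + μ • ((1 - l) • b) := by
      intro μ
      simp only [hA]
      module
    have e2 : ∀ θ, A (circPt a b θ) = circPt (A a) ((1 - l) • b) θ := fun θ => e _
    simp only [e2]
    refine h1 (A a) ((1 - l) • b) ?_
    intro y hy
    have hin : ∀ μ : ℂ, ‖μ‖ ≤ 1 → (A a - y) + μ • ((1 - l) • b) ∈ L := by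
      intro μ hμ
      have := memL (a + μ • b) (subset_closure (hab μ hμ)) y hy
      rw [e] at this
      convert this using 1
      abel
    have h0 := hin 0 (by simp)
    simp only [zero_smul, add_zero] at h0
    have := trunc_rpsh hu m (A a - y) ((1 - l) • b) (fun μ hμ => hsub (hin μ hμ))
    rw [hU1L _ h0]
    refine this.trans (le_of_eq ?_)
    congr 1
    refine intervalIntegral.integral_congr fun θ _ => ?_
    exact (hU1L _ (hin _ (norm_cexp θ).le)).symm
  · intro z hz
    have hz' := subset_closure hz
    have h0 := memL z hz' 0 (by simpa using hεp)
    rw [sub_zero] at h0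
    have := h3 (A z) ?_
    · rwa [hU1L _ h0] at this
    · intro y hy
      have hin : ∀ μ : ℂ, ‖μ‖ ≤ 1 → A z + μ • y ∈ L := by
        intro μ hμ
        have := memL z hz' (-(μ • y)) (by
          rw [norm_neg, norm_smul]
          nlinarith [norm_nonneg y, norm_nonneg μ])
        rwa [sub_neg_eq_add] at this
      rw [hU1L _ h0]
      refine (trunc_rpsh hu m (A z) y (fun μ hμ => hsub (hin μ hμ))).trans (le_of_eq ?_)
      congr 1
      refine intervalIntegral.integral_congr fun θ _ => ?_
      exact (hU1L _ (hin _ (norm_cexp θ).le)).symm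
  · intro z hz c hc
    refine h2 (A z) c ?_
    intro y hy
    have hin := memL z (subset_closure hz) y hy
    rw [hU1L _ hin]
    refine hc _ ⟨?_, hsub hin⟩
    rw [mem_ball, dist_eq_norm]
    have e : A z - y - z = l • (q - z) - y := by simp only [hA]; abel
    rw [e]
    have := hlδ z hz
    have h4 : ‖y‖ < δ / 2 := hy.trans_le (min_le_right _ _)
    linarith [norm_sub_le (l • (q - z)) y]

lemma sector {D0 : Set (CE n)} (hD : IsOpen D0) (q : CE n)
    {u : CE n → EReal} (hu : IsPSHOn D0 u) (m : ℕ) {θ0 : ℝ} (hθ0 : 0 < θ0) (hθ1 : θ0 ≤ 2 * π)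
    {z0 : CE n} (hz0 : z0 ∈ D0) {κ : ℝ} (hκ : 0 < κ) {T : ℝ} (hT : 0 < T) :
    ∃ t θ : ℝ, 0 < t ∧ t ≤ T ∧ 0 ≤ θ ∧ θ ≤ θ0 ∧
      trunc u m z0 - κ < trunc u m (z0 + ((t : ℂ) * Complex.exp (θ * Complex.I)) • (q - z0)) := by
  by_contra! hcon
  set c0 := trunc u m z0 with hc0
  have hpi := Real.pi_pos
  set κ' := κ * θ0 / (4 * π) with hκ'
  have hκ'p : 0 < κ' := by positivity
  have hev := trunc_usc hu m z0 hz0 (c0 + κ') (by linarith)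
  rw [hD.nhdsWithin_eq hz0] at hev
  obtain ⟨r, hr, hrs⟩ := Metric.eventually_nhds_iff_ball.1 (hev.and (hD.mem_nhds hz0))
  obtain ⟨t, ht0, htT, htr⟩ : ∃ t : ℝ, 0 < t ∧ t ≤ T ∧ t * ‖q - z0‖ < r := by
    refine ⟨min T (r / (‖q - z0‖ + 1)), lt_min hT (by positivity), min_le_left _ _, ?_⟩
    have h1 : min T (r / (‖q - z0‖ + 1)) ≤ r / (‖q - z0‖ + 1) := min_le_right _ _
    have h2 := norm_nonneg (q - z0)
    calc _ ≤ r / (‖q - z0‖ + 1) * ‖q - z0‖ := by gcongr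
      _ < r / (‖q - z0‖ + 1) * (‖q - z0‖ + 1) := by gcongr; linarith
      _ = r := by field_simp
  set b := (t : ℂ) • (q - z0) with hb
  have hball : ∀ μ : ℂ, ‖μ‖ ≤ 1 → z0 + μ • b ∈ ball z0 r := by
    intro μ hμ
    rw [mem_ball, dist_eq_norm, add_sub_cancel_left, norm_smul, hb, norm_smul, Complex.norm_real,
      Real.norm_eq_abs, abs_of_pos ht0]
    have : 0 ≤ t * ‖q - z0‖ := by positivity
    nlinarith [norm_nonneg μ]
  have hsm := trunc_rpsh hu m z0 b (fun μ hμ => (hrs _ (hball μ hμ)).2)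
  set G : ℝ → ℝ := fun θ => trunc u m (circPt z0 b θ) with hG
  have hmemD : ∀ θ, circPt z0 b θ ∈ D0 := fun θ => (hrs _ (hball _ (norm_cexp θ).le)).2
  have hGu : ∀ θ, G θ < c0 + κ' := fun θ => (hrs _ (hball _ (norm_cexp θ).le)).1
  have hGl : ∀ θ, -(m : ℝ) ≤ G θ := fun θ => neg_le_trunc (hu.2.1 _ (hmemD θ))
  have hGusc : UpperSemicontinuous G := by
    intro θ c hc
    have h1 := trunc_usc hu m _ (hmemD θ) c hc
    rw [hD.nhdsWithin_eq (hmemD θ)] at h1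
    exact (continuous_circPt z0 b).continuousAt.eventually h1
  have hGi : ∀ x y, IntervalIntegrable G volume x y := by
    intro x y
    have hc : IntervalIntegrable (fun _ : ℝ => |c0 + κ'| + m) volume x y := by simp
    refine hc.mono_fun hGusc.measurable.aestronglyMeasurable ?_
    refine Filter.Eventually.of_forall fun θ => ?_
    have h2 : (0:ℝ) ≤ m := m.cast_nonneg
    simp only [Real.norm_eq_abs]
    rw [abs_of_nonneg (a := |c0 + κ'| + m) (by positivity),
      abs_le]
    have := le_abs_self (c0 + κ')
    have := abs_nonneg (c0 + κ')
    constructor <;> linarith [hGu θ, hGl θ]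
  have h1 : ∫ θ in (0:ℝ)..θ0, G θ ≤ θ0 * (c0 - κ) := by
    have := intervalIntegral.integral_mono_on (g := fun _ => c0 - κ) hθ0.le (hGi 0 θ0) (by simp)
      (fun θ hθ => by
        have := hcon t θ ht0 htT hθ.1 hθ.2
        have e : circPt z0 b θ = z0 + ((t : ℂ) * Complex.exp (θ * Complex.I)) • (q - z0) := by
          simp only [circPt, hb, smul_smul, mul_comm]
        simp only [hG]; rw [e]; exact this)
    simpa only [intervalIntegral.integral_const, smul_eq_mul, sub_zero] using this
  have h2 : ∫ θ in θ0..(2 * π), G θ ≤ (2 * π - θ0) * (c0 + κ') := by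
    have := intervalIntegral.integral_mono_on (g := fun _ => c0 + κ') hθ1 (hGi θ0 (2 * π)) (by simp)
      (fun θ hθ => (hGu θ).le)
    simpa only [intervalIntegral.integral_const, smul_eq_mul, sub_zero] using this
  have h3 := intervalIntegral.integral_add_adjacent_intervals (hGi 0 θ0) (hGi θ0 (2 * π))
  have h4 : 2 * π * c0 ≤ ∫ θ in (0:ℝ)..(2 * π), G θ := by
    have := mul_le_mul_of_nonneg_left hsm (by positivity : 0 ≤ 2 * π)
    rwa [← mul_assoc, mul_inv_cancel₀ (by positivity), one_mul] at this
  have h5 : κ' * (4 * π) = κ * θ0 := by rw [hκ']; field_simp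
  have h6 : 0 < θ0 * κ' := by positivity
  have h7 : 0 < κ * θ0 := by positivity
  nlinarith

end star

section star2
variable {n : ℕ}

lemma key_one {D0 : Set (CE n)} (hD : IsOpen D0) (hb : Bornology.IsBounded D0) {q : CE n}
    {u : CE n → EReal} (hu : IsPSHOn D0 u) {θ0 t0 : ℝ} (hθ0 : 0 < θ0) (hθ1 : θ0 ≤ 2 * π)
    (ht0 : 0 < t0)
    (hstar : ∀ t θ : ℝ, 0 < t → t ≤ t0 → 0 ≤ θ → θ ≤ θ0 → ∀ z ∈ closure D0,
      z + ((t : ℂ) * Complex.exp (θ * Complex.I)) • (q - z) ∈ D0)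
    (m : ℕ) {κ δ : ℝ} (hκ : 0 < κ) (hδ : 0 < δ) {K : Set (CE n)} (hK : IsCompact K)
    (hKD : K ⊆ D0) :
    ∃ w, SPSH D0 w ∧ ∀ z ∈ K, trunc u m z < w z ∧
      ∀ c, (∀ y ∈ ball z δ ∩ D0, trunc u m y ≤ c) → w z ≤ c + 5 * κ := by
  classical
  rcases K.eq_empty_or_nonempty with rfl | hKne
  · refine ⟨fun _ => 0, ⟨contDiffOn_const, ?_⟩, by simp⟩
    intro a b _; simp
  obtain ⟨R, hR0, hR⟩ : ∃ R : ℝ, 0 < R ∧ ∀ z ∈ D0, ‖q - z‖ < R := by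
    obtain ⟨R, hR⟩ := hb.subset_ball q
    refine ⟨max R 1, by positivity, fun z hz => ?_⟩
    have := hR hz
    rw [mem_ball, dist_comm, dist_eq_norm] at this
    exact this.trans_le (le_max_left _ _)
  set T := min t0 (δ / 2 / R) with hT
  have hTp : 0 < T := lt_min ht0 (by positivity)
  have h1 : ∀ z0 ∈ K, ∃ s, SPSH D0 s ∧
      (∀ z ∈ D0, ∀ c, (∀ y ∈ ball z δ ∩ D0, trunc u m y ≤ c) → s z ≤ c) ∧
      trunc u m z0 - κ < s z0 := by
    intro z0 hz0
    obtain ⟨t, θ, ht, htT, hθ, hθθ, hlt⟩ := sector hD q hu m hθ0 hθ1 (hKD hz0) hκ hTp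
    obtain ⟨s, hs, hs1, hs2⟩ := smooth_one hD hb (q := q) hu m
      ((t : ℂ) * Complex.exp (θ * Complex.I))
      (hstar t θ ht (htT.trans (min_le_left _ _)) hθ hθθ) δ hδ (by
        intro z hz
        rw [norm_smul, norm_mul, norm_cexp, mul_one, Complex.norm_real, Real.norm_eq_abs,
          abs_of_pos ht]
        have h2 : t ≤ δ / 2 / R := htT.trans (min_le_right _ _)
        calc t * ‖q - z‖ < t * R := by have := hR z hz; gcongr
          _ ≤ δ / 2 / R * R := by gcongr
          _ = δ / 2 := by field_simp)
    exact ⟨s, hs, hs2, hlt.trans_le (hs1 z0 (hKD hz0))⟩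
  choose! s hs hs1 hs2 using h1
  have hnb : ∀ z0 ∈ K, {z | trunc u m z < s z0 z + 2 * κ} ∈ 𝓝 z0 := by
    intro z0 hz0
    have e1 := trunc_usc hu m z0 (hKD hz0) (trunc u m z0 + κ / 2) (by linarith)
    rw [hD.nhdsWithin_eq (hKD hz0)] at e1
    have e2 : ∀ᶠ z in 𝓝 z0, s z0 z0 - κ / 2 < s z0 z :=
      ((hs z0 hz0).1.continuousOn.continuousAt (hD.mem_nhds (hKD hz0))).eventually_const_lt
        (by linarith)
    filter_upwards [e1, e2] with z h3 h4
    have := hs2 z0 hz0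
    change trunc u m z < s z0 z + 2 * κ
    linarith
  obtain ⟨t, htK, hcov⟩ := hK.elim_nhds_subcover _ hnb
  have htne : t.Nonempty := by
    rw [Finset.nonempty_iff_ne_empty]
    rintro rfl
    obtain ⟨x, hx⟩ := hKne
    simpa using hcov hx
  obtain ⟨w, hw, hw1, hw2⟩ := exists_finmax t htne s (fun i hi => hs i (htK i hi)) κ hκ
  refine ⟨fun z => w z + 2 * κ, hw.add_const _, fun z hz => ⟨?_, ?_⟩⟩
  · obtain ⟨i, hi, hzi⟩ := Set.mem_iUnion₂.1 (hcov hz)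
    have := hw1 i hi z
    change trunc u m z < s i z + 2 * κ at hzi
    linarith
  · intro c hc
    have := hw2 z c (fun i hi => hs1 i (htK i hi) z (hKD hz) c hc)
    linarith

lemma unif_below {D0 : Set (CE n)} (hD : IsOpen D0)
    {u : CE n → EReal} (hu : IsPSHOn D0 u) {K' : Set (CE n)} (hK' : IsCompact K')
    (hKD : K' ⊆ D0) {g : CE n → ℝ} (hg : ContinuousOn g D0) (hug : ∀ z ∈ K', u z < (g z : EReal)) :
    ∃ N : ℕ, ∀ z ∈ K', ∀ y ∈ ball z (1 / ((N : ℝ) + 1)) ∩ D0,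
      trunc u N y ≤ g z - 6 * (1 / ((N : ℝ) + 1)) := by
  have mono : ∀ {N N' : ℕ}, N ≤ N' → ∀ z,
      (∀ y ∈ ball z (1 / ((N : ℝ) + 1)) ∩ D0, trunc u N y ≤ g z - 6 * (1 / ((N : ℝ) + 1))) →
      (∀ y ∈ ball z (1 / ((N' : ℝ) + 1)) ∩ D0, trunc u N' y ≤ g z - 6 * (1 / ((N' : ℝ) + 1))) := by
    intro N N' h z hz y hy
    have h1 : 1 / ((N' : ℝ) + 1) ≤ 1 / ((N : ℝ) + 1) := by gcongr
    have := hz y ⟨ball_subset_ball h1 hy.1, hy.2⟩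
    linarith [trunc_anti h (hu.2.1 y hy.2)]
  refine hK'.induction_on (p := fun S => ∃ N : ℕ, ∀ z ∈ S, ∀ y ∈ ball z (1 / ((N : ℝ) + 1)) ∩ D0,
      trunc u N y ≤ g z - 6 * (1 / ((N : ℝ) + 1))) ⟨0, by simp⟩ ?_ ?_ ?_
  · rintro s t hst ⟨N, hN⟩
    exact ⟨N, fun z hz => hN z (hst hz)⟩
  · rintro s t ⟨N, hN⟩ ⟨N', hN'⟩
    refine ⟨max N N', fun z hz => ?_⟩
    rcases hz with hz | hz
    · exact mono (le_max_left _ _) z (hN z hz)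
    · exact mono (le_max_right _ _) z (hN' z hz)
  · intro z hz
    obtain ⟨c, hc1, hc2⟩ := EReal.lt_iff_exists_real_btwn.1 (hug z hz)
    rw [EReal.coe_lt_coe_iff] at hc2
    obtain ⟨c', hc3, hc4⟩ := exists_between hc2
    obtain ⟨m, hm⟩ := exists_nat_gt (-c)
    have ht : trunc u m z < c := by
      rw [← EReal.coe_lt_coe_iff, coe_trunc (hu.2.1 z (hKD hz))]
      exact max_lt hc1 (EReal.coe_lt_coe_iff.2 (by linarith))
    have e1 := trunc_usc hu m z (hKD hz) c ht
    rw [hD.nhdsWithin_eq (hKD hz)] at e1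
    have e2 : ∀ᶠ y in 𝓝 z, c' < g y :=
      (hg.continuousAt (hD.mem_nhds (hKD hz))).eventually_const_lt hc4
    obtain ⟨r, hr, hrs⟩ := Metric.eventually_nhds_iff_ball.1 (e1.and e2)
    obtain ⟨N1, hN1⟩ := exists_nat_one_div_lt (show 0 < r / 2 by positivity)
    obtain ⟨N2, hN2⟩ := exists_nat_one_div_lt (show 0 < (c' - c) / 6 by linarith)
    refine ⟨_, mem_nhdsWithin_of_mem_nhds (ball_mem_nhds z (by positivity : 0 < r / 2)),
      max m (max N1 N2), ?_⟩
    intro z' hz' y hy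
    set N := max m (max N1 N2) with hN
    have a1 : 1 / ((N : ℝ) + 1) ≤ 1 / ((N1 : ℝ) + 1) := by
      have : N1 ≤ N := by simp [hN]
      gcongr
    have a2 : 1 / ((N : ℝ) + 1) ≤ 1 / ((N2 : ℝ) + 1) := by
      have : N2 ≤ N := by simp [hN]
      gcongr
    have d1 : dist y z' < r / 2 := by
      have := hy.1
      rw [mem_ball] at this
      linarith
    have d2 : dist z' z < r / 2 := hz'
    have b1 := (hrs y (by rw [mem_ball]; linarith [dist_triangle y z' z])).1
    have b2 := (hrs z' (by rw [mem_ball]; linarith)).2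
    have b3 := trunc_anti (u := u) (show m ≤ N by simp [hN]) (hu.2.1 y hy.2)
    linarith

lemma key_two {D0 : Set (CE n)} (hD : IsOpen D0) (hb : Bornology.IsBounded D0) {q : CE n}
    {u : CE n → EReal} (hu : IsPSHOn D0 u) {θ0 t0 : ℝ} (hθ0 : 0 < θ0) (hθ1 : θ0 ≤ 2 * π)
    (ht0 : 0 < t0)
    (hstar : ∀ t θ : ℝ, 0 < t → t ≤ t0 → 0 ≤ θ → θ ≤ θ0 → ∀ z ∈ closure D0,
      z + ((t : ℂ) * Complex.exp (θ * Complex.I)) • (q - z) ∈ D0)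
    (j : ℕ) {K' K : Set (CE n)} (hK' : IsCompact K') (hK : IsCompact K)
    (hKD : K ⊆ D0) (hKK : K' ⊆ K) {g : CE n → ℝ} (hg : ContinuousOn g D0)
    (hug : ∀ z ∈ K', u z < (g z : EReal)) :
    ∃ w, SPSH D0 w ∧ (∀ z ∈ K, u z < (w z : EReal)) ∧ (∀ z ∈ K', w z < g z) ∧
      ∀ z ∈ K, ∀ c, (∀ y ∈ ball z (1 / ((j : ℝ) + 1)) ∩ D0, trunc u j y ≤ c) →
        w z ≤ c + 5 * (1 / ((j : ℝ) + 1)) := by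
  obtain ⟨N0, hN0⟩ := unif_below hD hu hK' (hKK.trans hKD) hg hug
  set N := max N0 j with hN
  have hp0 : 0 < 1 / ((N : ℝ) + 1) := by positivity
  have l0 : 1 / ((N : ℝ) + 1) ≤ 1 / ((N0 : ℝ) + 1) := by
    have : N0 ≤ N := by simp [hN]
    gcongr
  have lj : 1 / ((N : ℝ) + 1) ≤ 1 / ((j : ℝ) + 1) := by
    have : j ≤ N := by simp [hN]
    gcongr
  obtain ⟨w, hw, hw1⟩ := key_one hD hb hu hθ0 hθ1 ht0 hstar N hp0 hp0 hK hKD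
  refine ⟨w, hw, fun z hz => ?_, fun z hz => ?_, fun z hz c hc => ?_⟩
  · exact (le_trunc (hu.2.1 z (hKD hz))).trans_lt (EReal.coe_lt_coe_iff.2 (hw1 z hz).1)
  · have := (hw1 z (hKK hz)).2 (g z - 6 * (1 / ((N : ℝ) + 1))) ?_
    · linarith
    · intro y hy
      have h1 := hN0 z hz y ⟨ball_subset_ball l0 hy.1, hy.2⟩
      have h2 := trunc_anti (u := u) (show N0 ≤ N by simp [hN]) (hu.2.1 y hy.2)
      linarith
  · have := (hw1 z hz).2 c ?_
    · linarith
    · intro y hy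
      have h1 := hc y ⟨ball_subset_ball lj hy.1, hy.2⟩
      have h2 := trunc_anti (u := u) (show j ≤ N by simp [hN]) (hu.2.1 y hy.2)
      linarith

lemma exists_exhaust {D0 : Set (CE n)} (hD : IsOpen D0) : ∃ K : ℕ → Set (CE n),
    (∀ j, IsCompact (K j)) ∧ (∀ j, K j ⊆ D0) ∧ Monotone K ∧
    ∀ Q, IsCompact Q → Q ⊆ D0 → ∃ m, Q ⊆ K m := by
  have : LocallyCompactSpace D0 := hD.locallyCompactSpace
  let ex : CompactExhaustion D0 := default
  refine ⟨fun j => (↑) '' (ex j), fun j => (ex.isCompact j).image continuous_subtype_val,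
    fun j => by rintro _ ⟨x, _, rfl⟩; exact x.2, ?_, ?_⟩
  · intro i j h
    exact Set.image_mono (ex.subset h)
  · intro Q hQ hQD
    have hc : IsCompact ((↑) ⁻¹' Q : Set D0) := by
      rw [Topology.IsInducing.subtypeVal.isCompact_iff]
      rwa [Subtype.image_preimage_coe, Set.inter_eq_right.2 hQD]
    obtain ⟨m, hm⟩ := ex.exists_superset_of_isCompact hc
    exact ⟨m, fun x hx => ⟨⟨x, hQD hx⟩, hm hx, rfl⟩⟩

lemma glue_seq {D0 : Set (CE n)} (hD : IsOpen D0) {K : ℕ → Set (CE n)} (hKm : Monotone K)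
    (hKD : ∀ j, K j ⊆ D0)
    (hKQ : ∀ Q, IsCompact Q → Q ⊆ D0 → ∃ m, Q ⊆ K m) {w : ℕ → CE n → ℝ}
    (hw : ∀ j, SPSH D0 (w j)) {η : ℕ → ℝ} (hη : ∀ j, 0 < η j)
    (hdec : ∀ j, ∀ z ∈ K j, w (j + 1) z + η j ≤ w j z) :
    ∃ v : ℕ → CE n → ℝ, (∀ k, SPSH D0 (v k)) ∧ (∀ k, ∀ z ∈ D0, v (k + 1) z ≤ v k z) ∧
      ∀ m, ∀ z ∈ K m, ∀ k, m ≤ k → v k z = w k z := by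
  classical
  choose Θ p0 p1 p2 p3 p4 p5 using fun j => exists_theta (hη j)
  obtain ⟨V, V0, V1⟩ : ∃ V : ℕ → ℕ → CE n → ℝ, (∀ k, V 0 k = w k) ∧
      ∀ i k, V (i + 1) k = fun z => w k z + Θ k (V i (k + 1) z - w k z) :=
    ⟨fun i => Nat.rec (fun k => w k)
      (fun _ F k => fun z => w k z + Θ k (F (k + 1) z - w k z)) i, fun _ => rfl, fun _ _ => rfl⟩
  have hV : ∀ i k, SPSH D0 (V i k) := by
    intro i
    induction i with
    | zero => exact fun k => by rw [V0]; exact hw k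
    | succ i ih => exact fun k => by rw [V1]; exact (hw k).regmax (ih (k + 1)) (p0 k) (p5 k)
  have st1 : ∀ i k m, m ≤ k → ∀ z ∈ K m, V i k z = w k z := by
    intro i
    induction i with
    | zero => intro k m _ z _; rw [V0]
    | succ i ih =>
      intro k m hmk z hz
      rw [V1]
      simp only
      rw [ih (k + 1) m (by omega) z hz, p3 k _ (by linarith [hdec k z (hKm hmk hz)]), add_zero]
  have st2 : ∀ i k m, m ≤ k + i → ∀ z ∈ K m, V (i + 1) k z = V i k z := by
    intro i
    induction i with
    | zero => intro k m h z hz; rw [st1 (0 + 1) k m h z hz, V0]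
    | succ i ih =>
      intro k m h z hz
      rw [V1 (i + 1) k, V1 i k]
      simp only
      rw [ih (k + 1) m (by omega) z hz]
  have st3 : ∀ i k m, m ≤ i → ∀ z ∈ K m, V i k z = V m k z := by
    intro i k m h z hz
    induction i, h using Nat.le_induction with
    | base => rfl
    | succ i hi ih => rw [st2 i k m (by omega) z hz, ih]
  have hex : ∀ z ∈ D0, ∃ m, z ∈ K m := fun z hz => by
    obtain ⟨m, hm⟩ := hKQ {z} isCompact_singleton (by simpa using hz)
    exact ⟨m, hm rfl⟩
  let v : ℕ → CE n → ℝ := fun k z => if h : ∃ m, z ∈ K m then V (Nat.find h) k z else 0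
  have hv : ∀ k m, ∀ z ∈ K m, v k z = V m k z := by
    intro k m z hz
    have h : ∃ m, z ∈ K m := ⟨m, hz⟩
    simp only [v, h, dif_pos]
    exact (st3 m k (Nat.find h) (Nat.find_min' h hz) z (Nat.find_spec h)).symm
  refine ⟨v, fun k => ⟨?_, ?_⟩, ?_, ?_⟩
  · intro z hz
    obtain ⟨r, hr, hrs⟩ := Metric.nhds_basis_closedBall.mem_iff.1 (hD.mem_nhds hz)
    obtain ⟨m, hm⟩ := hKQ _ (isCompact_closedBall z r) hrs
    have h1 := ((hV m k).1 z hz)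
    refine h1.congr_of_eventuallyEq ?_ (hv k m z (hm (mem_closedBall_self hr.le)))
    refine mem_nhdsWithin_of_mem_nhds ?_
    filter_upwards [closedBall_mem_nhds z hr] with y hy
    exact hv k m y (hm hy)
  · intro a b hab
    have hQ : IsCompact ((fun l : ℂ => a + l • b) '' closedBall 0 1) :=
      (isCompact_closedBall _ _).image (by fun_prop)
    obtain ⟨m, hm⟩ := hKQ _ hQ (by
      rintro _ ⟨l, hl, rfl⟩
      exact hab l (by simpa using hl))
    have hin : ∀ l : ℂ, ‖l‖ ≤ 1 → a + l • b ∈ K m := fun l hl =>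
      hm ⟨l, by simpa using hl, rfl⟩
    have h0 := hin 0 (by simp)
    rw [zero_smul, add_zero] at h0
    rw [hv k m a h0]
    refine ((hV m k).2 a b hab).trans (le_of_eq ?_)
    congr 1
    refine intervalIntegral.integral_congr fun θ _ => ?_
    exact (hv k m _ (hin _ (norm_cexp θ).le)).symm
  · intro k z hz
    obtain ⟨m, hm⟩ := hex z hz
    rw [hv (k + 1) m z hm, hv k (m + 1) z (hKm (Nat.le_succ m) hm), V1]
    simp only
    linarith [p2 k (V m (k + 1) z - w k z)]
  · intro m z hz k hk
    rw [hv k m z hz, st1 m k m hk z hz]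

theorem star_sdomain {D0 : Set (CE n)} (hD : IsOpen D0) (hconn : IsConnected D0)
    (hb : Bornology.IsBounded D0) {q : CE n}
    {θ0 t0 : ℝ} (hθ0 : 0 < θ0) (hθ1 : θ0 ≤ 2 * π)
    (ht0 : 0 < t0)
    (hstar : ∀ t θ : ℝ, 0 < t → t ≤ t0 → 0 ≤ θ → θ ≤ θ0 → ∀ z ∈ closure D0,
      z + ((t : ℂ) * Complex.exp (θ * Complex.I)) • (q - z) ∈ D0) : IsSDomain D0 := by
  refine ⟨hD, hconn, fun u hu => ?_⟩
  obtain ⟨K, hKc, hKD, hKm, hKQ⟩ := exists_exhaust hD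
  have step : ∀ (j : ℕ) (g : CE n → ℝ), (SPSH D0 g ∧ ∀ z ∈ K j, u z < (g z : EReal)) →
      ∃ w : CE n → ℝ, (SPSH D0 w ∧ ∀ z ∈ K (j + 1), u z < (w z : EReal)) ∧
      (∀ z ∈ K j, w z < g z) ∧
      ∀ z ∈ K (j + 1), ∀ c, (∀ y ∈ ball z (1 / ((j : ℝ) + 1)) ∩ D0, trunc u j y ≤ c) →
        w z ≤ c + 5 * (1 / ((j : ℝ) + 1)) := by
    rintro j g ⟨hg, hug⟩
    obtain ⟨w, h1, h2, h3, h4⟩ := key_two hD hb hu hθ0 hθ1 ht0 hstar j (hKc j) (hKc (j + 1))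
      (hKD _) (hKm (Nat.le_succ j)) hg.1.continuousOn hug
    exact ⟨w, ⟨h1, h2⟩, h3, h4⟩
  obtain ⟨w0, hw0, hw0u, -, -⟩ := key_two hD hb hu hθ0 hθ1 ht0 hstar 0 isCompact_empty (hKc 0)
      (hKD _) (Set.empty_subset _) (g := fun _ => 0) continuousOn_const (by simp)
  choose! nxt hn1 hn2 hn3 using step
  obtain ⟨W, W0, WS⟩ : ∃ W : ℕ → CE n → ℝ, W 0 = w0 ∧ ∀ j, W (j + 1) = nxt j (W j) :=
    ⟨fun j => Nat.rec w0 (fun j g => nxt j g) j, rfl, fun _ => rfl⟩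
  have hW : ∀ j, SPSH D0 (W j) ∧ ∀ z ∈ K j, u z < (W j z : EReal) := by
    intro j
    induction j with
    | zero => rw [W0]; exact ⟨hw0, hw0u⟩
    | succ j ih => rw [WS]; exact hn1 j _ ih
  obtain ⟨v, hv1, hv2, hv3⟩ := glue_seq hD hKm hKD hKQ (w := fun j z => W j z + 2 * (1 / 2) ^ j)
    (fun j => (hW j).1.add_const _) (η := fun j => (1 / 2) ^ j) (fun j => by positivity) (by
      intro j z hz
      have := hn2 j (W j) (hW j) z hz
      simp only [WS, pow_succ]
      linarith)
  refine ⟨v, fun k => (hv1 k).1, fun k => RPSH.isPSHOn (hv1 k).1.continuousOn (hv1 k).2, hv2, ?_⟩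
  intro z hz
  obtain ⟨m0, hm0⟩ := hKQ {z} isCompact_singleton (by simpa using hz)
  have hzm : ∀ k, m0 ≤ k → z ∈ K k := fun k hk => hKm hk (hm0 rfl)
  have hvk : ∀ k, m0 ≤ k → v k z = W k z + 2 * (1 / 2) ^ k :=
    fun k hk => hv3 k z (hzm k hk) k le_rfl
  rw [tendsto_order]
  constructor
  · intro a ha
    filter_upwards [eventually_ge_atTop m0] with k hk
    refine ha.trans (((hW k).2 z (hzm k hk)).trans_le ?_)
    rw [EReal.coe_le_coe_iff, hvk k hk]
    have : (0:ℝ) < 2 * (1 / 2) ^ k := by positivity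
    linarith
  · intro b hb
    obtain ⟨c', h1, h2⟩ := EReal.lt_iff_exists_real_btwn.1 hb
    obtain ⟨c, h3, h4⟩ := EReal.lt_iff_exists_real_btwn.1 h1
    rw [EReal.coe_lt_coe_iff] at h4
    obtain ⟨m, hm⟩ := exists_nat_gt (-c)
    have ht : trunc u m z < c := by
      rw [← EReal.coe_lt_coe_iff, coe_trunc (hu.2.1 z hz)]
      exact max_lt h3 (EReal.coe_lt_coe_iff.2 (by linarith))
    have e1 := trunc_usc hu m z hz c ht
    rw [hD.nhdsWithin_eq hz] at e1
    obtain ⟨r, hr, hrs⟩ := Metric.eventually_nhds_iff_ball.1 e1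
    have l1 : Tendsto (fun k : ℕ => 1 / ((k : ℝ) + 1)) atTop (𝓝 0) :=
      tendsto_one_div_add_atTop_nhds_zero_nat
    have l2 : Tendsto (fun k : ℕ => ((1 : ℝ) / 2) ^ k) atTop (𝓝 0) :=
      tendsto_pow_atTop_nhds_zero_of_lt_one (by norm_num) (by norm_num)
    have ev : ∀ᶠ k : ℕ in atTop, m0 ≤ k ∧ m ≤ k ∧ 1 / ((k : ℝ) + 1) < r ∧
        1 / ((k : ℝ) + 1) < (c' - c) / 20 ∧ ((1 : ℝ) / 2) ^ k < (c' - c) / 20 :=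
      (eventually_ge_atTop m0).and ((eventually_ge_atTop m).and
        ((l1.eventually_lt_const hr).and ((l1.eventually_lt_const (by linarith)).and
          (l2.eventually_lt_const (by linarith)))))
    have ev2 : ∀ᶠ k : ℕ in atTop, ((v (k + 1) z : ℝ) : EReal) < b := by
      filter_upwards [ev] with k hk
      obtain ⟨k1, k2, k3, k4, k5⟩ := hk
      refine lt_trans ?_ h2
      rw [EReal.coe_lt_coe_iff, hvk (k + 1) (by omega)]
      have := hn3 k (W k) (hW k) z (hzm (k + 1) (by omega)) c (by
        intro y hy
        have a1 := hrs y (ball_subset_ball k3.le hy.1)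
        have a2 := trunc_anti (u := u) k2 (hu.2.1 y hy.2)
        simp only at a1
        linarith)
      rw [WS, pow_succ]
      linarith
    rw [Filter.eventually_atTop] at ev2 ⊢
    obtain ⟨k0, hk0⟩ := ev2
    refine ⟨k0 + 1, fun k hk => ?_⟩
    have := hk0 (k - 1) (by omega)
    rwa [Nat.sub_add_cancel (by omega)] at this

end star2

section localS
variable {n : ℕ}

lemma norm_one_sub_lt {t θ : ℝ} (ht : 0 < t) (ht1 : t ≤ 1) (h0 : 0 ≤ θ) (h1 : θ ≤ 1) :
    ‖(1 : ℂ) - (t : ℂ) * Complex.exp (θ * Complex.I)‖ < 1 := by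
  have hc : 1 / 2 < Real.cos θ := by
    have : Real.cos 1 ≤ Real.cos θ := Real.cos_le_cos_of_nonneg_of_le_pi h0
      (by linarith [Real.pi_gt_three]) h1
    linarith [Real.cos_one_pos, Real.cos_bound (x := 1) (by simp), Real.one_sub_sq_div_two_le_cos (x := θ),
      Real.one_sub_sq_div_two_lt_cos (x := 1) (by norm_num)]
  have e : ‖(1 : ℂ) - (t : ℂ) * Complex.exp (θ * Complex.I)‖ ^ 2 = 1 - 2 * t * Real.cos θ + t ^ 2 := by
    rw [← Complex.normSq_eq_norm_sq, Complex.normSq_apply]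
    simp [Complex.exp_ofReal_mul_I_re, Complex.exp_ofReal_mul_I_im]
    nlinarith [Real.sin_sq_add_cos_sq θ]
  have h2 : ‖(1 : ℂ) - (t : ℂ) * Complex.exp (θ * Complex.I)‖ ^ 2 < 1 ^ 2 := by
    rw [e]; nlinarith
  exact lt_of_pow_lt_pow_left₀ 2 (by norm_num) h2

theorem local_sdomain {ρ : CE n → ℝ} (hρ : Continuous ρ) {P : CE n} {Ld : CE n →L[ℝ] ℝ}
    (hd : HasStrictFDerivAt ρ Ld P) (hP : ρ P = 0) (hL : Ld ≠ 0) :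
    ∃ U : Set (CE n), IsOpen U ∧ P ∈ U ∧ IsSDomain ({z | ρ z < 0} ∩ U) := by
  obtain ⟨N, hN⟩ : ∃ N, Ld N = 1 := by
    obtain ⟨x, hx⟩ : ∃ x, Ld x ≠ 0 := by
      by_contra! h; exact hL (ContinuousLinearMap.ext h)
    exact ⟨(Ld x)⁻¹ • x, by simp [hx]⟩
  have hν : 0 < ‖N‖ := norm_pos_iff.2 (by rintro rfl; simp at hN)
  set ν := ‖N‖ with hνd
  obtain ⟨r, hr, hest⟩ : ∃ r > 0, ∀ y ∈ ball P r, ∀ z ∈ ball P r,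
      |ρ y - ρ z - Ld (y - z)| ≤ 1 / (80 * ν) * ‖y - z‖ := by
    have h1 := hd.isLittleO.bound (show 0 < 1 / (80 * ν) by positivity)
    rw [nhds_prod_eq, ← nhds_prod_eq, Metric.eventually_nhds_iff_ball] at h1
    obtain ⟨r, hr, h2⟩ := h1
    refine ⟨r, hr, fun y hy z hz => ?_⟩
    have := h2 (y, z) (by rw [← ball_prod_same]; exact ⟨hy, hz⟩)
    simpa using this
  obtain ⟨θ0, hθ0, hθ1, hθ⟩ : ∃ θ0 > 0, θ0 ≤ 1 ∧ ∀ θ : ℝ, 0 ≤ θ → θ ≤ θ0 →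
      ‖Ld‖ * ‖Complex.exp (θ * Complex.I) - 1‖ * ν ≤ 1 / 80 := by
    have hc : Continuous fun θ : ℝ => ‖Ld‖ * ‖Complex.exp (θ * Complex.I) - 1‖ * ν := by fun_prop
    have := (hc.tendsto 0).eventually_lt_const (u := 1 / 80) (by simp)
    obtain ⟨s, hs, h2⟩ := Metric.eventually_nhds_iff_ball.1 this
    refine ⟨min (s / 2) 1, by positivity, min_le_right _ _, fun θ h0 h1 => ?_⟩
    refine (h2 θ ?_).le
    rw [mem_ball, dist_zero_right, Real.norm_eq_abs, abs_of_nonneg h0]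
    have := h1.trans (min_le_left _ _)
    linarith
  set h := r / (4 * ν) with hh
  have hhp : 0 < h := by positivity
  have hhr : 4 * (h * ν) = r := by rw [hh]; field_simp
  set q := P - h • N with hq
  have hPq : P - q = h • N := by rw [hq]; abel
  have hPqn : ‖P - q‖ = h * ν := by
    rw [hPq, norm_smul, Real.norm_eq_abs, abs_of_pos hhp]
  have hνh : 0 < h * ν := by positivity
  have inball : ∀ z, ‖z - q‖ ≤ 2 * (h * ν) → z ∈ ball P r ∧ ‖z - P‖ ≤ 3 * (h * ν) := by
    intro z hz
    have : ‖z - P‖ ≤ 3 * (h * ν) := by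
      have e : z - P = (z - q) - (P - q) := by abel
      rw [e]
      linarith [norm_sub_le (z - q) (P - q)]
    refine ⟨?_, this⟩
    rw [mem_ball, dist_eq_norm]; linarith
  have low : ∀ z, ‖z - q‖ ≤ 2 * (h * ν) → Ld (z - q) < h / 10 → ρ z < -(4 / 5) * h := by
    intro z hz hlz
    obtain ⟨z1, z2⟩ := inball z hz
    have h1 := hest z z1 P (mem_ball_self hr)
    rw [hP, sub_zero] at h1
    have h2 := (abs_le.1 h1).2
    have e : Ld (z - P) = Ld (z - q) - h := by
      have : z - P = (z - q) - h • N := by rw [← hPq]; abel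
      rw [this, map_sub, map_smul, hN, smul_eq_mul, mul_one]
    have h3 : 1 / (80 * ν) * ‖z - P‖ ≤ 1 / (80 * ν) * (3 * (h * ν)) := by gcongr
    have h4 : 1 / (80 * ν) * (3 * (h * ν)) = 3 / 80 * h := by field_simp
    rw [e] at h2
    linarith
  have step : ∀ z, ‖z - q‖ ≤ 2 * (h * ν) → ∀ t θ : ℝ, 0 < t → t ≤ 1 → 0 ≤ θ → θ ≤ θ0 →
      ‖z + ((t : ℂ) * Complex.exp (θ * Complex.I)) • (q - z) - q‖ < 2 * (h * ν) ∧
      ρ (z + ((t : ℂ) * Complex.exp (θ * Complex.I)) • (q - z)) ≤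
        ρ z + t * (-Ld (z - q) + h / 20) := by
    intro z hz t θ ht ht1 h0 h1
    set l := (t : ℂ) * Complex.exp (θ * Complex.I) with hl
    have e1 : z + l • (q - z) - q = (1 - l) • (z - q) := by module
    have a1 : ‖z + l • (q - z) - q‖ < 2 * (h * ν) := by
      rw [e1, norm_smul]
      have := norm_one_sub_lt ht ht1 h0 (h1.trans hθ1)
      nlinarith [norm_nonneg (z - q), norm_nonneg (1 - l)]
    refine ⟨a1, ?_⟩
    have b1 := (abs_le.1 (hest _ (inball _ a1.le).1 z (inball z hz).1)).2
    rw [add_sub_cancel_left] at b1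
    have e2 : l • (q - z) = -(t • (z - q)) + t • ((Complex.exp (θ * Complex.I) - 1) • (q - z)) := by
      have : ∀ w : CE n, t • w = (t : ℂ) • w := fun w => (Complex.coe_smul t w).symm
      rw [this, this, hl]; module
    have e3 : ‖l • (q - z)‖ ≤ t * (2 * (h * ν)) := by
      rw [norm_smul, hl, norm_mul, norm_cexp, mul_one, Complex.norm_real, Real.norm_eq_abs,
        abs_of_pos ht, norm_sub_rev]
      gcongr
    have e4 : Ld (l • (q - z)) ≤ t * (-Ld (z - q)) + t * (2 / 80 * h) := by
      rw [e2, map_add, map_neg, map_smul, map_smul, smul_eq_mul, smul_eq_mul]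
      have c1 : Ld ((Complex.exp (θ * Complex.I) - 1) • (q - z)) ≤ 2 / 80 * h := by
        refine (le_abs_self _).trans ((Ld.le_opNorm _).trans ?_)
        rw [norm_smul, norm_sub_rev q z]
        have := hθ θ h0 h1
        calc ‖Ld‖ * (‖Complex.exp (θ * Complex.I) - 1‖ * ‖z - q‖)
            ≤ ‖Ld‖ * (‖Complex.exp (θ * Complex.I) - 1‖ * (2 * (h * ν))) := by gcongr
          _ = (‖Ld‖ * ‖Complex.exp (θ * Complex.I) - 1‖ * ν) * (2 * h) := by ring
          _ ≤ 1 / 80 * (2 * h) := by gcongr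
          _ = _ := by ring
      have := mul_le_mul_of_nonneg_left c1 ht.le
      linarith
    have e5 : 1 / (80 * ν) * ‖l • (q - z)‖ ≤ t * (2 / 80 * h) := by
      calc _ ≤ 1 / (80 * ν) * (t * (2 * (h * ν))) := by gcongr
        _ = _ := by field_simp
    linarith
  set D0 := {z | ρ z < 0} ∩ ball q (2 * (h * ν)) with hD0
  have hopen : IsOpen D0 := (isOpen_lt hρ continuous_const).inter isOpen_ball
  have mem0 : ∀ z, z ∈ D0 ↔ ρ z < 0 ∧ ‖z - q‖ < 2 * (h * ν) := fun z => by
    rw [hD0, ← dist_eq_norm]; rfl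
  have hqD : q ∈ D0 := by
    rw [mem0]
    refine ⟨?_, by simpa using by positivity⟩
    have := low q (by simpa using by positivity) (by simpa using by positivity)
    linarith
  have hcl : ∀ z ∈ closure D0, ρ z ≤ 0 ∧ ‖z - q‖ ≤ 2 * (h * ν) := by
    have hc : IsClosed {z | ρ z ≤ 0 ∧ ‖z - q‖ ≤ 2 * (h * ν)} :=
      (isClosed_le hρ continuous_const).inter
        (isClosed_le (f := fun z => ‖z - q‖) (by fun_prop) continuous_const)
    intro z hz
    have hsub : D0 ⊆ {z | ρ z ≤ 0 ∧ ‖z - q‖ ≤ 2 * (h * ν)} :=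
      fun z hz => ⟨((mem0 z).1 hz).1.le, ((mem0 z).1 hz).2.le⟩
    exact closure_minimal hsub hc hz
  have hconn : IsConnected D0 := by
    have hs : StarConvex ℝ q D0 := by
      intro z hz a b ha hb hab
      obtain ⟨z1, z2⟩ := (mem0 z).1 hz
      have ha1 : a ≤ 1 := by linarith
      rcases ha.eq_or_lt with rfl | hapos
      · have : b = 1 := by linarith
        rw [this]; simpa using hz
      have e : a • q + b • z = z + ((a : ℂ) * Complex.exp ((0 : ℝ) * Complex.I)) • (q - z) := by
        have : b = 1 - a := by linarith
        rw [this]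
        simp only [Complex.ofReal_zero, zero_mul, Complex.exp_zero, mul_one, Complex.coe_smul]
        module
      obtain ⟨s1, s2⟩ := step z z2.le a 0 hapos ha1 le_rfl hθ0.le
      rw [← e] at s1 s2
      rw [mem0]
      refine ⟨?_, s1⟩
      rcases le_or_gt (h / 10) (Ld (z - q)) with hc | hc
      · have : a * (-Ld (z - q) + h / 20) ≤ 0 := by
          apply mul_nonpos_of_nonneg_of_nonpos ha; linarith
        linarith
      · have e2 : a • q + b • z - q = b • (z - q) := by
          have : a = 1 - b := by linarith
          rw [this]; module
        have := low _ s1.le (by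
          rw [e2, map_smul, smul_eq_mul]
          rcases le_total 0 (Ld (z - q)) with h3 | h3
          · nlinarith
          · have : b * Ld (z - q) ≤ 0 := mul_nonpos_of_nonneg_of_nonpos hb h3
            linarith)
        linarith
    exact (hs.isPathConnected hqD).isConnected
  set t0 := min 1 (1 / (4 * (‖Ld‖ * ν) + 1)) with ht0
  have hLν : 0 ≤ ‖Ld‖ * ν := by positivity
  have ht0p : 0 < t0 := lt_min one_pos (by positivity)
  refine ⟨ball q (2 * (h * ν)), isOpen_ball, ?_, ?_⟩
  · rw [mem_ball, dist_eq_norm, hPqn]; linarith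
  refine star_sdomain hopen hconn (isBounded_ball.subset Set.inter_subset_right) (q := q) hθ0
    (by linarith [Real.pi_gt_three]) ht0p ?_
  intro t θ ht htt hθ' hθθ z hz
  obtain ⟨z1, z2⟩ := hcl z hz
  obtain ⟨s1, s2⟩ := step z z2 t θ ht (htt.trans (min_le_left _ _)) hθ' hθθ
  rw [mem0]
  refine ⟨?_, s1⟩
  rcases le_or_gt (h / 10) (Ld (z - q)) with hc | hc
  · have : t * (-Ld (z - q) + h / 20) < 0 := by
      apply mul_neg_of_pos_of_neg ht; linarith
    linarith
  · have l1 := low z z2 hc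
    have l2 : -Ld (z - q) ≤ ‖Ld‖ * (2 * (h * ν)) := by
      refine (neg_le_abs _).trans ((Ld.le_opNorm _).trans ?_)
      gcongr
    have l3 : t * (4 * (‖Ld‖ * ν) + 1) ≤ 1 := by
      have := htt.trans (min_le_right _ _)
      rwa [le_div_iff₀ (by positivity)] at this
    have l4 : t * (-Ld (z - q) + h / 20) ≤ t * (‖Ld‖ * (2 * (h * ν)) + h / 20) := by gcongr
    have l5 : t * (‖Ld‖ * (2 * (h * ν)) + h / 20) ≤ h / 2 := by
      have : t * (‖Ld‖ * (2 * (h * ν)) + h / 20) ≤ h / 2 * (t * (4 * (‖Ld‖ * ν) + 1)) := by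
        nlinarith [mul_pos ht hhp]
      nlinarith
    linarith

end localS

section bdry

lemma impl_graph {X : Type*} [NormedAddCommGroup X] [NormedSpace ℝ X] [CompleteSpace X]
    [HasContDiffBump X]
    {G : X × ℝ → ℝ} (hG : ContDiff ℝ (⊤ : ℕ∞) G) {x0 : X} {t0 : ℝ} (h0 : G (x0, t0) = 0)
    (hpos : 0 < fderiv ℝ G (x0, t0) (0, 1)) :
    ∃ (F : X → ℝ) (V : Set (X × ℝ)), ContDiff ℝ (⊤ : ℕ∞) F ∧ IsOpen V ∧ (x0, t0) ∈ V ∧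
      ∀ v ∈ V, (G v < 0 ↔ v.2 < F v.1) := by
  have hdc : Continuous fun v => fderiv ℝ G v (0, 1) :=
    (hG.continuous_fderiv (by simp)).clm_apply continuous_const
  have hdiff : Differentiable ℝ G := hG.differentiable (by simp)
  obtain ⟨r, hr, hbox⟩ := Metric.eventually_nhds_iff_ball.1
    ((hdc.tendsto (x0, t0)).eventually_const_lt hpos)
  have hbox' : ∀ x ∈ ball x0 r, ∀ t ∈ ball t0 r, 0 < fderiv ℝ G (x, t) (0, 1) := fun x hx t ht =>
    hbox (x, t) (by rw [← ball_prod_same]; exact ⟨hx, ht⟩)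
  have hmono : ∀ x ∈ ball x0 r, StrictMonoOn (fun t => G (x, t)) (ball t0 r) := by
    intro x hx
    have hd : ∀ t, HasDerivAt (fun t => G (x, t)) (fderiv ℝ G (x, t) (0, 1)) t := by
      intro t
      have h1 : HasDerivAt (fun t : ℝ => (x, t)) ((0 : X), (1 : ℝ)) t :=
        (hasDerivAt_const t x).prodMk (hasDerivAt_id t)
      exact (hdiff (x, t)).hasFDerivAt.comp_hasDerivAt t h1
    refine strictMonoOn_of_deriv_pos (convex_ball t0 r) ?_ ?_
    · exact fun t _ => (hd t).continuousAt.continuousWithinAt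
    · intro t ht
      rw [(hd t).deriv]
      exact hbox' x hx t (interior_subset ht)
  have hne : ((⊤ : ℕ∞) : WithTop ℕ∞) ≠ 0 := by simp
  have hinv : ∀ x ∈ ball x0 r, ∀ t ∈ ball t0 r,
      (fderiv ℝ G (x, t) ∘L .inr ℝ X ℝ).IsInvertible := by
    intro x hx t ht
    have hp := hbox' x hx t ht
    refine ⟨ContinuousLinearEquiv.unitsEquivAut ℝ (Units.mk0 _ hp.ne'), ?_⟩
    ext
    simp
  -- local implicit functions
  have himp : ∀ x ∈ ball x0 r, ∀ t ∈ ball t0 r, G (x, t) = 0 → ∃ ψ : X → ℝ,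
      ContDiffAt ℝ (⊤ : ℕ∞) ψ x ∧ ∀ᶠ y in 𝓝 x, G (y, ψ y) = 0 ∧ ψ y ∈ ball t0 r := by
    intro x hx t ht h
    have hc : ContDiffAt ℝ (⊤ : ℕ∞) G (x, t) := hG.contDiffAt
    have c1 := hc.contDiffAt_implicitFunction hne (hinv x hx t ht)
    refine ⟨_, c1, ?_⟩
    have e1 := hc.eventually_apply_implicitFunction hne (hinv x hx t ht)
    have e2 := hc.implicitFunction_apply_self hne (hinv x hx t ht)
    have e3 := c1.continuousAt.eventually_mem (isOpen_ball.mem_nhds (by rw [e2]; exact ht))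
    filter_upwards [e1, e3] with y h1 h2
    exact ⟨h1.trans h, h2⟩
  obtain ⟨ψ, -, hψ⟩ := himp x0 (mem_ball_self hr) t0 (mem_ball_self hr) h0
  obtain ⟨r1, hr1, hψ1⟩ := Metric.eventually_nhds_iff_ball.1
    (hψ.and (isOpen_ball.mem_nhds (mem_ball_self hr) : ∀ᶠ y in 𝓝 x0, y ∈ ball x0 r))
  have hsm : ∀ x ∈ ball x0 r1, ContDiffAt ℝ (⊤ : ℕ∞) ψ x := by
    intro x hx
    obtain ⟨⟨a1, a2⟩, a3⟩ := hψ1 x hx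
    obtain ⟨ψ', b1, b2⟩ := himp x a3 (ψ x) a2 a1
    refine b1.congr_of_eventuallyEq ?_
    filter_upwards [b2, isOpen_ball.mem_nhds hx] with y hy hy1
    obtain ⟨⟨c1, c2⟩, c3⟩ := hψ1 y hy1
    exact (hmono y c3).injOn c2 hy.2 (by simp only [c1, hy.1])
  let b : ContDiffBump x0 := ⟨r1 / 3, r1 / 2, by positivity, by linarith⟩
  have hrIn : b.rIn = r1 / 3 := rfl
  have hrOut : b.rOut = r1 / 2 := rfl
  refine ⟨fun x => b x * ψ x, ball x0 (r1 / 3) ×ˢ ball t0 r, ?_, isOpen_ball.prod isOpen_ball,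
    ⟨mem_ball_self (by positivity), mem_ball_self hr⟩, ?_⟩
  · rw [contDiff_iff_contDiffAt]
    intro x
    by_cases hx : x ∈ ball x0 r1
    · exact b.contDiffAt.mul (hsm x hx)
    · have hx' : ∀ᶠ y in 𝓝 x, y ∉ closedBall x0 (r1 / 2) := by
        refine isClosed_closedBall.isOpen_compl.mem_nhds ?_
        simp only [mem_ball, not_lt] at hx
        simp only [Set.mem_compl_iff, mem_closedBall, not_le]
        linarith
      have : (fun x => b x * ψ x) =ᶠ[𝓝 x] fun _ => (0 : ℝ) := by
        filter_upwards [hx'] with y hy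
        simp only [mem_closedBall, not_le] at hy
        rw [b.zero_of_le_dist (by rw [hrOut]; exact hy.le), zero_mul]
      exact contDiffAt_const.congr_of_eventuallyEq this
  · rintro ⟨x, t⟩ ⟨hx, ht⟩
    simp only at hx ht ⊢
    obtain ⟨⟨a1, a2⟩, a3⟩ := hψ1 x (ball_subset_ball (by linarith) hx)
    rw [b.one_of_mem_closedBall (by rw [hrIn]; exact ball_subset_closedBall hx), one_mul]
    rw [← (hmono x a3).lt_iff_lt ht a2]
    simp only [a1]

variable {n : ℕ}

theorem smooth_bdry (hn : 1 ≤ n) {ρ : CE n → ℝ} (hρ : ContDiff ℝ (⊤ : ℕ∞) ρ)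
    (hreg : ∀ P, ρ P = 0 → fderiv ℝ ρ P ≠ 0) : HasSmoothBoundary {z | ρ z < 0} := by
  intro p hp
  have hp0 : ρ p = 0 := by
    have h1 := frontier_lt_subset_eq hρ.continuous continuous_const hp
    exact h1
  obtain ⟨x, hx⟩ : ∃ x, 0 < fderiv ℝ ρ p x := by
    obtain ⟨x, hx⟩ : ∃ x, fderiv ℝ ρ p x ≠ 0 := by
      by_contra! h; exact hreg p hp0 (ContinuousLinearMap.ext h)
    rcases hx.lt_or_gt with h | h
    · exact ⟨-x, by rw [map_neg]; linarith⟩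
    · exact ⟨x, h⟩
  have hxn : 0 < ‖x‖ := norm_pos_iff.2 (by rintro rfl; simp at hx)
  set v := ‖x‖⁻¹ • x with hv
  have hv1 : ‖v‖ = 1 := by rw [hv, norm_smul, norm_inv, norm_norm, inv_mul_cancel₀ hxn.ne']
  have hvpos : 0 < fderiv ℝ ρ p v := by
    rw [hv, map_smul, smul_eq_mul]; positivity
  let H := WithLp 2 (EuclideanSpace ℝ (Fin (2 * n - 1)) × ℝ)
  have hfin : Module.finrank ℝ (CE n) = Module.finrank ℝ H := by
    have h1 : Module.finrank ℝ (CE n) = 2 * n := by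
      rw [← Module.finrank_mul_finrank ℝ ℂ (CE n), Complex.finrank_real_complex]
      simp
    have h2 : Module.finrank ℝ H = 2 * n := by
      rw [(WithLp.linearEquiv 2 ℝ (EuclideanSpace ℝ (Fin (2 * n - 1)) × ℝ)).finrank_eq,
        Module.finrank_prod]
      simp
      omega
    rw [h1, h2]
  let φ0 : CE n ≃ₗᵢ[ℝ] H := (stdOrthonormalBasis ℝ (CE n)).equiv (stdOrthonormalBasis ℝ H)
    (finCongr hfin)
  let e : H := WithLp.toLp 2 (0, 1)
  have he : ‖e‖ = 1 := by
    have h1 : ‖(WithLp.toLp 2 ((0 : EuclideanSpace ℝ (Fin (2 * n - 1))), (1 : ℝ)) :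
        WithLp 2 (EuclideanSpace ℝ (Fin (2 * n - 1)) × ℝ))‖ = 1 := by
      rw [WithLp.prod_norm_eq_of_L2]; simp
    exact h1
  let R : H ≃ₗᵢ[ℝ] H := (Submodule.span ℝ {φ0 v - e})ᗮ.reflection
  have hR : R (φ0 v) = e := Submodule.reflection_sub (by rw [φ0.norm_map, hv1, he])
  let φ : CE n ≃ₗᵢ[ℝ] H := φ0.trans R
  have hφ : φ v = e := hR
  have hφs : φ.symm e = v := by rw [← hφ, φ.symm_apply_apply]
  let J : EuclideanSpace ℝ (Fin (2 * n - 1)) × ℝ →L[ℝ] CE n :=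
    (φ.symm.toContinuousLinearEquiv : H →L[ℝ] CE n) ∘L
    ((WithLp.prodContinuousLinearEquiv 2 ℝ (EuclideanSpace ℝ (Fin (2 * n - 1))) ℝ).symm :
      EuclideanSpace ℝ (Fin (2 * n - 1)) × ℝ →L[ℝ] H)
  have hJ : ∀ y, J y = φ.symm (WithLp.toLp 2 y) := fun _ => rfl
  let G : EuclideanSpace ℝ (Fin (2 * n - 1)) × ℝ → ℝ := fun y => ρ (J y)
  have hG : ContDiff ℝ (⊤ : ℕ∞) G := hρ.comp J.contDiff
  have hJp : J (WithLp.ofLp (φ p)) = p := by rw [hJ]; exact φ.symm_apply_apply p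
  have hGd : fderiv ℝ G (WithLp.ofLp (φ p)) (0, 1) = fderiv ℝ ρ p v := by
    have h1 : HasFDerivAt G ((fderiv ℝ ρ (J (WithLp.ofLp (φ p)))) ∘L J) (WithLp.ofLp (φ p)) :=
      ((hρ.differentiable (by simp)) _).hasFDerivAt.comp _ J.hasFDerivAt
    rw [h1.fderiv, hJp, ContinuousLinearMap.comp_apply, hJ]
    congr 1
  obtain ⟨F, V, hF, hV, hpV, hiff⟩ := impl_graph hG (x0 := (WithLp.ofLp (φ p)).1)
    (t0 := (WithLp.ofLp (φ p)).2) (by simp only [G, Prod.mk.eta]; rw [hJp]; exact hp0)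
    (by rw [Prod.mk.eta, hGd]; exact hvpos)
  refine ⟨φ.toIsometryEquiv, F, WithLp.ofLp ⁻¹' V, hF,
    hV.preimage (WithLp.prodContinuousLinearEquiv 2 ℝ (EuclideanSpace ℝ (Fin (2 * n - 1))) ℝ).continuous,
    hpV, ?_⟩
  intro q hq
  exact hiff (WithLp.ofLp q) hq

end bdry

section localglobal

/-- Existence of a local holomorphic support from below. -/
def HSup {E : Type*} [NormedAddCommGroup E] [NormedSpace ℂ E] (v : E → ℝ) (x : E) : Prop :=
  ∃ g : E → ℂ, (∀ᶠ y in 𝓝 x, DifferentiableAt ℂ g y) ∧ (g x).re = v x ∧ ∀ᶠ y in 𝓝 x, (g y).re ≤ v y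

lemma approx_circle (v : ℂ → ℝ) (hv : ContinuousOn v (sphere 0 1)) {ε : ℝ} (hε : 0 < ε) :
    ∃ G : ℂ → ℂ, Differentiable ℂ G ∧ ∀ z ∈ sphere (0:ℂ) 1, |v z - (G z).re| ≤ ε := by
  have : Fact (0 < 2 * π) := ⟨by positivity⟩
  have key : ∀ f ∈ Submodule.span ℂ (Set.range (@fourier (2 * π))),
      ∃ G H : ℂ → ℂ, Differentiable ℂ G ∧ Differentiable ℂ H ∧ ∀ t : AddCircle (2 * π),
        f t = G (AddCircle.toCircle t) + (starRingEnd ℂ) (H (AddCircle.toCircle t)) := by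
    intro f hf
    induction hf using Submodule.span_induction with
    | mem x h =>
      obtain ⟨k, rfl⟩ := h
      obtain ⟨m, rfl | rfl⟩ := Int.eq_nat_or_neg k
      · refine ⟨fun z => z ^ m, 0, by fun_prop, differentiable_const 0, fun t => ?_⟩
        rw [fourier_apply, AddCircle.toCircle_zsmul]; simp
      · refine ⟨0, fun z => z ^ m, differentiable_const 0, by fun_prop, fun t => ?_⟩
        rw [fourier_apply, AddCircle.toCircle_zsmul]
        simp [← Circle.coe_inv_eq_conj]
    | zero => exact ⟨0, 0, differentiable_const 0, differentiable_const 0, fun t => by simp⟩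
    | add x y _ _ hx hy =>
      obtain ⟨G, H, h1, h2, h3⟩ := hx
      obtain ⟨G', H', h1', h2', h3'⟩ := hy
      refine ⟨G + G', H + H', h1.add h1', h2.add h2', fun t => ?_⟩
      simp [h3, h3']; ring
    | smul c x _ hx =>
      obtain ⟨G, H, h1, h2, h3⟩ := hx
      refine ⟨c • G, (starRingEnd ℂ c) • H, h1.const_smul c, h2.const_smul _, fun t => ?_⟩
      simp [h3]; ring
  let V : C(AddCircle (2 * π), ℂ) := ⟨fun t => ((v (AddCircle.toCircle t) : ℝ) : ℂ), by
    refine Complex.continuous_ofReal.comp (hv.comp_continuous ?_ fun t => by simpa using Circle.norm_coe _)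
    exact continuous_subtype_val.comp AddCircle.continuous_toCircle⟩
  have hV : V ∈ (Submodule.span ℂ (Set.range (@fourier (2 * π)))).topologicalClosure := by
    rw [span_fourier_closure_eq_top]; trivial
  rw [← SetLike.mem_coe, Submodule.topologicalClosure_coe] at hV
  obtain ⟨f, hf, hd⟩ := Metric.mem_closure_iff.1 hV ε hε
  obtain ⟨G, H, h1, h2, h3⟩ := key f hf
  refine ⟨G + H, h1.add h2, fun z hz => ?_⟩
  have hs : ∃ t : AddCircle (2 * π), (AddCircle.toCircle t : ℂ) = z := by
    obtain ⟨t, ht⟩ := (AddCircle.homeomorphCircle (T := 2 * π) (by positivity)).surjective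
      ⟨z, by simpa [Submonoid.unitSphere] using hz⟩
    exact ⟨t, by rw [← AddCircle.homeomorphCircle_apply (by positivity), ht]⟩
  obtain ⟨t, rfl⟩ := hs
  have h4 : ‖V t - f t‖ ≤ ε := by
    rw [← dist_eq_norm]; exact (ContinuousMap.dist_apply_le_dist t).trans hd.le
  have h5 : (V t - f t).re = v (AddCircle.toCircle t) - ((G + H) (AddCircle.toCircle t)).re := by
    rw [h3]; simp [V]
  rw [← h5]
  exact (Complex.abs_re_le_norm _).trans h4

lemma max_disc (w : ℂ → ℝ) (hw : ContinuousOn w (closedBall 0 1)) (hs : ∀ z ∈ ball (0:ℂ) 1, HSup w z)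
    {ε : ℝ} (hb : ∀ z ∈ sphere (0:ℂ) 1, w z ≤ ε) : w 0 ≤ ε := by
  by_contra! hlt
  obtain ⟨m, hm, hmax⟩ := (isCompact_closedBall (0:ℂ) 1).exists_isMaxOn ⟨0, by simp⟩ hw
  have hM : ε < w m := hlt.trans_le (hmax (by simp : (0:ℂ) ∈ closedBall 0 1))
  let S : Set ℂ := closedBall 0 1 ∩ w ⁻¹' {w m}
  have hSc : IsCompact S := (isCompact_closedBall (0:ℂ) 1).of_isClosed_subset
    (hw.preimage_isClosed_of_isClosed isClosed_closedBall isClosed_singleton) Set.inter_subset_left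
  obtain ⟨p, hp, hpm⟩ := hSc.exists_isMaxOn ⟨m, hm, rfl⟩ (continuous_norm.continuousOn)
  have hpw : w p = w m := hp.2
  have hpb : p ∈ ball (0:ℂ) 1 := by
    have h1 : ‖p‖ ≤ 1 := by simpa using hp.1
    rcases h1.lt_or_eq with h | h
    · simpa using h
    · have := hb p (by simpa using h); linarith
  obtain ⟨g, hg1, hg2, hg3⟩ := hs p hpb
  have hnear : ∀ᶠ y in 𝓝 p, y ∈ ball (0:ℂ) 1 := isOpen_ball.mem_nhds hpb
  have hle : ∀ᶠ y in 𝓝 p, (g y).re ≤ w m := by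
    filter_upwards [hg3, hnear] with y h1 h2
    exact h1.trans (hmax (ball_subset_closedBall h2))
  have hconst := Complex.eventually_eq_of_isLocalMax_norm (f := fun y => Complex.exp (g y)) (c := p)
    (hg1.mono fun y hy => hy.cexp) (by
      filter_upwards [hle] with y hy
      simp only [Function.comp, Complex.norm_exp, Real.exp_le_exp]
      rw [hg2, hpw]; exact hy)
  have hS : ∀ᶠ y in 𝓝 p, y ∈ S := by
    filter_upwards [hconst, hg3, hnear] with y h1 h2 h3
    have h4 := congrArg norm h1
    simp only [Complex.norm_exp, Real.exp_eq_exp] at h4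
    refine ⟨ball_subset_closedBall h3, le_antisymm (hmax (ball_subset_closedBall h3)) ?_⟩
    rw [← hpw, ← hg2, ← h4]; exact h2
  obtain ⟨d, hd, hdp⟩ : ∃ d : ℂ, d ≠ 0 ∧ ∀ t : ℝ, 0 < t → ‖p‖ < ‖p + t * d‖ := by
    by_cases h0 : p = 0
    · refine ⟨1, one_ne_zero, fun t ht => ?_⟩
      simp [h0, ht.ne']
    · refine ⟨p, h0, fun t ht => ?_⟩
      have : p + t * p = ((1 + t : ℝ) : ℂ) * p := by push_cast; ring
      rw [this, norm_mul, Complex.norm_real, Real.norm_of_nonneg (by linarith)]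
      have := norm_pos_iff.2 h0
      nlinarith
  have ht : Tendsto (fun t : ℝ => p + t * d) (𝓝[>] 0) (𝓝 p) := by
    have : Continuous (fun t : ℝ => p + t * d) := by fun_prop
    have h2 := this.tendsto 0
    simp only [Complex.ofReal_zero, zero_mul, add_zero] at h2
    exact h2.mono_left nhdsWithin_le_nhds
  obtain ⟨t, ht1, ht2⟩ := ((ht.eventually hS).and self_mem_nhdsWithin).exists
  have h1 : ‖p + t * d‖ ≤ ‖p‖ := hpm ht1
  exact absurd (hdp t ht2) (not_lt.2 h1)

lemma submean_disc (v : ℂ → ℝ) (hv : ContinuousOn v (closedBall 0 1))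
    (hs : ∀ z ∈ ball (0:ℂ) 1, HSup v z) :
    v 0 ≤ (2 * π)⁻¹ * ∫ θ in (0:ℝ)..(2 * π), v (Complex.exp ((θ : ℂ) * Complex.I)) := by
  refine le_of_forall_pos_le_add fun ε hε => ?_
  obtain ⟨G, hG, hG2⟩ := approx_circle v (hv.mono sphere_subset_closedBall) (half_pos hε)
  have h1 : v 0 - (G 0).re ≤ ε / 2 := by
    refine max_disc (fun z => v z - (G z).re)
      (hv.sub (Complex.continuous_re.comp hG.continuous).continuousOn) ?_
      (fun z hz => (le_abs_self _).trans (hG2 z hz))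
    intro z hz
    obtain ⟨g, hg1, hg2, hg3⟩ := hs z hz
    refine ⟨fun y => g y - G y, hg1.mono fun y hy => hy.sub hG.differentiableAt, by simp [hg2], ?_⟩
    filter_upwards [hg3] with y hy
    simpa using hy
  have hmean : (G 0).re = (2 * π)⁻¹ * ∫ θ in (0:ℝ)..(2 * π),
      (G (Complex.exp ((θ : ℂ) * Complex.I))).re := by
    have h2 : Real.circleAverage G 0 1 = G 0 :=
      DiffContOnCl.circleAverage (hG.diffContOnCl)
    have hci : IntervalIntegrable (fun θ : ℝ => G (Complex.exp ((θ : ℂ) * Complex.I))) volume 0 (2 * π) := by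
      apply Continuous.intervalIntegrable
      exact hG.continuous.comp (by fun_prop)
    have h3 := Complex.reCLM.intervalIntegral_comp_comm hci
    rw [← h2, Real.circleAverage_def]
    simp only [circleMap, Complex.ofReal_one, one_mul, zero_add]
    simp only [Complex.reCLM_apply] at h3
    rw [h3, Complex.real_smul, Complex.re_ofReal_mul]
  have hex : Continuous fun θ : ℝ => Complex.exp ((θ : ℂ) * Complex.I) := by fun_prop
  have hcv : Continuous fun θ : ℝ => v (Complex.exp ((θ : ℂ) * Complex.I)) :=
    hv.comp_continuous hex fun θ => by simp
  have h4 : ∫ θ in (0:ℝ)..(2 * π), (G (Complex.exp ((θ : ℂ) * Complex.I))).re ≤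
      ∫ θ in (0:ℝ)..(2 * π), (v (Complex.exp ((θ : ℂ) * Complex.I)) + ε / 2) := by
    refine intervalIntegral.integral_mono_on (by positivity) ?_ ?_ ?_
    · apply Continuous.intervalIntegrable
      exact Complex.continuous_re.comp (hG.continuous.comp hex)
    · apply Continuous.intervalIntegrable
      exact hcv.add continuous_const
    · intro θ _
      have := (abs_le.1 (hG2 (Complex.exp ((θ : ℂ) * Complex.I)) (by simp))).1
      linarith
  rw [intervalIntegral.integral_add (hcv.intervalIntegrable _ _) (by simp)] at h4
  simp only [intervalIntegral.integral_const, sub_zero, smul_eq_mul] at h4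
  have h5 := mul_le_mul_of_nonneg_left h4 (by positivity : 0 ≤ (2 * π)⁻¹)
  rw [← hmean, mul_add, ← mul_assoc (2 * π)⁻¹ (2 * π), inv_mul_cancel₀ (by positivity)] at h5
  linarith

variable {n : ℕ}

theorem submean_of_hsup {v : CE n → ℝ} {a b : CE n}
    (hc : ∀ l : ℂ, ‖l‖ ≤ 1 → ContinuousAt v (a + l • b))
    (hs : ∀ l : ℂ, ‖l‖ ≤ 1 → HSup v (a + l • b)) :
    v a ≤ (2 * π)⁻¹ * ∫ θ in (0:ℝ)..(2 * π), v (circPt a b θ) := by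
  have h := submean_disc (fun l => v (a + l • b)) ?_ ?_
  · simpa using h
  · intro l hl
    have hl' : ‖l‖ ≤ 1 := by simpa using hl
    have h2 : ContinuousAt (fun l : ℂ => a + l • b) l := by fun_prop
    exact (ContinuousAt.comp (f := fun l : ℂ => a + l • b) (hc l hl') h2).continuousWithinAt
  · intro l hl
    have hl' : ‖l‖ ≤ 1 := by simpa using (ball_subset_closedBall hl)
    obtain ⟨g, hg1, hg2, hg3⟩ := hs l hl'
    have h2 : Tendsto (fun l : ℂ => a + l • b) (𝓝 l) (𝓝 (a + l • b)) := by
      have h2 : ContinuousAt (fun l : ℂ => a + l • b) l := by fun_prop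
      exact h2
    refine ⟨fun l => g (a + l • b), ?_, hg2, h2.eventually hg3⟩
    filter_upwards [h2.eventually hg1] with y hy
    exact DifferentiableAt.comp (g := g) (f := fun l : ℂ => a + l • b) y hy (by fun_prop)

section hsup
variable {E : Type*} [NormedAddCommGroup E] [NormedSpace ℂ E] {v w : E → ℝ} {x : E}

lemma HSup.congr (h : HSup v x) (e : v =ᶠ[𝓝 x] w) : HSup w x := by
  obtain ⟨g, h1, h2, h3⟩ := h
  refine ⟨g, h1, h2.trans e.eq_of_nhds, ?_⟩
  filter_upwards [h3, e] with y h4 h5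
  rwa [← h5]

/-- A function at a local minimum has a constant support. -/
lemma HSup.of_min (h : ∀ᶠ y in 𝓝 x, v x ≤ v y) : HSup v x :=
  ⟨fun _ => (v x : ℂ), Eventually.of_forall fun _ => differentiableAt_const _, by simp, by simpa using h⟩

lemma HSup.const (c : ℝ) : HSup (fun _ : E => c) x := HSup.of_min (by simp)

lemma HSup.add (h : HSup v x) (h' : HSup w x) : HSup (fun y => v y + w y) x := by
  obtain ⟨g, h1, h2, h3⟩ := h
  obtain ⟨k, k1, k2, k3⟩ := h'
  refine ⟨fun y => g y + k y, ?_, by simp [h2, k2], ?_⟩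
  · filter_upwards [h1, k1] with y a b using a.add b
  · filter_upwards [h3, k3] with y a b
    simpa using add_le_add a b

lemma HSup.const_mul (h : HSup v x) {c : ℝ} (hc : 0 ≤ c) : HSup (fun y => c * v y) x := by
  obtain ⟨g, h1, h2, h3⟩ := h
  refine ⟨fun y => (c : ℂ) * g y, ?_, by simp [h2], ?_⟩
  · filter_upwards [h1] with y a using a.const_mul _
  · filter_upwards [h3] with y a
    simpa using mul_le_mul_of_nonneg_left a hc

lemma HSup.max_left (h : HSup v x) (hx : w x ≤ v x) : HSup (fun y => max (v y) (w y)) x := by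
  obtain ⟨g, h1, h2, h3⟩ := h
  refine ⟨g, h1, by simp [h2, hx], ?_⟩
  filter_upwards [h3] with y a using a.trans (le_max_left _ _)

lemma HSup.max (h : HSup v x) (h' : HSup w x) : HSup (fun y => max (v y) (w y)) x := by
  rcases le_total (w x) (v x) with hx | hx
  · exact h.max_left hx
  · simpa only [max_comm] using h'.max_left hx

lemma HSup.sum {ι : Type*} (s : Finset ι) {f : ι → E → ℝ} (h : ∀ i ∈ s, HSup (f i) x) :
    HSup (fun y => ∑ i ∈ s, f i y) x := by
  classical
  induction s using Finset.induction_on with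
  | empty => simpa using HSup.const (0:ℝ)
  | insert i s hi ih =>
    simp only [Finset.sum_insert hi]
    exact (h i (by simp)).add (ih fun j hj => h j (by simp [hj]))

end hsup
end localglobal

section domain

/-- The angle of the centre. -/
def dAl (x : ℝ) : ℝ := 5 - 5 * (x - 2) ^ 2

/-- The centre. -/
def dCen (x : ℝ) : ℂ := Complex.exp ((dAl x : ℝ) * Complex.I)

/-- The radius modification. -/
def dChi (x : ℝ) : ℝ := expNegInvGlue (1 - x) + expNegInvGlue (x - 3) * (6 - x)

/-- The cutoff in the last coordinate. -/
def dK (t : ℝ) : ℝ := 100 * expNegInvGlue (t - 1)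

/-- The centres in the last coordinate. -/
def aj (j : ℕ) : ℝ := (1 / 2) ^ (j + 1)

/-- The weights. -/
def cj (j : ℕ) : ℝ := (1 / 2) ^ (j + 2) / Real.log (10 / aj j)

/-- The truncation thresholds. -/
def dj (j : ℕ) : ℝ := Real.exp (-(8 / cj j))

/-- The set of extra room. -/
def dS : Set ℂ := {a | ‖a‖ < 1 ∧ ∃ j : ℕ, ‖a - aj j‖ < 10 * dj j}

lemma aj_pos (j : ℕ) : 0 < aj j := by unfold aj; positivity

lemma aj_le (j : ℕ) : aj j ≤ 1 / 2 := by
  unfold aj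
  rw [pow_succ]
  have : (1 / 2 : ℝ) ^ j ≤ 1 := pow_le_one₀ (by norm_num) (by norm_num)
  linarith

lemma aj_tendsto : Tendsto aj atTop (𝓝 0) := by
  unfold aj
  exact (tendsto_add_atTop_iff_nat 1).2
    (tendsto_pow_atTop_nhds_zero_of_lt_one (by norm_num) (by norm_num))

lemma log_aj_pos (j : ℕ) : 0 < Real.log (10 / aj j) := by
  apply Real.log_pos
  rw [one_lt_div (aj_pos j)]
  have := aj_le j
  linarith

lemma cj_pos (j : ℕ) : 0 < cj j := by
  unfold cj
  have := log_aj_pos j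
  positivity

lemma dj_pos (j : ℕ) : 0 < dj j := Real.exp_pos _

lemma dj_lt (j : ℕ) : dj j < 1 := by
  unfold dj
  rw [Real.exp_lt_one_iff]
  have := cj_pos j
  have : 0 < 8 / cj j := by positivity
  linarith

lemma dS_open : IsOpen dS := by
  have : dS = {a : ℂ | ‖a‖ < 1} ∩ ⋃ j : ℕ, {a : ℂ | ‖a - aj j‖ < 10 * dj j} := by
    ext a; simp [dS]
  rw [this]
  exact (isOpen_lt continuous_norm continuous_const).inter
    (isOpen_iUnion fun j => isOpen_lt (by fun_prop) continuous_const)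

/-- The extra room function. -/
def dh : ℂ → ℝ := (dS_open.exists_contDiff_support_eq (n := ⊤)).choose

lemma dh_supp : Function.support dh = dS :=
  (dS_open.exists_contDiff_support_eq (n := ⊤)).choose_spec.1

lemma dh_smooth : ContDiff ℝ (⊤ : ℕ∞) dh :=
  (dS_open.exists_contDiff_support_eq (n := ⊤)).choose_spec.2.1

lemma dh_nonneg (a : ℂ) : 0 ≤ dh a :=
  ((dS_open.exists_contDiff_support_eq (n := ⊤)).choose_spec.2.2 ⟨a, rfl⟩).1

lemma dh_le (a : ℂ) : dh a ≤ 1 :=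
  ((dS_open.exists_contDiff_support_eq (n := ⊤)).choose_spec.2.2 ⟨a, rfl⟩).2

lemma dh_pos {a : ℂ} (ha : a ∈ dS) : 0 < dh a :=
  (dh_nonneg a).lt_of_ne' (by rw [← dh_supp] at ha; exact ha)

lemma mem_dS {a : ℂ} (ha : 0 < dh a) : a ∈ dS := by
  rw [← dh_supp]; exact ha.ne'

lemma dh_zero {a : ℂ} (ha : 1 ≤ ‖a‖) : dh a = 0 := by
  by_contra h
  have h2 : a ∈ dS := by rw [← dh_supp]; exact h
  exact absurd h2.1 (not_lt.2 ha)

lemma glue_le_one (x : ℝ) : expNegInvGlue x ≤ 1 := by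
  unfold expNegInvGlue
  split_ifs with h
  · norm_num
  · rw [Real.exp_le_one_iff]
    have : 0 < x⁻¹ := inv_pos.2 (not_le.1 h)
    linarith

lemma glue_ge {x : ℝ} (hx : 3 ≤ x) : 2 / 3 ≤ expNegInvGlue x := by
  unfold expNegInvGlue
  rw [if_neg (by linarith)]
  have h1 := Real.add_one_le_exp (-x⁻¹)
  have h2 : x⁻¹ ≤ 3⁻¹ := inv_anti₀ (by norm_num) hx
  norm_num at h2
  linarith

lemma glue_hasDeriv {x : ℝ} (hx : 0 < x) : ∃ c, 0 < c ∧ HasDerivAt expNegInvGlue c x := by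
  refine ⟨Real.exp (-x⁻¹) * (x ^ 2)⁻¹, by positivity, ?_⟩
  have h := ((hasDerivAt_inv hx.ne').neg).exp
  rw [neg_neg] at h
  refine h.congr_of_eventuallyEq ?_
  filter_upwards [lt_mem_nhds hx] with y hy
  simp [expNegInvGlue, not_le.2 hy]

lemma dChi_eq_low {x : ℝ} (hx : x ≤ 3) : dChi x = expNegInvGlue (1 - x) := by
  unfold dChi
  rw [expNegInvGlue.zero_of_nonpos (by linarith : x - 3 ≤ 0)]; ring

lemma dChi_eq_high {x : ℝ} (hx : 1 ≤ x) : dChi x = expNegInvGlue (x - 3) * (6 - x) := by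
  unfold dChi
  rw [expNegInvGlue.zero_of_nonpos (by linarith : 1 - x ≤ 0)]; ring

lemma dChi_zero {x : ℝ} (hx : 1 ≤ x) (hx' : x ≤ 3) : dChi x = 0 := by
  rw [dChi_eq_low hx', expNegInvGlue.zero_of_nonpos (by linarith)]

lemma dChi_nonneg {x : ℝ} (hx : x ≤ 6) : 0 ≤ dChi x :=
  add_nonneg (expNegInvGlue.nonneg _) (mul_nonneg (expNegInvGlue.nonneg _) (by linarith))

lemma dChi_le (x : ℝ) : dChi x ≤ 3 := by
  rcases le_total x 3 with h | h
  · rw [dChi_eq_low h]; linarith [glue_le_one (1 - x)]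
  · rw [dChi_eq_high (by linarith)]
    have h1 := glue_le_one (x - 3)
    have h2 := expNegInvGlue.nonneg (x - 3)
    nlinarith

lemma dChi_anti {x y : ℝ} (hx : 6 ≤ x) (hxy : x ≤ y) : dChi y ≤ dChi x := by
  rw [dChi_eq_high (by linarith), dChi_eq_high (by linarith)]
  have h1 : expNegInvGlue (x - 3) ≤ expNegInvGlue (y - 3) := expNegInvGlue.monotone (by linarith)
  have h2 := expNegInvGlue.nonneg (x - 3)
  nlinarith

lemma dK_nonneg (t : ℝ) : 0 ≤ dK t := mul_nonneg (by norm_num) (expNegInvGlue.nonneg _)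

lemma dK_mono : Monotone dK := fun s t h =>
  mul_le_mul_of_nonneg_left (expNegInvGlue.monotone (by linarith)) (by norm_num)

lemma dK_zero {t : ℝ} (ht : t ≤ 1) : dK t = 0 := by
  unfold dK; rw [expNegInvGlue.zero_of_nonpos (by linarith)]; ring

/-- The defining function in coordinates. -/
def rr (z b a : ℂ) : ℝ :=
  ‖b - dCen (‖z‖ ^ 2)‖ ^ 2 - 1 - dChi (‖z‖ ^ 2) + dK (‖a‖ ^ 2) - dh a

/-- The defining function. -/
def rho (P : CE 3) : ℝ := rr (P 0) (P 1) (P 2)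

/-- The domain. -/
def DD : Set (CE 3) := {P | rho P < 0}

/-- Points by coordinates. -/
def pt (z b a : ℂ) : CE 3 := !₂[z, b, a]

@[simp] lemma pt_0 (z b a : ℂ) : pt z b a 0 = z := rfl
@[simp] lemma pt_1 (z b a : ℂ) : pt z b a 1 = b := rfl
@[simp] lemma pt_2 (z b a : ℂ) : pt z b a 2 = a := rfl

lemma pt_eta (P : CE 3) : pt (P 0) (P 1) (P 2) = P := by
  ext i; fin_cases i <;> rfl

lemma mem_DD {P : CE 3} : P ∈ DD ↔ rr (P 0) (P 1) (P 2) < 0 := Iff.rfl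

lemma pt_mem {z b a : ℂ} : pt z b a ∈ DD ↔ rr z b a < 0 := Iff.rfl

lemma continuous_pt {X : Type*} [TopologicalSpace X] {f g k : X → ℂ} (hf : Continuous f)
    (hg : Continuous g) (hk : Continuous k) : Continuous fun x => pt (f x) (g x) (k x) := by
  unfold pt
  refine (PiLp.continuous_toLp 2 _).comp ?_
  refine continuous_pi fun i => ?_
  fin_cases i <;> simpa

lemma dAl_smooth : ContDiff ℝ (⊤ : ℕ∞) dAl := by unfold dAl; fun_prop

lemma dCen_smooth : ContDiff ℝ (⊤ : ℕ∞) dCen := by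
  unfold dCen
  have : ContDiff ℝ (⊤ : ℕ∞) (fun x => ((dAl x : ℝ) : ℂ)) := Complex.ofRealCLM.contDiff.comp dAl_smooth
  fun_prop

lemma dCen_continuous : Continuous dCen := dCen_smooth.continuous

lemma glue_smooth : ContDiff ℝ (⊤ : ℕ∞) expNegInvGlue := expNegInvGlue.contDiff

lemma dChi_smooth : ContDiff ℝ (⊤ : ℕ∞) dChi := by
  unfold dChi
  have h := glue_smooth
  exact (h.comp (contDiff_const.sub contDiff_id)).add
    ((h.comp (contDiff_id.sub contDiff_const)).mul (contDiff_const.sub contDiff_id))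

lemma dK_smooth : ContDiff ℝ (⊤ : ℕ∞) dK :=
  contDiff_const.mul (glue_smooth.comp (contDiff_id.sub contDiff_const))

lemma rho_smooth : ContDiff ℝ (⊤ : ℕ∞) rho := by
  have h0 : ∀ i : Fin 3, ContDiff ℝ (⊤ : ℕ∞) (fun P : CE 3 => P i) := fun i => by fun_prop
  have hx : ContDiff ℝ (⊤ : ℕ∞) (fun P : CE 3 => ‖P 0‖ ^ 2) := (h0 0).norm_sq ℝ
  unfold rho rr
  exact (((((h0 1).sub (dCen_smooth.comp hx)).norm_sq ℝ).sub contDiff_const).sub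
    (dChi_smooth.comp hx)).add (dK_smooth.comp ((h0 2).norm_sq ℝ)) |>.sub (dh_smooth.comp (h0 2))

lemma rho_continuous : Continuous rho := rho_smooth.continuous

lemma DD_open : IsOpen DD := isOpen_lt rho_continuous continuous_const

lemma norm_dCen (x : ℝ) : ‖dCen x‖ = 1 := Complex.norm_exp_ofReal_mul_I _

lemma DD_bound {P : CE 3} (hP : P ∈ DD) : ‖P 0‖ < 4 ∧ ‖P 1‖ < 4 ∧ ‖P 2‖ < 2 := by
  rw [mem_DD] at hP
  unfold rr at hP
  have h1 := dChi_le (‖P 0‖ ^ 2)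
  have h2 := dK_nonneg (‖P 2‖ ^ 2)
  have h3 := dh_le (P 2)
  have h4 := sq_nonneg ‖P 1 - dCen (‖P 0‖ ^ 2)‖
  refine ⟨?_, ?_, ?_⟩
  · by_contra! h
    have h5 : 16 ≤ ‖P 0‖ ^ 2 := by nlinarith
    have h6 := dChi_anti (by norm_num : (6:ℝ) ≤ 16) h5
    rw [dChi_eq_high (by norm_num : (1:ℝ) ≤ 16)] at h6
    have h7 : (2:ℝ) / 3 ≤ expNegInvGlue (16 - 3) := glue_ge (by norm_num)
    generalize expNegInvGlue (16 - 3) = G at h6 h7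
    linarith
  · have h5 : ‖P 1 - dCen (‖P 0‖ ^ 2)‖ < 3 := by
      by_contra! h
      nlinarith
    have h6 := norm_le_norm_sub_add (P 1) (dCen (‖P 0‖ ^ 2))
    rw [norm_dCen] at h6
    linarith
  · by_contra! h
    have h5 : 4 ≤ ‖P 2‖ ^ 2 := by nlinarith
    have h6 := dK_mono h5
    have h7 : 2 / 3 ≤ expNegInvGlue (4 - 1) := glue_ge (by norm_num)
    have h8 : dK 4 = 100 * expNegInvGlue (4 - 1) := rfl
    generalize expNegInvGlue (4 - 1) = G at h7 h8
    linarith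

lemma DD_bounded : Bornology.IsBounded DD := by
  refine (isBounded_iff_forall_norm_le).2 ⟨10, fun P hP => ?_⟩
  obtain ⟨h1, h2, h3⟩ := DD_bound hP
  rw [EuclideanSpace.norm_eq, Fin.sum_univ_three, Real.sqrt_le_iff]
  refine ⟨by norm_num, ?_⟩
  nlinarith [norm_nonneg (P 0), norm_nonneg (P 1), norm_nonneg (P 2)]

lemma joined_curve {f : ℝ → CE 3} (hf : Continuous f) (h : ∀ t, 0 ≤ t → t ≤ 1 → f t ∈ DD) :
    JoinedIn DD (f 1) (f 0) :=
  (JoinedIn.ofLine hf.continuousOn rfl rfl (by rintro _ ⟨t, ht, rfl⟩; exact h t ht.1 ht.2)).symm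

lemma base_mem : pt 0 (dCen 0) 0 ∈ DD := by
  rw [pt_mem]; unfold rr
  have h1 := dChi_nonneg (by norm_num : (0:ℝ) ≤ 6)
  have h2 := dh_nonneg 0
  have h3 := dK_zero (by norm_num : (0:ℝ) ≤ 1)
  simp [h3]; linarith

lemma sq_mul_le {t y : ℝ} (h0 : 0 ≤ t) (h1 : t ≤ 1) : (t * y) ^ 2 ≤ y ^ 2 := by
  rw [mul_pow]
  have : t ^ 2 ≤ 1 := pow_le_one₀ h0 h1
  nlinarith [sq_nonneg y]

lemma norm_real_mul {t : ℝ} (h0 : 0 ≤ t) (z : ℂ) : ‖(t : ℂ) * z‖ = t * ‖z‖ := by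
  rw [norm_mul, Complex.norm_real, Real.norm_of_nonneg h0]

lemma join_small {z a : ℂ} (ha : ‖a‖ ≤ 1) (h : pt z (dCen (‖z‖ ^ 2)) a ∈ DD) :
    JoinedIn DD (pt z (dCen (‖z‖ ^ 2)) a) (pt 0 (dCen 0) 0) := by
  have hKz : ∀ t : ℝ, 0 ≤ t → t ≤ 1 → dK (‖(t : ℂ) * a‖ ^ 2) = 0 := by
    intro t h0 h1
    apply dK_zero
    rw [norm_real_mul h0]
    have := sq_mul_le (y := ‖a‖) h0 h1
    have : ‖a‖ ^ 2 ≤ 1 := pow_le_one₀ (norm_nonneg _) ha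
    linarith
  have hk : dK (‖a‖ ^ 2) = 0 := by simpa using hKz 1 (by norm_num) le_rfl
  have j1 : JoinedIn DD (pt z (dCen (‖z‖ ^ 2)) a) (pt 0 (dCen 0) a) := by
    have := joined_curve (f := fun t : ℝ => pt ((t : ℂ) * z) (dCen (‖(t : ℂ) * z‖ ^ 2)) a)
      (continuous_pt (by fun_prop) (dCen_continuous.comp (by fun_prop)) continuous_const) ?_
    · simpa using this
    · intro t h0 h1
      rw [pt_mem] at h ⊢
      unfold rr at h ⊢
      rw [hk] at h ⊢
      simp only [sub_self, norm_zero] at h ⊢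
      have h2 := dh_nonneg a
      rcases le_total (‖(t : ℂ) * z‖ ^ 2) 6 with h6 | h6
      · have := dChi_nonneg h6
        linarith
      · have := dChi_anti h6 (y := ‖z‖ ^ 2) (by rw [norm_real_mul h0]; exact sq_mul_le h0 h1)
        linarith
  refine j1.trans ?_
  have := joined_curve (f := fun t : ℝ => pt 0 (dCen 0) ((t : ℂ) * a))
      (continuous_pt (by fun_prop) continuous_const (by fun_prop)) ?_
  · simpa using this
  · intro t h0 h1
    rw [pt_mem]; unfold rr
    have h1 := dChi_nonneg (by norm_num : (0:ℝ) ≤ 6)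
    have h2 := dh_nonneg (t * a)
    rw [hKz t h0 ‹_›]
    simp; linarith

lemma join_base {P : CE 3} (hP : P ∈ DD) : JoinedIn DD P (pt 0 (dCen 0) 0) := by
  obtain ⟨z, b, a, rfl⟩ : ∃ z b a, P = pt z b a := ⟨_, _, _, (pt_eta P).symm⟩
  have j1 : JoinedIn DD (pt z b a) (pt z (dCen (‖z‖ ^ 2)) a) := by
    have := joined_curve
      (f := fun t : ℝ => pt z (dCen (‖z‖ ^ 2) + (t : ℂ) * (b - dCen (‖z‖ ^ 2))) a)
      (continuous_pt (by fun_prop) (by fun_prop) continuous_const) ?_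
    · simpa using this
    · intro t h0 h1
      rw [pt_mem] at hP ⊢
      unfold rr at hP ⊢
      rw [add_sub_cancel_left, norm_real_mul h0]
      have := sq_mul_le (y := ‖b - dCen (‖z‖ ^ 2)‖) h0 h1
      linarith
  have hQ := j1.mem.2
  refine j1.trans ?_
  rcases le_total ‖a‖ 1 with ha | ha
  · exact join_small ha hQ
  · have j2 : JoinedIn DD (pt z (dCen (‖z‖ ^ 2)) a) (pt z (dCen (‖z‖ ^ 2)) 0) := by
      have := joined_curve
        (f := fun t : ℝ => pt z (dCen (‖z‖ ^ 2)) ((t : ℂ) * a))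
        (continuous_pt (by fun_prop) (by fun_prop) (by fun_prop)) ?_
      · simpa using this
      · intro t h0 h1
        rw [pt_mem] at hQ ⊢
        unfold rr at hQ ⊢
        rw [dh_zero ha] at hQ
        rw [norm_real_mul h0]
        have h2 := dK_mono (sq_mul_le (y := ‖a‖) h0 h1)
        have h3 := dh_nonneg (t * a)
        linarith
    exact j2.trans (join_small (by simp) j2.mem.2)

lemma DD_connected : IsConnected DD := by
  refine IsPathConnected.isConnected ⟨_, base_mem, fun {_} hP => (join_base hP).symm⟩

lemma rho_deriv {P v : CE 3} (h : fderiv ℝ rho P = 0) :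
    HasDerivAt (fun t : ℝ => rho (P + t • v)) 0 0 := by
  have h1 : HasFDerivAt rho (0 : CE 3 →L[ℝ] ℝ) (P + (0:ℝ) • v) := by
    rw [zero_smul, add_zero, ← h]
    exact ((rho_smooth.differentiable (by simp)) P).hasFDerivAt
  have h2 : HasDerivAt (fun t : ℝ => P + t • v) v 0 := by
    simpa using ((hasDerivAt_id (0:ℝ)).smul_const v).const_add P
  have h3 := h1.comp_hasDerivAt 0 h2
  rw [zero_apply] at h3
  exact h3

lemma sq_deriv (y : ℝ) : HasDerivAt (fun t : ℝ => (1 + t) ^ 2 * y) (2 * y) 0 := by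
  have h := (((hasDerivAt_id (0:ℝ)).const_add 1).pow 2).mul_const y
  simpa using h

lemma norm_sq_one_add (t : ℝ) (w : ℂ) : ‖w + t * w‖ ^ 2 = (1 + t) ^ 2 * ‖w‖ ^ 2 := by
  have : w + t * w = ((1 + t : ℝ) : ℂ) * w := by push_cast; ring
  rw [this, norm_mul, mul_pow, Complex.norm_real, Real.norm_eq_abs, sq_abs]

lemma rho_regular (P : CE 3) (hP : rho P = 0) : fderiv ℝ rho P ≠ 0 := by
  intro h0
  obtain ⟨z, b, a, rfl⟩ : ∃ z b a, P = pt z b a := ⟨_, _, _, (pt_eta P).symm⟩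
  have hline : ∀ (t : ℝ) (z' b' a' : ℂ), pt z b a + t • pt z' b' a' =
      pt (z + t * z') (b + t * b') (a + t * a') := by
    intro t z' b' a'
    ext i; fin_cases i <;> simp [pt]
  by_cases hb : b = dCen (‖z‖ ^ 2)
  · have hP2 : rr z b a = 0 := hP
    unfold rr at hP2
    rw [← hb] at hP2
    simp only [sub_self, norm_zero] at hP2
    by_cases hx : 1 + dChi (‖z‖ ^ 2) ≤ 0
    · have hx6 : 6 < ‖z‖ ^ 2 := by
        by_contra! h
        have := dChi_nonneg h
        linarith
      have h1 := rho_deriv (v := pt z 0 0) h0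
      set x := ‖z‖ ^ 2 with hxd
      have h2 : ∃ c, c < 0 ∧ HasDerivAt dChi c x := by
        obtain ⟨c, hc, hcd⟩ := glue_hasDeriv (by linarith : 0 < x - 3)
        refine ⟨c * (6 - x) + expNegInvGlue (x - 3) * (-1), ?_, ?_⟩
        · have := expNegInvGlue.pos_of_pos (by linarith : 0 < x - 3)
          nlinarith
        · have h3 : HasDerivAt (fun y : ℝ => expNegInvGlue (y - 3)) c x :=
            HasDerivAt.comp_sub_const x 3 hcd
          have h4 : HasDerivAt (fun y : ℝ => 6 - y) (-1) x := (hasDerivAt_id x).const_sub 6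
          refine (h3.mul h4).congr_of_eventuallyEq ?_
          filter_upwards [lt_mem_nhds (by linarith : 1 < x)] with y hy
          exact dChi_eq_high hy.le
      obtain ⟨c, hc, hcd⟩ := h2
      have h3 : HasDerivAt (fun t : ℝ => dChi ((1 + t) ^ 2 * x)) (c * (2 * x)) 0 := by
        refine HasDerivAt.comp (h₂ := dChi) (h := fun t : ℝ => (1 + t) ^ 2 * x) 0 ?_ (sq_deriv x)
        simpa using hcd
      have h4 : HasDerivAt (fun t : ℝ => ‖b - dCen ((1 + t) ^ 2 * x)‖ ^ 2) (c * (2 * x)) 0 := by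
        have h5 := (h1.add h3).add_const (1 - dK (‖a‖ ^ 2) + dh a)
        rw [zero_add] at h5
        refine h5.congr_of_eventuallyEq (Eventually.of_forall fun t => ?_)
        simp only [Pi.add_apply, hline]
        change _ = rr _ _ _ + _ + _
        unfold rr
        simp only [pt_0, pt_1, pt_2]
        rw [norm_sq_one_add]
        simp only [mul_zero, add_zero]
        ring
      have h5 : IsLocalMin (fun t : ℝ => ‖b - dCen ((1 + t) ^ 2 * x)‖ ^ 2) 0 := by
        refine Eventually.of_forall fun t => ?_
        simp only [add_zero, one_pow, one_mul, ← hb, sub_self, norm_zero]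
        change (0:ℝ) ^ 2 ≤ ‖_‖ ^ 2
        rw [zero_pow two_ne_zero]
        positivity
      have := h5.hasDerivAt_eq_zero h4
      nlinarith
    · push Not at hx
      have hK : 0 < dK (‖a‖ ^ 2) := by
        have := dh_nonneg a
        norm_num at hP2
        linarith
      have ha : 1 < ‖a‖ ^ 2 := by
        by_contra! h
        rw [dK_zero h] at hK
        exact lt_irrefl _ hK
      have h1 := rho_deriv (v := pt 0 0 a) h0
      obtain ⟨c, hc, hcd⟩ := glue_hasDeriv (by linarith : 0 < ‖a‖ ^ 2 - 1)
      have h2 : HasDerivAt dK (100 * c) (‖a‖ ^ 2) :=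
        (HasDerivAt.comp_sub_const (‖a‖ ^ 2) 1 hcd).const_mul 100
      have h3 : HasDerivAt (fun t : ℝ => dK ((1 + t) ^ 2 * ‖a‖ ^ 2)) (100 * c * (2 * ‖a‖ ^ 2)) 0 := by
        refine HasDerivAt.comp (h₂ := dK) (h := fun t : ℝ => (1 + t) ^ 2 * ‖a‖ ^ 2) 0 ?_ (sq_deriv _)
        simpa using h2
      have h4 : HasDerivAt (fun t : ℝ => rho (pt z b a + t • pt 0 0 a))
          (100 * c * (2 * ‖a‖ ^ 2)) 0 := by
        refine (h3.add_const (-1 - dChi (‖z‖ ^ 2))).congr_of_eventuallyEq ?_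
        have hct : ContinuousAt (fun t : ℝ => (1 + t) ^ 2 * ‖a‖ ^ 2) 0 := (sq_deriv _).continuousAt
        have hev := hct.eventually_const_lt (u := 1) (by simpa using ha)
        filter_upwards [hev] with t ht
        rw [hline]
        change rr _ _ _ = _
        unfold rr
        simp only [pt_0, pt_1, pt_2]
        rw [← norm_sq_one_add] at ht ⊢
        rw [dh_zero (a := a + t * a)]
        · simp only [mul_zero, add_zero, ← hb, sub_self, norm_zero]
          ring
        · by_contra! h
          nlinarith [norm_nonneg (a + t * a)]
      have := h4.unique h1
      nlinarith
  · have h1 := rho_deriv (v := pt 0 (b - dCen (‖z‖ ^ 2)) 0) h0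
    have h2 : HasDerivAt (fun t : ℝ => rho (pt z b a + t • pt 0 (b - dCen (‖z‖ ^ 2)) 0))
        (2 * ‖b - dCen (‖z‖ ^ 2)‖ ^ 2) 0 := by
      have h3 := (sq_deriv (‖b - dCen (‖z‖ ^ 2)‖ ^ 2)).add_const
        (-1 - dChi (‖z‖ ^ 2) + dK (‖a‖ ^ 2) - dh a)
      refine h3.congr_of_eventuallyEq (Eventually.of_forall fun t => ?_)
      change rho _ = _
      rw [hline]
      beta_reduce
      rw [← norm_sq_one_add]
      change rr _ _ _ = _
      unfold rr
      simp only [pt_0, pt_1, pt_2, mul_zero, add_zero]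
      rw [add_sub_right_comm]
      ring
    have h4 := h2.unique h1
    have : 0 < ‖b - dCen (‖z‖ ^ 2)‖ := norm_pos_iff.2 (sub_ne_zero.2 hb)
    nlinarith

lemma frontier_DD {P : CE 3} (hP : P ∈ frontier DD) : rho P = 0 :=
  frontier_lt_subset_eq rho_continuous continuous_const hP

lemma DD_smooth : HasSmoothBoundary DD := smooth_bdry (by norm_num) rho_smooth rho_regular

lemma DD_local {P : CE 3} (hP : P ∈ frontier DD) : ∃ U, IsOpen U ∧ P ∈ U ∧ IsSDomain (DD ∩ U) :=
  local_sdomain rho_continuous (rho_smooth.contDiffAt.hasStrictFDerivAt (by simp)) (frontier_DD hP)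
    (rho_regular P (frontier_DD hP))

end domain

section ufun

/-- The truncated logarithms. -/
def tj (j : ℕ) (a : ℂ) : ℝ := cj j * Real.log (max (‖a - aj j‖ / 10) (dj j))

lemma tj_arg_pos (j : ℕ) (a : ℂ) : 0 < max (‖a - aj j‖ / 10) (dj j) :=
  (dj_pos j).trans_le (le_max_right _ _)

lemma tj_continuous (j : ℕ) : Continuous (tj j) := by
  unfold tj
  refine continuous_const.mul (Continuous.log (by fun_prop) fun a => (tj_arg_pos j a).ne')

lemma tj_nonpos (j : ℕ) {a : ℂ} (ha : ‖a‖ < 2) : tj j a ≤ 0 := by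
  unfold tj
  refine mul_nonpos_of_nonneg_of_nonpos (cj_pos j).le (Real.log_nonpos (tj_arg_pos j a).le ?_)
  refine max_le ?_ (dj_lt j).le
  have h1 := norm_sub_le a (aj j)
  have h2 : ‖(aj j : ℂ)‖ ≤ 1 / 2 := by
    rw [Complex.norm_real, Real.norm_of_nonneg (aj_pos j).le]; exact aj_le j
  linarith

lemma tj_low (j : ℕ) {a : ℂ} (ha : ‖a - aj j‖ ≤ 10 * dj j) : tj j a = -8 := by
  unfold tj
  rw [max_eq_right (by linarith), dj, Real.log_exp]
  have := (cj_pos j).ne'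
  field_simp

lemma tj_min (j : ℕ) (a : ℂ) : -8 ≤ tj j a := by
  have h : cj j * Real.log (dj j) = -8 := by
    rw [dj, Real.log_exp]
    have := (cj_pos j).ne'
    field_simp
  rw [← h]
  exact mul_le_mul_of_nonneg_left (Real.log_le_log (dj_pos j) (le_max_right _ _)) (cj_pos j).le

lemma tj_zero (j : ℕ) : -(1 / 2) ^ (j + 2) ≤ tj j 0 := by
  have h1 : cj j * Real.log (aj j / 10) = -(1 / 2) ^ (j + 2) := by
    have h2 : Real.log (aj j / 10) = - Real.log (10 / aj j) := by
      rw [← Real.log_inv, inv_div]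
    have := (log_aj_pos j).ne'
    rw [h2, cj]
    field_simp
  rw [← h1]
  refine mul_le_mul_of_nonneg_left (Real.log_le_log ?_ ?_) (cj_pos j).le
  · have := aj_pos j
    positivity
  · refine le_max_of_le_left ?_
    rw [zero_sub, norm_neg, Complex.norm_real, Real.norm_of_nonneg (aj_pos j).le]

lemma tj_hsup (j : ℕ) (P : CE 3) : HSup (fun Q : CE 3 => tj j (Q 2)) P := by
  rcases le_or_gt ‖P 2 - aj j‖ (10 * dj j) with h | h
  · refine HSup.of_min (Eventually.of_forall fun Q => ?_)
    rw [tj_low j h]; exact tj_min j _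
  · have hne : P 2 - aj j ≠ 0 := by
      intro h0
      rw [h0, norm_zero] at h
      linarith [dj_pos j]
    have hpos : 0 < ‖P 2 - aj j‖ := norm_pos_iff.2 hne
    have hP : tj j (P 2) = cj j * Real.log (‖P 2 - aj j‖ / 10) := by
      unfold tj
      rw [max_eq_left (by linarith)]
    have hq : ContinuousAt (fun Q : CE 3 => (Q 2 - aj j) / (P 2 - aj j)) P := by fun_prop
    have hslit : ∀ᶠ Q : CE 3 in 𝓝 P, (Q 2 - aj j) / (P 2 - aj j) ∈ Complex.slitPlane := by
      refine hq.eventually (Complex.isOpen_slitPlane.mem_nhds ?_)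
      beta_reduce
      rw [div_self hne]; simp
    refine ⟨fun Q => (cj j : ℂ) * (Complex.log ((Q 2 - aj j) / (P 2 - aj j)) +
      (Real.log (‖P 2 - aj j‖ / 10) : ℝ)), ?_, ?_, ?_⟩
    · filter_upwards [hslit] with Q hQ
      have h1 : DifferentiableAt ℂ (fun Q : CE 3 => (Q 2 - aj j) / (P 2 - aj j)) Q := by fun_prop
      exact ((h1.clog hQ).add_const _).const_mul _
    · beta_reduce
      rw [div_self hne, hP]; simp
    · filter_upwards [hslit] with Q hQ
      have hQ0 : Q 2 - aj j ≠ 0 := by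
        intro h0
        rw [h0, zero_div] at hQ
        simp at hQ
      have hQpos : 0 < ‖Q 2 - aj j‖ := norm_pos_iff.2 hQ0
      rw [Complex.re_ofReal_mul, Complex.add_re, Complex.log_re, Complex.ofReal_re, norm_div,
        ← Real.log_mul (by positivity) (by positivity)]
      have : ‖Q 2 - aj j‖ / ‖P 2 - aj j‖ * (‖P 2 - aj j‖ / 10) = ‖Q 2 - aj j‖ / 10 := by
        field_simp
      rw [this]
      exact mul_le_mul_of_nonneg_left (Real.log_le_log (by positivity) (le_max_left _ _))
        (cj_pos j).le

/-- Partial sums. -/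
def FN (N : ℕ) (a : ℂ) : ℝ := ∑ j ∈ Finset.range N, tj j a

lemma FN_continuous (N : ℕ) : Continuous (FN N) := by
  unfold FN
  exact continuous_finsetSum _ fun j _ => tj_continuous j

lemma FN_nonpos (N : ℕ) {a : ℂ} (ha : ‖a‖ < 2) : FN N a ≤ 0 :=
  Finset.sum_nonpos fun j _ => tj_nonpos j ha

lemma FN_succ (N : ℕ) {a : ℂ} (ha : ‖a‖ < 2) : FN (N + 1) a ≤ FN N a := by
  unfold FN
  rw [Finset.sum_range_succ]
  linarith [tj_nonpos N ha]

lemma FN_low {N j : ℕ} (hj : j < N) {a : ℂ} (ha : ‖a‖ < 2) (h : ‖a - aj j‖ ≤ 10 * dj j) :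
    FN N a ≤ -8 := by
  unfold FN
  rw [← tj_low j h, ← Finset.add_sum_erase _ _ (Finset.mem_range.2 hj)]
  have : ∑ x ∈ (Finset.range N).erase j, tj x a ≤ 0 := Finset.sum_nonpos fun j _ => tj_nonpos j ha
  linarith

lemma FN_zero (N : ℕ) : -(1 / 2) ≤ FN N 0 := by
  have h1 : ∀ N : ℕ, -(1 / 2) + (1 / 2 : ℝ) ^ (N + 1) ≤ FN N 0 := by
    intro N
    induction N with
    | zero => simp [FN]
    | succ k ih =>
      have h2 : FN (k + 1) 0 = FN k 0 + tj k 0 := by unfold FN; rw [Finset.sum_range_succ]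
      rw [h2]
      have h3 := tj_zero k
      have h4 : (1 / 2 : ℝ) ^ (k + 1 + 1) = (1 / 2) ^ (k + 1) - (1 / 2) ^ (k + 2) := by ring
      linarith
  have := h1 N
  have h2 : (0:ℝ) ≤ (1 / 2) ^ (N + 1) := by positivity
  linarith

lemma FN_hsup (N : ℕ) (P : CE 3) : HSup (fun Q : CE 3 => FN N (Q 2)) P :=
  HSup.sum (f := fun j (Q : CE 3) => tj j (Q 2)) _ fun j _ => tj_hsup j P

/-- The multivalued argument. -/
def be (P : CE 3) : ℝ :=
  dAl (‖P 0‖ ^ 2) + Complex.arg (P 1 * Complex.exp (-((dAl (‖P 0‖ ^ 2) : ℝ) * Complex.I)))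

/-- The first region. -/
def WW : Set (CE 3) := {P | ‖P 1 - dCen (‖P 0‖ ^ 2)‖ ^ 2 < 1 + dChi (‖P 0‖ ^ 2)}

lemma cont_x : Continuous fun P : CE 3 => ‖P 0‖ ^ 2 := by fun_prop

lemma WW_open : IsOpen WW := by
  refine isOpen_lt ?_ (continuous_const.add (dChi_smooth.continuous.comp cont_x))
  have := dCen_continuous.comp cont_x
  have h1 : Continuous fun P : CE 3 => P 1 := by fun_prop
  exact (h1.sub this).norm.pow 2

lemma be_re {P : CE 3} (hP : P ∈ WW) (h1 : 1 ≤ ‖P 0‖ ^ 2) (h3 : ‖P 0‖ ^ 2 ≤ 3) :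
    0 < (P 1 * Complex.exp (-((dAl (‖P 0‖ ^ 2) : ℝ) * Complex.I))).re := by
  have h : ‖P 1 - dCen (‖P 0‖ ^ 2)‖ ^ 2 < 1 + dChi (‖P 0‖ ^ 2) := hP
  rw [dChi_zero h1 h3, add_zero] at h
  set E := Complex.exp (-((dAl (‖P 0‖ ^ 2) : ℝ) * Complex.I)) with hE
  have hEn : ‖E‖ = 1 := by
    rw [hE, Complex.norm_exp]; simp
  have hEc : dCen (‖P 0‖ ^ 2) * E = 1 := by
    rw [hE, dCen, ← Complex.exp_add]; simp
  have h4 : ‖P 1 * E - 1‖ < 1 := by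
    have : P 1 * E - 1 = (P 1 - dCen (‖P 0‖ ^ 2)) * E := by rw [sub_mul, hEc]
    rw [this, norm_mul, hEn, mul_one]
    by_contra! h5
    nlinarith
  have h5 := (abs_lt.1 ((Complex.abs_re_le_norm _).trans_lt h4)).1
  rw [Complex.sub_re, Complex.one_re] at h5
  linarith

lemma be_bound {P : CE 3} (hP : P ∈ WW) (h1 : 1 ≤ ‖P 0‖ ^ 2) (h3 : ‖P 0‖ ^ 2 ≤ 3) :
    dAl (‖P 0‖ ^ 2) - 1.58 < be P ∧ be P < dAl (‖P 0‖ ^ 2) + 1.58 := by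
  have h := be_re hP h1 h3
  have h2 := abs_lt.1 (Complex.abs_arg_lt_pi_div_two_iff.2 (Or.inl h))
  have h4 := Real.pi_lt_d2
  unfold be
  constructor <;> linarith [h2.1, h2.2]

lemma be_contAt {P : CE 3} (hP : P ∈ WW) (h1 : 1 ≤ ‖P 0‖ ^ 2) (h3 : ‖P 0‖ ^ 2 ≤ 3) :
    ContinuousAt be P := by
  unfold be
  have hal : Continuous fun P : CE 3 => dAl (‖P 0‖ ^ 2) := dAl_smooth.continuous.comp cont_x
  refine hal.continuousAt.add ?_
  have hin : Continuous fun P : CE 3 =>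
      P 1 * Complex.exp (-((dAl (‖P 0‖ ^ 2) : ℝ) * Complex.I)) := by fun_prop
  exact ContinuousAt.comp (g := Complex.arg)
    (f := fun P : CE 3 => P 1 * Complex.exp (-((dAl (‖P 0‖ ^ 2) : ℝ) * Complex.I)))
    (Complex.continuousAt_arg (Or.inl (be_re hP h1 h3))) hin.continuousAt

lemma exp_arg (w : ℂ) : (‖w‖ : ℂ) * Complex.exp ((Complex.arg w : ℝ) * Complex.I) = w :=
  Complex.norm_mul_exp_arg_mul_I w

lemma exp_be (P : CE 3) : (‖P 1‖ : ℂ) * Complex.exp ((be P : ℝ) * Complex.I) = P 1 := by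
  set E := Complex.exp (-((dAl (‖P 0‖ ^ 2) : ℝ) * Complex.I)) with hE
  have hEn : ‖E‖ = 1 := by
    rw [hE, Complex.norm_exp]; simp
  have h := exp_arg (P 1 * E)
  rw [norm_mul, hEn, mul_one] at h
  have h2 : be P = dAl (‖P 0‖ ^ 2) + Complex.arg (P 1 * E) := rfl
  rw [h2, Complex.ofReal_add, add_mul, Complex.exp_add, mul_left_comm, h, hE, mul_left_comm,
    ← Complex.exp_add]
  simp

lemma be_hsup {P : CE 3} (hP : P ∈ WW) (h1 : 1 ≤ ‖P 0‖ ^ 2) (h3 : ‖P 0‖ ^ 2 ≤ 3) :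
    HSup be P := by
  have hb0 : P 1 ≠ 0 := by
    intro h0
    have := be_re hP h1 h3
    rw [h0, zero_mul] at this
    simp at this
  have hq : ContinuousAt (fun Q : CE 3 => Q 1 / P 1) P := by fun_prop
  have h11 : P 1 / P 1 ∈ Complex.slitPlane := by rw [div_self hb0]; simp
  have hslit : ∀ᶠ Q : CE 3 in 𝓝 P, Q 1 / P 1 ∈ Complex.slitPlane :=
    hq.eventually (Complex.isOpen_slitPlane.mem_nhds h11)
  have hcd : ContinuousAt (fun Q : CE 3 => |be Q - (be P + Complex.arg (Q 1 / P 1))|) P := by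
    refine ((be_contAt hP h1 h3).sub (continuousAt_const.add ?_)).abs
    exact ContinuousAt.comp (g := Complex.arg) (f := fun Q : CE 3 => Q 1 / P 1)
      (Complex.continuousAt_arg h11) hq
  have hd := hcd.eventually_lt_const (u := 1) (by simp [div_self hb0])
  have heq : ∀ᶠ Q : CE 3 in 𝓝 P, be Q = be P + Complex.arg (Q 1 / P 1) := by
    filter_upwards [hslit, hd] with Q hQ hQd
    have hQ0 : Q 1 ≠ 0 := by
      intro h0
      rw [h0, zero_div] at hQ
      simp at hQ
    set d := be Q - (be P + Complex.arg (Q 1 / P 1)) with hdd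
    have hn1 : (‖Q 1‖ : ℂ) ≠ 0 := by simpa using hQ0
    have hn2 : (‖P 1‖ : ℂ) ≠ 0 := by simpa using hb0
    have e1 := exp_be Q
    have e2 := exp_be P
    have e3 := exp_arg (Q 1 / P 1)
    rw [norm_div, Complex.ofReal_div] at e3
    have e4 : Complex.exp ((d : ℝ) * Complex.I) = 1 := by
      have e5 : ((be Q : ℝ) : ℂ) * Complex.I = (d : ℝ) * Complex.I + ((be P : ℝ) * Complex.I +
        (Complex.arg (Q 1 / P 1) : ℝ) * Complex.I) := by rw [hdd]; push_cast; ring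
      rw [e5, Complex.exp_add, Complex.exp_add] at e1
      have e6 : (‖Q 1‖ : ℂ) * (Complex.exp ((be P : ℝ) * Complex.I) *
          Complex.exp ((Complex.arg (Q 1 / P 1) : ℝ) * Complex.I)) = Q 1 := by
        have e7 : (‖Q 1‖ : ℂ) * (Complex.exp ((be P : ℝ) * Complex.I) *
          Complex.exp ((Complex.arg (Q 1 / P 1) : ℝ) * Complex.I)) =
          ((‖P 1‖ : ℂ) * Complex.exp ((be P : ℝ) * Complex.I)) * ((‖Q 1‖ : ℂ) / (‖P 1‖ : ℂ) *
          Complex.exp ((Complex.arg (Q 1 / P 1) : ℝ) * Complex.I)) := by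
          field_simp
        rw [e7, e2, e3]; field_simp
      rw [mul_left_comm, e6] at e1
      exact mul_right_cancel₀ hQ0 (e1.trans (one_mul _).symm)
    obtain ⟨k, hk⟩ := Complex.exp_eq_one_iff.1 e4
    have hk2 : d = k * (2 * π) := by
      have h5 : ((d : ℝ) : ℂ) * Complex.I = ((k * (2 * π) : ℝ) : ℂ) * Complex.I := by
        rw [hk]; push_cast; ring
      exact_mod_cast mul_right_cancel₀ Complex.I_ne_zero h5
    have hk0 : k = 0 := by
      by_contra hk0
      have h6 : (1:ℝ) ≤ |(k:ℝ)| := by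
        rw [← Int.cast_abs]; exact_mod_cast Int.one_le_abs hk0
      rw [hk2, abs_mul, abs_of_pos (by positivity : 0 < 2 * π)] at hQd
      nlinarith [Real.pi_gt_three]
    rw [hk0] at hk2
    simp at hk2
    linarith
  refine ⟨fun Q => (be P : ℂ) + (-Complex.I) * Complex.log (Q 1 / P 1), ?_, ?_, ?_⟩
  · filter_upwards [hslit] with Q hQ
    have h1 : DifferentiableAt ℂ (fun Q : CE 3 => Q 1 / P 1) Q := by fun_prop
    exact ((h1.clog hQ).const_mul _).const_add _
  · beta_reduce
    rw [div_self hb0]; simp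
  · filter_upwards [heq] with Q hQ
    rw [hQ]
    simp [Complex.log_im]

/-- The angular part. -/
def UU (P : CE 3) : ℝ :=
  if ‖P 0‖ ^ 2 ≤ 1 then 0 else if ‖P 0‖ ^ 2 ≤ 2 then max 0 (be P - 3) else
    if ‖P 0‖ ^ 2 < 3 then be P - 3 else -10

lemma UU_le (P : CE 3) : UU P ≤ 6 := by
  have h : be P ≤ 9 := by
    unfold be dAl
    have := Complex.arg_le_pi (P 1 * Complex.exp (-((5 - 5 * (‖P 0‖ ^ 2 - 2) ^ 2 : ℝ) * Complex.I)))
    nlinarith [Real.pi_le_four, sq_nonneg (‖P 0‖ ^ 2 - 2)]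
  unfold UU
  split_ifs
  · norm_num
  · exact max_le (by norm_num) (by linarith)
  · linarith
  · norm_num

/-- The approximations. -/
def uN (N : ℕ) (P : CE 3) : ℝ := max 0 (FN N (P 2) + 1 + UU P)

/-- Good property. -/
def Good (f : CE 3 → ℝ) (P : CE 3) : Prop := ContinuousAt f P ∧ HSup f P

lemma Good.congr {f g : CE 3 → ℝ} {P : CE 3} (h : Good f P) (e : f =ᶠ[𝓝 P] g) : Good g P :=
  ⟨h.1.congr e, h.2.congr e⟩

lemma Good.const (c : ℝ) (P : CE 3) : Good (fun _ => c) P := ⟨continuousAt_const, HSup.const c⟩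

lemma Good.add {f g : CE 3 → ℝ} {P : CE 3} (h : Good f P) (h' : Good g P) :
    Good (fun Q => f Q + g Q) P := ⟨h.1.add h'.1, h.2.add h'.2⟩

lemma Good.max {f g : CE 3 → ℝ} {P : CE 3} (h : Good f P) (h' : Good g P) :
    Good (fun Q => max (f Q) (g Q)) P := ⟨h.1.sup h'.1, h.2.max h'.2⟩

lemma FN_good (N : ℕ) (P : CE 3) : Good (fun Q => FN N (Q 2)) P :=
  ⟨((FN_continuous N).comp (by fun_prop : Continuous fun Q : CE 3 => Q 2)).continuousAt, FN_hsup N P⟩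

lemma be_good {P : CE 3} (hP : P ∈ WW) (h1 : 1 ≤ ‖P 0‖ ^ 2) (h3 : ‖P 0‖ ^ 2 ≤ 3) : Good be P :=
  ⟨be_contAt hP h1 h3, be_hsup hP h1 h3⟩

lemma uN_good_W (N : ℕ) {P : CE 3} (hP : P ∈ WW) (ha : ‖P 2‖ < 2) : Good (uN N) P := by
  have hW : ∀ᶠ Q in 𝓝 P, Q ∈ WW := WW_open.mem_nhds hP
  have hlt : ∀ c, ‖P 0‖ ^ 2 < c → ∀ᶠ Q : CE 3 in 𝓝 P, ‖Q 0‖ ^ 2 < c := fun c hc =>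
    (cont_x.tendsto P).eventually_lt_const (u := c) hc
  have hgt : ∀ c, c < ‖P 0‖ ^ 2 → ∀ᶠ Q : CE 3 in 𝓝 P, c < ‖Q 0‖ ^ 2 := fun c hc =>
    (cont_x.tendsto P).eventually_const_lt (u := c) hc
  have hF1 := (FN_good N P).add (Good.const 1 P)
  by_cases c1 : ‖P 0‖ ^ 2 < 1.1
  · refine ((Good.const 0 P).max (hF1.add (Good.const 0 P))).congr ?_
    filter_upwards [hW, hlt _ c1] with Q hQ hx
    have : UU Q = 0 := by
      unfold UU
      split_ifs with h1 h2 h3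
      · rfl
      · push Not at h1
        have := (be_bound hQ h1.le (by linarith)).2
        unfold dAl at this
        refine max_eq_left ?_
        nlinarith
      all_goals (exfalso; linarith)
    simp only [uN, this]
  by_cases c2 : ‖P 0‖ ^ 2 < 2.1
  · have hb := be_good hP (by linarith) (by linarith)
    refine ((Good.const 0 P).max (hF1.add ((Good.const 0 P).max (hb.add (Good.const (-3) P))))).congr ?_
    filter_upwards [hW, hlt _ c2, hgt 1 (by linarith)] with Q hQ hx hx'
    have : UU Q = max 0 (be Q + -3) := by
      unfold UU
      split_ifs with h1 h2 h3
      · exfalso; linarith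
      · rfl
      · push Not at h2
        have := (be_bound hQ hx'.le (by linarith)).1
        unfold dAl at this
        rw [max_eq_right]
        · ring
        · nlinarith
      · exfalso; linarith
    simp only [uN, this]
  by_cases c3 : ‖P 0‖ ^ 2 < 3
  · have hb := be_good hP (by linarith) (by linarith)
    refine ((Good.const 0 P).max (hF1.add (hb.add (Good.const (-3) P)))).congr ?_
    filter_upwards [hlt _ c3, hgt 2 (by linarith)] with Q hx hx'
    have : UU Q = be Q + -3 := by
      unfold UU
      rw [if_neg (by linarith), if_neg (by linarith), if_pos hx]; ring
    simp only [uN, this]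
  · refine (Good.const 0 P).congr ?_
    have h2 : ∀ᶠ Q : CE 3 in 𝓝 P, ‖Q 2‖ < 2 :=
      ((by fun_prop : Continuous fun Q : CE 3 => ‖Q 2‖).tendsto P).eventually_lt_const (u := 2) ha
    filter_upwards [hW, h2, hgt 2.96 (by linarith)] with Q hQ hQ2 hx
    have hF := FN_nonpos N hQ2
    have : UU Q ≤ -1 := by
      unfold UU
      rw [if_neg (by linarith), if_neg (by linarith)]
      split_ifs with h1
      · have := (be_bound hQ (by linarith) h1.le).2
        unfold dAl at this
        nlinarith
      · norm_num
    rw [uN, max_eq_left (by linarith)]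

lemma uN_zero {N j : ℕ} (hj : j < N) {P : CE 3} (ha : ‖P 2‖ < 2) (h : ‖P 2 - aj j‖ < 10 * dj j) :
    uN N P = 0 := by
  have := FN_low hj ha h.le
  have h2 := UU_le P
  rw [uN, max_eq_left (by linarith)]

/-- The good region. -/
def GG (N : ℕ) : Set (CE 3) := DD ∩ (WW ∪ ⋃ j : ℕ, ⋃ _ : j < N, {P : CE 3 | ‖P 2 - aj j‖ < 10 * dj j})

lemma GG_open (N : ℕ) : IsOpen (GG N) :=
  DD_open.inter (WW_open.union (isOpen_iUnion fun j => isOpen_iUnion fun _ =>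
    isOpen_lt (by fun_prop) continuous_const))

lemma GG_mono : Monotone GG := by
  intro N M h P hP
  refine ⟨hP.1, hP.2.imp id fun h2 => ?_⟩
  simp only [Set.mem_iUnion] at h2 ⊢
  obtain ⟨j, hj, h3⟩ := h2
  exact ⟨j, hj.trans_le h, h3⟩

lemma GG_cover {P : CE 3} (hP : P ∈ DD) : ∃ N, P ∈ GG N := by
  by_cases hW : P ∈ WW
  · exact ⟨0, hP, Or.inl hW⟩
  · have h1 : 1 + dChi (‖P 0‖ ^ 2) ≤ ‖P 1 - dCen (‖P 0‖ ^ 2)‖ ^ 2 := not_lt.1 hW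
    have h2 : rr (P 0) (P 1) (P 2) < 0 := hP
    unfold rr at h2
    have h3 := dK_nonneg (‖P 2‖ ^ 2)
    obtain ⟨_, j, hj⟩ := mem_dS (a := P 2) (by linarith)
    refine ⟨j + 1, hP, Or.inr ?_⟩
    simp only [Set.mem_iUnion]
    exact ⟨j, by omega, hj⟩

lemma uN_good {N M : ℕ} (hN : N ≤ M) {P : CE 3} (hP : P ∈ GG N) : Good (uN M) P := by
  have ha := (DD_bound hP.1).2.2
  rcases hP.2 with h | h
  · exact uN_good_W M h ha
  · simp only [Set.mem_iUnion] at h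
    obtain ⟨j, hj, h3⟩ := h
    refine (Good.const 0 P).congr ?_
    have h2 : ∀ᶠ Q : CE 3 in 𝓝 P, ‖Q 2‖ < 2 :=
      ((by fun_prop : Continuous fun Q : CE 3 => ‖Q 2‖).tendsto P).eventually_lt_const (u := 2) ha
    have h4 : ∀ᶠ Q : CE 3 in 𝓝 P, ‖Q 2 - aj j‖ < 10 * dj j :=
      ((by fun_prop : Continuous fun Q : CE 3 => ‖Q 2 - aj j‖).tendsto P).eventually_lt_const h3
    filter_upwards [h2, h4] with Q hQ hQ'
    exact (uN_zero (hj.trans_le hN) hQ hQ').symm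

lemma uN_nonneg (N : ℕ) (P : CE 3) : 0 ≤ uN N P := le_max_left _ _

lemma uN_le (N : ℕ) {P : CE 3} (hP : P ∈ DD) : uN N P ≤ 7 := by
  refine max_le (by norm_num) ?_
  have h1 := FN_nonpos N (DD_bound hP).2.2
  have h2 := UU_le P
  linarith

lemma uN_anti {P : CE 3} (hP : P ∈ DD) : Antitone fun N => uN N P := by
  refine antitone_nat_of_succ_le fun N => ?_
  unfold uN
  refine max_le_max le_rfl ?_
  linarith [FN_succ N (DD_bound hP).2.2]

/-- The limit function. -/
def uu (P : CE 3) : ℝ := ⨅ N, uN N P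

lemma uN_bdd (P : CE 3) : BddBelow (Set.range fun N => uN N P) :=
  ⟨0, by rintro _ ⟨N, rfl⟩; exact uN_nonneg N P⟩

lemma uu_le (N : ℕ) (P : CE 3) : uu P ≤ uN N P := ciInf_le (uN_bdd P) N

lemma uu_nonneg (P : CE 3) : 0 ≤ uu P := le_ciInf fun N => uN_nonneg N P

lemma uu_submean {a b : CE 3} (h : ∀ l : ℂ, ‖l‖ ≤ 1 → a + l • b ∈ DD) :
    uu a ≤ (2 * π)⁻¹ * ∫ θ in (0:ℝ)..(2 * π), uu (circPt a b θ) := by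
  obtain ⟨N0, hN0⟩ : ∃ N0, ∀ l : ℂ, ‖l‖ ≤ 1 → a + l • b ∈ GG N0 := by
    have hK : IsCompact ((fun l : ℂ => a + l • b) '' closedBall 0 1) :=
      (isCompact_closedBall (0:ℂ) 1).image (by fun_prop)
    obtain ⟨N, hN⟩ := hK.elim_directed_cover GG GG_open (by
      rintro _ ⟨l, hl, rfl⟩
      exact Set.mem_iUnion.2 (GG_cover (h l (by simpa using hl)))) GG_mono.directed_le
    exact ⟨N, fun l hl => hN ⟨l, by simpa using hl, rfl⟩⟩
  have hsub : ∀ k, uu a ≤ (2 * π)⁻¹ * ∫ θ in (0:ℝ)..(2 * π), uN (N0 + k) (circPt a b θ) := by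
    intro k
    refine (uu_le (N0 + k) a).trans (submean_of_hsup (fun l hl => ?_) fun l hl => ?_)
    · exact (uN_good (Nat.le_add_right N0 k) (hN0 l hl)).1
    · exact (uN_good (Nat.le_add_right N0 k) (hN0 l hl)).2
  have hcont : ∀ k, Continuous fun θ => uN (N0 + k) (circPt a b θ) := by
    intro k
    refine continuous_iff_continuousAt.2 fun θ => ?_
    have h1 := (uN_good (Nat.le_add_right N0 k) (hN0 _ (norm_cexp θ).le)).1
    exact ContinuousAt.comp (g := uN (N0 + k)) (f := circPt a b) h1 (continuous_circPt a b).continuousAt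
  have hlim : Tendsto (fun k => ∫ θ in (0:ℝ)..(2 * π), uN (N0 + k) (circPt a b θ)) atTop
      (𝓝 (∫ θ in (0:ℝ)..(2 * π), uu (circPt a b θ))) := by
    refine intervalIntegral.tendsto_integral_filter_of_dominated_convergence (fun _ => 7) ?_ ?_ ?_ ?_
    · exact Eventually.of_forall fun k => (hcont k).aestronglyMeasurable
    · refine Eventually.of_forall fun k => Eventually.of_forall fun θ _ => ?_
      rw [Real.norm_of_nonneg (uN_nonneg _ _)]
      exact uN_le _ (circPt_mem h θ)
    · simp
    · refine Eventually.of_forall fun θ _ => ?_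
      have h1 := tendsto_atTop_ciInf (uN_anti (circPt_mem h θ)) (uN_bdd _)
      have h2 : Tendsto (fun k => N0 + k) atTop atTop := tendsto_atTop_mono (fun k => Nat.le_add_left k N0) tendsto_id
      exact h1.comp h2
  exact ge_of_tendsto (hlim.const_mul _) (Eventually.of_forall hsub)

lemma uu_psh : IsPSHOn DD (fun P => ((uu P : ℝ) : EReal)) := by
  refine ⟨?_, fun z _ => EReal.coe_ne_top _, fun z hz => ⟨z, mem_connectedComponentIn hz,
    EReal.coe_ne_bot _⟩, ?_⟩
  · intro P hP c hc
    obtain ⟨r, hr1, hr2⟩ := EReal.lt_iff_exists_real_btwn.1 hc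
    have hr3 : uu P < r := EReal.coe_lt_coe_iff.1 hr1
    obtain ⟨N, hN⟩ := exists_lt_of_ciInf_lt hr3
    obtain ⟨N0, hN0⟩ := GG_cover hP
    have h1 : uN (N + N0) P < r := (uN_anti hP (Nat.le_add_right N N0)).trans_lt hN
    have h2 := (uN_good (Nat.le_add_left N0 N) hN0).1.eventually_lt_const h1
    refine mem_nhdsWithin_of_mem_nhds ?_
    filter_upwards [h2] with Q hQ
    exact (EReal.coe_lt_coe_iff.2 ((uu_le _ Q).trans_lt hQ)).trans hr2
  · intro a b h
    unfold circleMean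
    refine le_iInf fun m => ?_
    rw [EReal.coe_le_coe_iff]
    refine (uu_submean h).trans (le_of_eq ?_)
    congr 2
    funext θ
    rw [← EReal.coe_strictMono.monotone.map_max, EReal.toReal_coe]
    refine (max_eq_left ?_).symm
    have := uu_nonneg (circPt a b θ)
    have h2 : (0:ℝ) ≤ m := Nat.cast_nonneg m
    linarith

lemma uu_base : 1 / 2 ≤ uu (pt 0 0 0) := by
  refine le_ciInf fun N => ?_
  refine le_max_of_le_right ?_
  have h1 := FN_zero N
  have h2 : UU (pt 0 0 0) = 0 := by simp [UU]
  rw [h2, pt_2]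
  linarith

lemma uu_circ {z : ℂ} (hz : ‖z‖ = 2) : uu (pt z 0 0) ≤ 0 := by
  refine (uu_le 0 _).trans (max_le le_rfl ?_)
  have h2 : UU (pt z 0 0) = -10 := by
    unfold UU
    rw [pt_0, hz]; norm_num
  rw [h2]
  norm_num [FN]

lemma disc_mem {z : ℂ} (hz : ‖z‖ ≤ 2) (j : ℕ) : pt z 0 (aj j) ∈ DD := by
  rw [pt_mem]; unfold rr
  have hn : ‖(aj j : ℂ)‖ = aj j := by rw [Complex.norm_real, Real.norm_of_nonneg (aj_pos j).le]
  have h1 : dK (‖(aj j : ℂ)‖ ^ 2) = 0 := dK_zero (by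
    rw [hn]; nlinarith [aj_pos j, aj_le j])
  have h2 : 0 < dh (aj j) := dh_pos ⟨by rw [hn]; linarith [aj_le j], j, by
    simp [dj_pos j]⟩
  have h3 : 0 ≤ dChi (‖z‖ ^ 2) := dChi_nonneg (by nlinarith [norm_nonneg z])
  rw [zero_sub, norm_neg, norm_dCen, h1]
  linarith

lemma glue_one_pos : 0 < expNegInvGlue 1 := expNegInvGlue.pos_of_pos one_pos

lemma circ_mem {z : ℂ} (hz : ‖z‖ = 2) : pt z 0 0 ∈ DD := by
  rw [pt_mem]; unfold rr
  rw [zero_sub, norm_neg, norm_dCen, hz, norm_zero, dK_zero (by norm_num),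
    dChi_eq_high (by norm_num), (by norm_num : (2:ℝ) ^ 2 - 3 = 1)]
  have := glue_one_pos
  have := dh_nonneg 0
  linarith

lemma zero_mem : pt 0 0 0 ∈ DD := by
  rw [pt_mem]; unfold rr
  rw [zero_sub, norm_neg, norm_dCen, norm_zero, dK_zero (by norm_num),
    dChi_eq_low (by norm_num), (by norm_num : (1:ℝ) - 0 ^ 2 = 1)]
  have := glue_one_pos
  have := dh_nonneg 0
  linarith

theorem DD_not_S : ¬ IsSDomain DD := by
  rintro ⟨-, -, h⟩
  obtain ⟨v, hs, hp, hd, ht⟩ := h _ uu_psh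
  have hanti : ∀ z ∈ DD, Antitone fun k => v k z := fun z hz => antitone_nat_of_succ_le fun k => hd k z hz
  have ht' : ∀ z ∈ DD, Tendsto (fun k => v k z) atTop (𝓝 (uu z)) := fun z hz =>
    EReal.tendsto_coe.1 (ht z hz)
  let C : Set (CE 3) := (fun z => pt z 0 0) '' sphere (0:ℂ) 2
  have hC : IsCompact C := (isCompact_sphere (0:ℂ) 2).image
    (continuous_pt continuous_id continuous_const continuous_const)
  let O : ℕ → Set (CE 3) := fun k => DD ∩ v k ⁻¹' Set.Iio (1 / 4)
  have hO : ∀ k, IsOpen (O k) := fun k =>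
    (hs k).continuousOn.isOpen_inter_preimage DD_open isOpen_Iio
  have hOm : Monotone O := by
    intro k l hkl P hP
    exact ⟨hP.1, (hanti P hP.1 hkl).trans_lt hP.2⟩
  obtain ⟨k, hk⟩ := hC.elim_directed_cover O hO (by
    rintro _ ⟨z, hz, rfl⟩
    have hz' : ‖z‖ = 2 := by simpa using hz
    have h1 : uu (pt z 0 0) < 1 / 4 := (uu_circ hz').trans_lt (by norm_num)
    obtain ⟨k, hk⟩ := ((ht' _ (circ_mem hz')).eventually_lt_const h1).exists
    exact Set.mem_iUnion.2 ⟨k, circ_mem hz', hk⟩) hOm.directed_le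
  obtain ⟨δ, hδ, hth⟩ := hC.exists_thickening_subset_open (hO k) hk
  have hj : ∀ᶠ j in atTop, v k (pt 0 0 (aj j)) ≤ 1 / 4 := by
    filter_upwards [aj_tendsto.eventually_lt_const hδ] with j hj
    have hdisc : ∀ l : ℂ, ‖l‖ ≤ 1 → pt 0 0 (aj j) + l • pt 2 0 0 ∈ DD := by
      intro l hl
      have e : pt 0 0 (aj j) + l • pt 2 0 0 = pt (l * 2) 0 (aj j) := by
        ext i; fin_cases i <;> simp [pt]
      rw [e]
      refine disc_mem ?_ j
      rw [norm_mul, Complex.norm_two]; linarith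
    have hcirc : ∀ θ : ℝ, v k (circPt (pt 0 0 (aj j)) (pt 2 0 0) θ) ≤ 1 / 4 := by
      intro θ
      set l := Complex.exp ((θ : ℂ) * Complex.I) with hl
      have hln : ‖l‖ = 1 := norm_cexp θ
      have e : circPt (pt 0 0 (aj j)) (pt 2 0 0) θ = pt (l * 2) 0 (aj j) := by
        ext i; fin_cases i <;> simp [pt, circPt, hl]
      rw [e]
      have h5 : pt (l * 2) 0 (aj j) ∈ O k := by
        refine hth (mem_thickening_iff.2 ⟨pt (l * 2) 0 0, ⟨l * 2, ?_, rfl⟩, ?_⟩)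
        · simp [hln]
        · rw [EuclideanSpace.dist_eq, Fin.sum_univ_three]
          simp only [pt_0, pt_1, pt_2, dist_self]
          rw [dist_zero_right, Complex.norm_real, Real.norm_of_nonneg (aj_pos j).le]
          simpa [Real.sqrt_sq (aj_pos j).le] using hj
      exact le_of_lt h5.2
    have h6 := (hp k).2.2.2 _ _ hdisc
    have h7 := h6.trans (iInf_le _ 0)
    rw [EReal.coe_le_coe_iff] at h7
    refine h7.trans ?_
    have h8 : ∫ θ in (0:ℝ)..(2 * π), (((v k (circPt (pt 0 0 (aj j)) (pt 2 0 0) θ) : ℝ) : EReal) ⊔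
        ((-((0:ℕ) : ℝ) : ℝ) : EReal)).toReal ≤ ∫ θ in (0:ℝ)..(2 * π), (1 / 4 : ℝ) := by
      have e : ∀ θ : ℝ, (((v k (circPt (pt 0 0 (aj j)) (pt 2 0 0) θ) : ℝ) : EReal) ⊔
        ((-((0:ℕ) : ℝ) : ℝ) : EReal)).toReal = max (v k (circPt (pt 0 0 (aj j)) (pt 2 0 0) θ)) 0 := by
        intro θ
        rw [← EReal.coe_strictMono.monotone.map_max, EReal.toReal_coe]; simp
      simp only [e]
      refine intervalIntegral.integral_mono_on (by positivity) ?_ (by simp) fun θ _ => ?_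
      · exact circ_intervalIntegrable (f := fun z => max (v k z) 0)
          ((hs k).continuousOn.sup continuousOn_const) hdisc
      · exact max_le (hcirc θ) (by norm_num)
    refine (mul_le_mul_of_nonneg_left h8 (by positivity)).trans (le_of_eq ?_)
    rw [intervalIntegral.integral_const, sub_zero, smul_eq_mul, ← mul_assoc,
      inv_mul_cancel₀ (by positivity), one_mul]
  have hlim : Tendsto (fun j => v k (pt 0 0 (aj j))) atTop (𝓝 (v k (pt 0 0 0))) := by
    have h1 : ContinuousAt (v k) (pt 0 0 0) :=
      (hs k).continuousOn.continuousAt (DD_open.mem_nhds zero_mem)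
    have h2 : Continuous fun t : ℝ => pt 0 0 (t : ℂ) :=
      continuous_pt continuous_const continuous_const Complex.continuous_ofReal
    have h3 := (h2.tendsto 0).comp aj_tendsto
    rw [Complex.ofReal_zero] at h3
    exact h1.tendsto.comp h3
  have h1 := le_of_tendsto hlim hj
  have h2 := (hanti _ zero_mem).le_of_tendsto (ht' _ zero_mem) k
  have h3 := uu_base
  linarith

end ufun

/-- **Corollary (Theorem 4).** Being an `𝒮`-domain is not a local property of the
boundary: there are `n ≥ 2` and a bounded domain `D ⊆ ℂⁿ` with smooth boundary which is
not an `𝒮`-domain, although every boundary point has an open neighbourhood `U` with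
`D ∩ U` an `𝒮`-domain. -/
theorem sdomain_not_local : ∃ (n : ℕ), 2 ≤ n ∧
    ∃ D : Set (EuclideanSpace ℂ (Fin n)),
      IsOpen D ∧ IsConnected D ∧ Bornology.IsBounded D ∧ HasSmoothBoundary D ∧
      ¬ IsSDomain D ∧
      ∀ P ∈ frontier D, ∃ U : Set (EuclideanSpace ℂ (Fin n)),
        IsOpen U ∧ P ∈ U ∧ IsSDomain (D ∩ U) := by
  exact ⟨3, by norm_num, DD, DD_open, DD_connected, DD_bounded, DD_smooth, DD_not_S,
    fun _ hP => DD_local hP⟩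
end
end

section
/- Let $\Omega \subseteq \mathbb{C}^n$ be open, let $\Omega_2 \subseteq \Omega$ be open, let $f : \Omega \to \mathbb{R}$ be continuous, and let $g$ be plurisubharmonic on $\Omega$ with $g \le f$ on $\Omega$. Suppose there is an open set $N \subseteq \Omega$ containing the closure of $\Omega \setminus \Omega_2$ taken in $\Omega$, such that $f = g$ on $N$. Then $P_{\Omega_2}(f|_{\Omega_2})(z) = P_\Omega f(z)$ for every $z \in \Omega_2$. -/
open MeasureTheory Real Filter Topology Metric

noncomputable section

/-- The plurisubharmonic envelope `P_Ω f = sup {u : u plurisubharmonic on Ω, u ≤ f on Ω}`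
(pointwise supremum in `[-∞,∞]`). -/
def pshEnvelope {n : ℕ} (Ω : Set (EuclideanSpace ℂ (Fin n)))
    (f : EuclideanSpace ℂ (Fin n) → ℝ) (z : EuclideanSpace ℂ (Fin n)) : EReal :=
  sSup {t : EReal | ∃ u : EuclideanSpace ℂ (Fin n) → EReal,
    IsPSHOn Ω u ∧ (∀ w ∈ Ω, u w ≤ ((f w : ℝ) : EReal)) ∧ t = u z}

/-- The circle parametrization composed with an usc function is interval integrable. -/
theorem aux_circleIntegrable {h : ℂ → ℝ} {c : ℂ} {R : ℝ} (hR : 0 ≤ R)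
    (hu : UpperSemicontinuousOn h (sphere c R)) (L : ℝ) (hL : ∀ z ∈ sphere c R, L ≤ h z) :
    CircleIntegrable h c R := by
  have hmem : ∀ θ, circleMap c R θ ∈ sphere c R := fun θ => circleMap_mem_sphere c hR θ
  have hk : UpperSemicontinuous (fun θ => h (circleMap c R θ)) := by
    rw [← upperSemicontinuousOn_univ_iff]
    exact hu.comp (continuous_circleMap c R).continuousOn (fun θ _ => hmem θ)
  obtain ⟨M, hM⟩ := hu.bddAbove_of_isCompact (isCompact_sphere c R)
  have hM' : ∀ θ, h (circleMap c R θ) ≤ M := fun θ => hM ⟨_, hmem θ, rfl⟩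
  refine (intervalIntegrable_const (c := |L| + |M|)).mono_fun hk.measurable.aestronglyMeasurable ?_
  refine Eventually.of_forall fun θ => ?_
  have h1 := hL _ (hmem θ)
  have h2 := hM' θ
  simp only [Real.norm_eq_abs]
  rw [abs_of_nonneg (by positivity : 0 ≤ |L| + |M|), abs_le]
  constructor
  · linarith [neg_abs_le L, abs_nonneg M]
  · linarith [le_abs_self M, abs_nonneg L]

theorem aux_trig (s : C(AddCircle (2 * π), ℂ))
    (hs : s ∈ Submodule.span ℂ (Set.range (@fourier (2 * π)))) :
    ∃ q₁ q₂ : ℂ → ℂ, Differentiable ℂ q₁ ∧ Differentiable ℂ q₂ ∧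
      ∀ x : AddCircle (2 * π), s x = q₁ (AddCircle.toCircle x : ℂ) +
        (starRingEnd ℂ) (q₂ (AddCircle.toCircle x : ℂ)) := by
  induction hs using Submodule.span_induction with
  | mem s hs =>
    obtain ⟨n, rfl⟩ := hs
    rcases Int.eq_nat_or_neg n with ⟨k, rfl | rfl⟩
    · refine ⟨fun z => z ^ k, fun _ => 0, by fun_prop, by fun_prop, fun x => ?_⟩
      rw [fourier_apply, AddCircle.toCircle_zsmul]; simp
    · refine ⟨fun _ => 0, fun z => z ^ k, by fun_prop, by fun_prop, fun x => ?_⟩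
      rw [fourier_neg, fourier_apply, AddCircle.toCircle_zsmul]; simp
  | zero => exact ⟨fun _ => 0, fun _ => 0, by fun_prop, by fun_prop, fun x => by simp⟩
  | add s t _ _ h1 h2 =>
    obtain ⟨q1, p1, d1, c1, e1⟩ := h1
    obtain ⟨q2, p2, d2, c2, e2⟩ := h2
    refine ⟨fun z => q1 z + q2 z, fun z => p1 z + p2 z, by fun_prop, by fun_prop, fun x => ?_⟩
    simp only [ContinuousMap.add_apply, e1, e2, map_add]
    ring
  | smul a s _ h1 =>
    obtain ⟨q1, p1, d1, c1, e1⟩ := h1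
    refine ⟨fun z => a * q1 z, fun z => (starRingEnd ℂ a) * p1 z, by fun_prop, by fun_prop,
      fun x => ?_⟩
    simp only [ContinuousMap.smul_apply, e1, smul_eq_mul, map_mul, Complex.conj_conj]
    ring

/-- Continuous functions on the circle are uniformly approximated by real parts of entire
functions. -/
theorem aux_approx (φ : ℂ → ℝ) (hφ : Continuous φ) {η : ℝ} (hη : 0 < η) :
    ∃ q : ℂ → ℂ, Differentiable ℂ q ∧ ∀ z ∈ sphere (0:ℂ) 1, |φ z - (q z).re| < η := by
  have : Fact (0 < 2 * π) := ⟨by positivity⟩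
  let F : C(AddCircle (2 * π), ℂ) :=
    ⟨fun x => ((φ (AddCircle.toCircle x : ℂ) : ℝ) : ℂ), by
      have := AddCircle.continuous_toCircle (T := 2 * π)
      fun_prop⟩
  have hF : F ∈ (Submodule.span ℂ (Set.range (@fourier (2 * π)))).topologicalClosure := by
    rw [span_fourier_closure_eq_top]; trivial
  rw [← SetLike.mem_coe, Submodule.topologicalClosure_coe, Metric.mem_closure_iff] at hF
  obtain ⟨s, hs, hd⟩ := hF η hη
  obtain ⟨q₁, q₂, dq₁, dq₂, eqq⟩ := aux_trig s hs
  let q : ℂ → ℂ := fun z => q₁ z + q₂ z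
  have dq : Differentiable ℂ q := dq₁.add dq₂
  have eq : ∀ x : AddCircle (2 * π), (s x).re = (q (AddCircle.toCircle x : ℂ)).re := by
    intro x
    rw [eqq x]; simp [q]
  refine ⟨q, dq, fun z hz => ?_⟩
  have hz1 : ‖z‖ = 1 := by simpa using hz
  have hz2 : (AddCircle.toCircle ((Complex.arg z : ℝ) : AddCircle (2 * π)) : ℂ) = z := by
    rw [AddCircle.toCircle_apply_mk, Circle.coe_exp]
    have := Complex.norm_mul_exp_arg_mul_I z
    rw [hz1] at this
    rw [show 2 * π / (2 * π) * Complex.arg z = Complex.arg z by field_simp]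
    simpa using this
  have h1 := (ContinuousMap.dist_lt_iff hη).1 hd ((Complex.arg z : ℝ) : AddCircle (2 * π))
  have h2 := eq ((Complex.arg z : ℝ) : AddCircle (2 * π))
  rw [hz2] at h2
  rw [← h2, Complex.dist_eq] at *
  refine lt_of_le_of_lt ?_ h1
  refine le_trans (le_of_eq ?_) (Complex.abs_re_le_norm _)
  simp [F, hz2]

/-- Approximation from above of an usc function on the circle by continuous functions. -/
theorem aux_usc_approx {h : ℂ → ℝ} (hu : UpperSemicontinuousOn h (sphere (0:ℂ) 1)) (L : ℝ)
    (hL : ∀ z ∈ sphere (0:ℂ) 1, L ≤ h z) {η : ℝ} (hη : 0 < η) :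
    ∃ φ : ℂ → ℝ, Continuous φ ∧ (∀ z ∈ sphere (0:ℂ) 1, h z ≤ φ z) ∧
      circleAverage φ 0 1 < circleAverage h 0 1 + η := by
  obtain ⟨M, hM⟩ := hu.bddAbove_of_isCompact (isCompact_sphere (0:ℂ) 1)
  have hM' : ∀ w : sphere (0:ℂ) 1, h w ≤ M := fun w => hM ⟨_, w.2, rfl⟩
  have : Nonempty (sphere (0:ℂ) 1) := ⟨⟨1, by simp⟩⟩
  let φ : ℕ → ℂ → ℝ := fun k z => ⨆ w : sphere (0:ℂ) 1, (h w - k * dist z (w:ℂ))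
  have hbdd : ∀ (k : ℕ) (z : ℂ), BddAbove (Set.range fun w : sphere (0:ℂ) 1 => h w - k * dist z (w:ℂ)) := by
    intro k z
    refine ⟨M, ?_⟩
    rintro _ ⟨w, rfl⟩
    have : 0 ≤ (k:ℝ) * dist z (w:ℂ) := by positivity
    have := hM' w
    simp only; linarith
  have hφc : ∀ k, Continuous (φ k) := by
    intro k
    refine (LipschitzWith.of_le_add_mul' (k:ℝ) fun x y => ?_).continuous
    refine ciSup_le fun w => ?_
    have h1 := le_ciSup (hbdd k y) w
    have h2 : (k:ℝ) * dist y (w:ℂ) ≤ k * (dist x y + dist x w) := by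
      refine mul_le_mul_of_nonneg_left ?_ (by positivity)
      rw [dist_comm x y]; exact dist_triangle y x w
    change _ ≤ (⨆ w : sphere (0:ℂ) 1, (h w - k * dist y (w:ℂ))) + _
    linarith
  have hφge : ∀ k, ∀ z ∈ sphere (0:ℂ) 1, h z ≤ φ k z := by
    intro k z hz
    have := le_ciSup (hbdd k z) ⟨z, hz⟩
    simpa using this
  have hφle : ∀ k z, φ k z ≤ M := by
    intro k z
    refine ciSup_le fun w => ?_
    have : 0 ≤ (k:ℝ) * dist z (w:ℂ) := by positivity
    have := hM' w
    linarith
  have hlim : ∀ z ∈ sphere (0:ℂ) 1, Tendsto (fun k => φ k z) atTop (𝓝 (h z)) := by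
    intro z hz
    rw [Metric.tendsto_atTop]
    intro ε hε
    have h1 := hu z hz (h z + ε / 2) (by linarith)
    rw [Metric.nhdsWithin_basis_ball.eventually_iff] at h1
    obtain ⟨δ, hδ, h1⟩ := h1
    obtain ⟨K, hK⟩ := exists_nat_gt ((M - h z) / δ)
    refine ⟨K, fun k hk => ?_⟩
    rw [Real.dist_eq, abs_of_nonneg (by linarith [hφge k z hz])]
    have : φ k z ≤ h z + ε / 2 := by
      refine ciSup_le fun w => ?_
      by_cases hw : dist z (w:ℂ) < δ
      · have h2 := h1 (x := (w:ℂ)) ⟨by rwa [mem_ball, dist_comm], w.2⟩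
        have : 0 ≤ (k:ℝ) * dist z (w:ℂ) := by positivity
        linarith
      · push Not at hw
        have h3 : (M - h z) < k * δ := by
          rw [div_lt_iff₀ hδ] at hK
          have : (K:ℝ) * δ ≤ k * δ := by gcongr
          linarith
        have h4 : (k:ℝ) * δ ≤ k * dist z (w:ℂ) := by gcongr
        linarith [hM' w]
    linarith
  have hmem : ∀ θ, circleMap (0:ℂ) 1 θ ∈ sphere (0:ℂ) 1 :=
    fun θ => circleMap_mem_sphere 0 zero_le_one θ
  have hT : Tendsto (fun k => circleAverage (φ k) 0 1) atTop (𝓝 (circleAverage h 0 1)) := by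
    simp only [circleAverage_def]
    refine Tendsto.const_smul ?_ _
    refine intervalIntegral.tendsto_integral_filter_of_dominated_convergence
      (fun _ => |L| + |M|) ?_ ?_ intervalIntegrable_const ?_
    · exact Eventually.of_forall fun k =>
        ((hφc k).comp (continuous_circleMap 0 1)).aestronglyMeasurable
    · refine Eventually.of_forall fun k => Eventually.of_forall fun θ _ => ?_
      have h1 := (hL _ (hmem θ)).trans (hφge k _ (hmem θ))
      have h2 := hφle k (circleMap 0 1 θ)
      rw [Real.norm_eq_abs, abs_le]
      constructor
      · linarith [neg_abs_le L, abs_nonneg M]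
      · linarith [le_abs_self M, abs_nonneg L]
    · exact Eventually.of_forall fun θ _ => hlim _ (hmem θ)
  obtain ⟨k, hk⟩ := (hT.eventually (gt_mem_nhds (show circleAverage h 0 1 < circleAverage h 0 1 + η
    by linarith))).exists
  exact ⟨φ k, hφc k, hφge k, hk⟩

theorem aux_mean_re {q : ℂ → ℂ} (hq : Differentiable ℂ q) (c : ℂ) (R : ℝ) :
    circleAverage (fun z => (q z).re) c R = (q c).re := by
  have h1 : circleAverage q c R = q c := hq.diffContOnCl.circleAverage
  have h2 := Complex.reCLM.circleAverage_comp_comm (f := q) (c := c) (R := R)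
    (hq.continuous.continuousOn.circleIntegrable')
  rw [h1] at h2
  exact h2

/-- Local sub-mean value property implies the global one. -/
theorem aux_submean {h : ℂ → ℝ} (hu : UpperSemicontinuousOn h (closedBall (0:ℂ) 1)) (L : ℝ)
    (hL : ∀ z ∈ closedBall (0:ℂ) 1, L ≤ h z)
    (hloc : ∀ c ∈ ball (0:ℂ) 1, ∀ R > 0, ∃ r, 0 < r ∧ r < R ∧ h c ≤ circleAverage h c r) :
    h 0 ≤ circleAverage h 0 1 := by
  refine le_of_forall_pos_le_add fun ε hε => ?_
  have hu1 : UpperSemicontinuousOn h (sphere (0:ℂ) 1) := hu.mono sphere_subset_closedBall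
  have hL1 : ∀ z ∈ sphere (0:ℂ) 1, L ≤ h z := fun z hz => hL z (sphere_subset_closedBall hz)
  obtain ⟨φ, φc, φge, φav⟩ := aux_usc_approx hu1 L hL1 (show 0 < ε / 4 by linarith)
  obtain ⟨q, dq, hq⟩ := aux_approx φ φc (show 0 < ε / 4 by linarith)
  have hq0 : (q 0).re ≤ circleAverage φ 0 1 + ε / 4 := by
    have h1 := aux_mean_re dq 0 1
    have ci1 : CircleIntegrable φ 0 1 := φc.continuousOn.circleIntegrable'
    have : circleAverage (fun z => (q z).re) 0 1 ≤ circleAverage (fun z => φ z + ε / 4) 0 1 := by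
      refine circleAverage_mono ?_ ?_ ?_
      · exact (Complex.continuous_re.comp dq.continuous).continuousOn.circleIntegrable'
      · exact (φc.add continuous_const).continuousOn.circleIntegrable'
      · intro z hz
        have := hq z (by simpa using hz)
        rw [abs_lt] at this
        linarith [this.1]
    rw [h1, circleAverage_fun_add ci1 (circleIntegrable_const _ _ _), circleAverage_const] at this
    exact this
  -- maximum of `w`
  set w : ℂ → ℝ := fun z => h z + (-(q z).re + ε / 4 * ‖z‖ ^ 2) with hw
  have hwu : UpperSemicontinuousOn w (closedBall (0:ℂ) 1) := by
    refine hu.add ?_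
    refine (Continuous.upperSemicontinuous ?_).upperSemicontinuousOn _
    have := dq.continuous
    fun_prop
  obtain ⟨c, hc, hmax⟩ := hwu.exists_isMaxOn ⟨0, by simp⟩ (isCompact_closedBall (0:ℂ) 1)
  have h0 : w 0 ≤ w c := hmax (by simp)
  have hw0 : w 0 = h 0 - (q 0).re := by simp [hw]; ring
  rcases (mem_closedBall_zero_iff.1 hc).lt_or_eq with hlt | heq1
  · exfalso
    obtain ⟨r, hr0, hr1, hr⟩ := hloc c (by simpa using hlt) (1 - ‖c‖) (by linarith)
    have hsub : closedBall c r ⊆ closedBall (0:ℂ) 1 := by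
      refine closedBall_subset_closedBall' ?_
      rw [dist_zero_right]; linarith
    have hsub' : sphere c r ⊆ closedBall (0:ℂ) 1 := sphere_subset_closedBall.trans hsub
    let Q : ℂ → ℂ := fun z => q z - (ε / 4 : ℝ) * ((‖c‖ ^ 2 : ℝ) + 2 * (starRingEnd ℂ c) * (z - c))
      + ((w c - ε / 4 * r ^ 2 : ℝ) : ℂ)
    have dQ : Differentiable ℂ Q := by fun_prop
    have hle : circleAverage h c r ≤ circleAverage (fun z => (Q z).re) c r := by
      refine circleAverage_mono ?_ ?_ ?_
      · exact aux_circleIntegrable hr0.le (hu.mono hsub') L (fun z hz => hL z (hsub' hz))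
      · exact (Complex.continuous_re.comp dQ.continuous).continuousOn.circleIntegrable'
      · intro z hz
        rw [abs_of_pos hr0] at hz
        have h1 : w z ≤ w c := hmax (hsub' hz)
        have h2 : ‖z - c‖ ^ 2 = r ^ 2 := by rw [mem_sphere_iff_norm.1 hz]
        have h3 : ‖z‖ ^ 2 = ‖c‖ ^ 2 + 2 * ((starRingEnd ℂ c) * (z - c)).re + r ^ 2 := by
          rw [← h2]
          simp only [Complex.sq_norm, Complex.normSq_apply, Complex.mul_re, Complex.conj_re,
            Complex.conj_im, Complex.sub_re, Complex.sub_im]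
          ring
        have h4 : (Q z).re = (q z).re - ε / 4 * (‖c‖ ^ 2
            + 2 * ((starRingEnd ℂ c) * (z - c)).re) + (w c - ε / 4 * r ^ 2) := by
          simp only [Q, Complex.add_re, Complex.sub_re, Complex.ofReal_re, Complex.re_ofReal_mul,
            mul_assoc]
          simp
        have h5 : w z = h z + (-(q z).re + ε / 4 * ‖z‖ ^ 2) := rfl
        rw [h4]
        rw [h5, h3] at h1
        linarith
    rw [aux_mean_re dQ] at hle
    have h4 : (Q c).re = (q c).re - ε / 4 * ‖c‖ ^ 2 + (w c - ε / 4 * r ^ 2) := by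
      simp only [Q, Complex.add_re, Complex.sub_re, Complex.ofReal_re, Complex.re_ofReal_mul,
        sub_self, mul_zero, add_zero]
    have h5 : w c = h c + (-(q c).re + ε / 4 * ‖c‖ ^ 2) := rfl
    have h6 : 0 < ε / 4 * r ^ 2 := by positivity
    linarith
  · have hcs : c ∈ sphere (0:ℂ) 1 := by simpa using heq1
    have h1 := hq c hcs
    rw [abs_lt] at h1
    have h2 := φge c hcs
    have h5 : w c = h c + (-(q c).re + ε / 4 * ‖c‖ ^ 2) := rfl
    rw [heq1] at h5
    linarith [h1.2]

/-- Real truncation. -/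
def truncR {n : ℕ} (u : EuclideanSpace ℂ (Fin n) → EReal) (m : ℕ)
    (x : EuclideanSpace ℂ (Fin n)) : ℝ :=
  (u x ⊔ ((-(m : ℝ) : ℝ) : EReal)).toReal

theorem truncR_coe {n : ℕ} {u : EuclideanSpace ℂ (Fin n) → EReal} {m : ℕ}
    {x : EuclideanSpace ℂ (Fin n)} (hx : u x ≠ ⊤) :
    ((truncR u m x : ℝ) : EReal) = u x ⊔ ((-(m : ℝ) : ℝ) : EReal) := by
  refine EReal.coe_toReal ?_ ?_
  · rcases max_choice (u x) ((-(m : ℝ) : ℝ) : EReal) with h | h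
    · rw [h]; exact hx
    · rw [h]; exact EReal.coe_ne_top _
  · intro h
    have : ((-(m : ℝ) : ℝ) : EReal) ≤ ⊥ := h ▸ le_sup_right
    exact EReal.coe_ne_bot _ (le_bot_iff.1 this)

theorem truncR_ge {n : ℕ} {u : EuclideanSpace ℂ (Fin n) → EReal} {m : ℕ}
    {x : EuclideanSpace ℂ (Fin n)} (hx : u x ≠ ⊤) : -(m : ℝ) ≤ truncR u m x := by
  rw [← EReal.coe_le_coe_iff, truncR_coe hx]
  exact le_sup_right

theorem truncR_mono {n : ℕ} {u v : EuclideanSpace ℂ (Fin n) → EReal} {m : ℕ}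
    {x : EuclideanSpace ℂ (Fin n)} (hx : v x ≠ ⊤) (huv : u x ≤ v x) :
    truncR u m x ≤ truncR v m x := by
  have hu : u x ≠ ⊤ := fun h => hx (top_le_iff.1 (h ▸ huv))
  rw [← EReal.coe_le_coe_iff, truncR_coe hx, truncR_coe hu]
  exact sup_le_sup_right huv _

theorem truncR_usc {n : ℕ} {u : EuclideanSpace ℂ (Fin n) → EReal}
    {S : Set (EuclideanSpace ℂ (Fin n))} (hu : UpperSemicontinuousOn u S)
    (ht : ∀ z ∈ S, u z ≠ ⊤) (m : ℕ) : UpperSemicontinuousOn (truncR u m) S := by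
  intro x hx y hy
  rw [← EReal.coe_lt_coe_iff, truncR_coe (ht x hx), sup_lt_iff] at hy
  filter_upwards [hu x hx y hy.1, self_mem_nhdsWithin] with z hz hzS
  rw [← EReal.coe_lt_coe_iff, truncR_coe (ht z hzS), sup_lt_iff]
  exact ⟨hz, hy.2⟩

theorem circleMean_eq {n : ℕ} (u : EuclideanSpace ℂ (Fin n) → EReal)
    (a b : EuclideanSpace ℂ (Fin n)) (c : ℂ) (r : ℝ) :
    circleMean u (a + c • b) ((r : ℂ) • b) =
      ⨅ m : ℕ, ((circleAverage (fun l : ℂ => truncR u m (a + l • b)) c r : ℝ) : EReal) := by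
  unfold circleMean
  congr 1
  ext m
  rw [circleAverage_def, smul_eq_mul]
  congr 3
  ext θ
  unfold truncR circleMap
  congr 3
  rw [smul_smul, add_smul, add_assoc, mul_comm]

theorem circleMean_eq' {n : ℕ} (u : EuclideanSpace ℂ (Fin n) → EReal)
    (a b : EuclideanSpace ℂ (Fin n)) :
    circleMean u a b =
      ⨅ m : ℕ, ((circleAverage (fun l : ℂ => truncR u m (a + l • b)) 0 1 : ℝ) : EReal) := by
  have := circleMean_eq u a b 0 1
  simpa using this

theorem truncR_line_usc {n : ℕ} {u : EuclideanSpace ℂ (Fin n) → EReal}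
    {S : Set (EuclideanSpace ℂ (Fin n))} (hu : UpperSemicontinuousOn u S)
    (ht : ∀ z ∈ S, u z ≠ ⊤) (m : ℕ) (a b : EuclideanSpace ℂ (Fin n)) (T : Set ℂ)
    (hT : ∀ l ∈ T, a + l • b ∈ S) :
    UpperSemicontinuousOn (fun l : ℂ => truncR u m (a + l • b)) T := by
  refine (truncR_usc hu ht m).comp (g := fun l : ℂ => a + l • b) ?_ hT
  fun_prop

theorem circleMean_mono {n : ℕ} {u v : EuclideanSpace ℂ (Fin n) → EReal}
    {S : Set (EuclideanSpace ℂ (Fin n))} (hu : UpperSemicontinuousOn u S)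
    (hv : UpperSemicontinuousOn v S) (ht : ∀ z ∈ S, v z ≠ ⊤) (huv : ∀ z ∈ S, u z ≤ v z)
    (a b : EuclideanSpace ℂ (Fin n)) (hS : ∀ l : ℂ, ‖l‖ ≤ 1 → a + l • b ∈ S) :
    circleMean u a b ≤ circleMean v a b := by
  have htu : ∀ z ∈ S, u z ≠ ⊤ := fun z hz h => ht z hz (top_le_iff.1 (h ▸ huv z hz))
  have hS' : ∀ l ∈ sphere (0:ℂ) 1, a + l • b ∈ S := fun l hl => hS l (by simp_all)
  rw [circleMean_eq', circleMean_eq']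
  refine iInf_mono fun m => ?_
  rw [EReal.coe_le_coe_iff]
  refine circleAverage_mono ?_ ?_ ?_
  · exact aux_circleIntegrable zero_le_one (truncR_line_usc hu htu m a b _ hS') (-(m:ℝ))
      fun z hz => truncR_ge (htu _ (hS' z hz))
  · exact aux_circleIntegrable zero_le_one (truncR_line_usc hv ht m a b _ hS') (-(m:ℝ))
      fun z hz => truncR_ge (ht _ (hS' z hz))
  · intro z hz
    rw [abs_one] at hz
    exact truncR_mono (ht _ (hS' z hz)) (huv _ (hS' z hz))

theorem submean_of_local {n : ℕ} {v : EuclideanSpace ℂ (Fin n) → EReal}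
    {S : Set (EuclideanSpace ℂ (Fin n))} (hv : UpperSemicontinuousOn v S)
    (ht : ∀ z ∈ S, v z ≠ ⊤)
    (hloc : ∀ x ∈ S, ∀ b, ∃ R : ℝ, 0 < R ∧ ∀ r : ℝ, 0 < r → r < R →
      v x ≤ circleMean v x ((r : ℂ) • b))
    (a b : EuclideanSpace ℂ (Fin n)) (hS : ∀ l : ℂ, ‖l‖ ≤ 1 → a + l • b ∈ S) :
    v a ≤ circleMean v a b := by
  rw [circleMean_eq']
  refine le_iInf fun m => ?_
  have hS' : ∀ l ∈ closedBall (0:ℂ) 1, a + l • b ∈ S := fun l hl => hS l (by simpa using hl)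
  have key := aux_submean (truncR_line_usc hv ht m a b _ hS') (-(m:ℝ))
    (fun z hz => truncR_ge (ht _ (hS' z hz))) ?_
  · refine le_trans ?_ (EReal.coe_le_coe_iff.2 key)
    have h0 : a + (0:ℂ) • b = a := by simp
    have := hS' 0 (by simp)
    rw [truncR_coe (ht _ this), h0]
    exact le_sup_left
  · intro c hc R hR
    have hcS := hS' c (ball_subset_closedBall hc)
    obtain ⟨R', hR', hr⟩ := hloc _ hcS b
    have hc1 : ‖c‖ < 1 := by simpa using hc
    have hpos : 0 < min (min R R') (1 - ‖c‖) := lt_min (lt_min hR hR') (by linarith)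
    set r := min (min R R') (1 - ‖c‖) / 2 with hrdef
    have hr0 : 0 < r := by positivity
    have hrlt : r < min (min R R') (1 - ‖c‖) := by linarith
    have hrR : r < R := hrlt.trans_le ((min_le_left _ _).trans (min_le_left _ _))
    have hrR' : r < R' := hrlt.trans_le ((min_le_left _ _).trans (min_le_right _ _))
    have hrc : r < 1 - ‖c‖ := hrlt.trans_le (min_le_right _ _)
    have hsub : sphere c r ⊆ closedBall (0:ℂ) 1 := by
      refine sphere_subset_closedBall.trans (closedBall_subset_closedBall' ?_)
      rw [dist_zero_right]; linarith
    refine ⟨r, hr0, hrR, ?_⟩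
    have h1 := hr r hr0 hrR'
    rw [circleMean_eq] at h1
    rw [← EReal.coe_le_coe_iff, truncR_coe (ht _ hcS)]
    refine sup_le (h1.trans (iInf_le _ m)) ?_
    rw [EReal.coe_le_coe_iff]
    have h2 : circleAverage (fun _ : ℂ => -(m:ℝ)) c r ≤
        circleAverage (fun l : ℂ => truncR v m (a + l • b)) c r := by
      refine circleAverage_mono (circleIntegrable_const _ _ _) ?_ ?_
      · exact aux_circleIntegrable hr0.le
          (truncR_line_usc hv ht m a b _ fun l hl => hS' l (hsub hl)) (-(m:ℝ))
          fun z hz => truncR_ge (ht _ (hS' z (hsub hz)))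
      · intro z hz
        rw [abs_of_pos hr0] at hz
        exact truncR_ge (ht _ (hS' z (hsub hz)))
    rwa [circleAverage_const] at h2

/-- Restriction step: the maximum of two psh functions is psh on the smaller open set. -/
theorem psh_restrict {n : ℕ} {Ω Ω₂ : Set (EuclideanSpace ℂ (Fin n))}
    (hΩ₂ : IsOpen Ω₂) (hsub : Ω₂ ⊆ Ω)
    {u g : EuclideanSpace ℂ (Fin n) → EReal} (hu : IsPSHOn Ω u) (hg : IsPSHOn Ω g)
    {N : Set (EuclideanSpace ℂ (Fin n))} (hN : IsOpen N)
    (hclos : Ω \ Ω₂ ⊆ N) (hgN : ∀ z ∈ N, g z ≠ ⊥) :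
    IsPSHOn Ω₂ (fun z => u z ⊔ g z) := by
  have husc : UpperSemicontinuousOn (fun z => u z ⊔ g z) Ω := hu.1.sup hg.1
  have ht : ∀ z ∈ Ω, u z ⊔ g z ≠ ⊤ := by
    intro z hz
    rcases max_choice (u z) (g z) with h | h
    · rw [h]; exact hu.2.1 z hz
    · rw [h]; exact hg.2.1 z hz
  refine ⟨husc.mono hsub, fun z hz => ht z (hsub hz), ?_, ?_⟩
  · intro z hz
    by_contra hcon
    push Not at hcon
    set C := connectedComponentIn Ω₂ z with hC
    have hCo : IsOpen C := hΩ₂.connectedComponentIn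
    have hzC : z ∈ C := mem_connectedComponentIn hz
    have hcl : closure C ∩ connectedComponentIn Ω z ⊆ C := by
      rintro p ⟨hp, hpΩ⟩
      have hpΩ := connectedComponentIn_subset _ _ hpΩ
      by_cases hp2 : p ∈ Ω₂
      · have ho : IsOpen (connectedComponentIn Ω₂ p) := hΩ₂.connectedComponentIn
        obtain ⟨y, hy1, hy2⟩ := mem_closure_iff.1 hp _ ho (mem_connectedComponentIn hp2)
        have e1 := connectedComponentIn_eq hy1
        have e2 := connectedComponentIn_eq hy2
        rw [hC, e2, ← e1]
        exact mem_connectedComponentIn hp2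
      · exfalso
        obtain ⟨y, hy1, hy2⟩ := mem_closure_iff.1 hp _ hN (hclos ⟨hpΩ, hp2⟩)
        have h3 := hcon y hy2
        exact hgN y hy1 (le_bot_iff.1 (h3 ▸ le_sup_right))
    have hsubC : connectedComponentIn Ω z ⊆ C :=
      isPreconnected_connectedComponentIn.subset_of_closure_inter_subset hCo
        ⟨z, mem_connectedComponentIn (hsub hz), hzC⟩ hcl
    obtain ⟨w, hw, hw2⟩ := hu.2.2.1 z (hsub hz)
    have h3 := hcon w (hsubC hw)
    exact hw2 (le_bot_iff.1 (h3 ▸ le_sup_left))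
  · intro a b hab
    have hab' : ∀ l : ℂ, ‖l‖ ≤ 1 → a + l • b ∈ Ω := fun l hl => hsub (hab l hl)
    refine sup_le ?_ ?_
    · exact (hu.2.2.2 a b hab').trans
        (circleMean_mono hu.1 husc ht (fun z _ => le_sup_left) a b hab')
    · exact (hg.2.2.2 a b hab').trans
        (circleMean_mono hg.1 husc ht (fun z _ => le_sup_right) a b hab')

theorem exists_small_disc {n : ℕ} {S : Set (EuclideanSpace ℂ (Fin n))} (hS : IsOpen S)
    {x : EuclideanSpace ℂ (Fin n)} (hx : x ∈ S) (b : EuclideanSpace ℂ (Fin n)) :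
    ∃ R : ℝ, 0 < R ∧ ∀ r : ℝ, 0 < r → r < R → ∀ l : ℂ, ‖l‖ ≤ 1 → x + l • ((r : ℂ) • b) ∈ S := by
  obtain ⟨ε, hε, hb⟩ := Metric.isOpen_iff.1 hS x hx
  refine ⟨ε / (‖b‖ + 1), by positivity, fun r hr0 hr l hl => hb ?_⟩
  rw [mem_ball, dist_eq_norm, add_sub_cancel_left, norm_smul, norm_smul, Complex.norm_real,
    Real.norm_of_nonneg hr0.le]
  rw [lt_div_iff₀ (by positivity)] at hr
  have h1 : ‖l‖ * (r * ‖b‖) ≤ 1 * (r * ‖b‖) := by gcongr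
  linarith

open Classical in
/-- Gluing. -/
theorem psh_glue {n : ℕ} {Ω Ω₂ : Set (EuclideanSpace ℂ (Fin n))}
    (hΩ : IsOpen Ω) (hΩ₂ : IsOpen Ω₂) (hsub : Ω₂ ⊆ Ω)
    {u g : EuclideanSpace ℂ (Fin n) → EReal} (hu : IsPSHOn Ω₂ u) (hg : IsPSHOn Ω g)
    {N : Set (EuclideanSpace ℂ (Fin n))} (hN : IsOpen N)
    (hclos : Ω \ Ω₂ ⊆ N) (hugN : ∀ z ∈ N, z ∈ Ω₂ → u z ≤ g z) :
    IsPSHOn Ω (fun z => if z ∈ Ω₂ then u z ⊔ g z else g z) := by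
  set v : EuclideanSpace ℂ (Fin n) → EReal := fun z => if z ∈ Ω₂ then u z ⊔ g z else g z with hv
  have hv1 : ∀ z ∈ Ω₂, v z = u z ⊔ g z := fun z hz => by simp [hv, hz]
  have hv2 : ∀ z ∈ N, v z = g z := by
    intro z hz
    by_cases h : z ∈ Ω₂
    · rw [hv1 z h]; exact sup_eq_right.2 (hugN z hz h)
    · simp [hv, h]
  have hge : ∀ z, g z ≤ v z := by
    intro z
    by_cases h : z ∈ Ω₂ <;> simp [hv, h]
  have hgeu : ∀ z ∈ Ω₂, u z ≤ v z := fun z hz => by rw [hv1 z hz]; exact le_sup_left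
  have husc : UpperSemicontinuousOn v Ω := by
    intro x hx y hy
    rw [hΩ.nhdsWithin_eq hx]
    by_cases h : x ∈ Ω₂
    · rw [hv1 x h, sup_lt_iff] at hy
      have e1 := hu.1 x h y hy.1
      have e2 := hg.1 x hx y hy.2
      rw [hΩ₂.nhdsWithin_eq h] at e1
      rw [hΩ.nhdsWithin_eq hx] at e2
      filter_upwards [e1, e2, hΩ₂.mem_nhds h] with z h1 h2 h3
      rw [hv1 z h3]; exact sup_lt_iff.2 ⟨h1, h2⟩
    · have hxN : x ∈ N := hclos ⟨hx, h⟩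
      rw [hv2 x hxN] at hy
      have e2 := hg.1 x hx y hy
      rw [hΩ.nhdsWithin_eq hx] at e2
      filter_upwards [e2, hN.mem_nhds hxN] with z h2 h3
      rwa [hv2 z h3]
  have ht : ∀ z ∈ Ω, v z ≠ ⊤ := by
    intro z hz
    by_cases h : z ∈ Ω₂
    · rw [hv1 z h]
      rcases max_choice (u z) (g z) with h' | h'
      · rw [h']; exact hu.2.1 z h
      · rw [h']; exact hg.2.1 z hz
    · simpa [hv, h] using hg.2.1 z hz
  refine ⟨husc, ht, ?_, ?_⟩
  · intro z hz
    obtain ⟨w, hw, hw2⟩ := hg.2.2.1 z hz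
    exact ⟨w, hw, fun h => hw2 (le_bot_iff.1 (h ▸ hge w))⟩
  · refine submean_of_local husc ht ?_
    have hgm : ∀ a b : EuclideanSpace ℂ (Fin n), (∀ l : ℂ, ‖l‖ ≤ 1 → a + l • b ∈ Ω) →
        g a ≤ circleMean v a b := fun a b hab =>
      (hg.2.2.2 a b hab).trans (circleMean_mono hg.1 husc ht (fun z _ => hge z) a b hab)
    intro x hx b
    by_cases h : x ∈ Ω₂
    · obtain ⟨R, hR, hr⟩ := exists_small_disc hΩ₂ h b
      refine ⟨R, hR, fun r hr0 hrR => ?_⟩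
      have hd := hr r hr0 hrR
      rw [hv1 x h]
      refine sup_le ?_ (hgm _ _ fun l hl => hsub (hd l hl))
      exact (hu.2.2.2 _ _ hd).trans (circleMean_mono hu.1 (husc.mono hsub)
        (fun z hz => ht z (hsub hz)) hgeu _ _ hd)
    · obtain ⟨R, hR, hr⟩ := exists_small_disc hΩ hx b
      refine ⟨R, hR, fun r hr0 hrR => ?_⟩
      rw [hv2 x (hclos ⟨hx, h⟩)]
      exact hgm _ _ (hr r hr0 hrR)

/-- **Theorem 9.** Let `Ω₂ ⊆ Ω` be open, `f` continuous on `Ω`, `g` plurisubharmonic on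
`Ω` with `g ≤ f`, and suppose `f = g` on an open set `N ⊆ Ω` containing the closure of
`Ω \ Ω₂` taken in `Ω`. Then `P_{Ω₂}(f|_{Ω₂}) = P_Ω f` on `Ω₂`. -/
theorem pshEnvelope_localization {n : ℕ} (Ω Ω₂ : Set (EuclideanSpace ℂ (Fin n)))
    (hΩ : IsOpen Ω) (hΩ₂ : IsOpen Ω₂) (hsub : Ω₂ ⊆ Ω)
    (f : EuclideanSpace ℂ (Fin n) → ℝ) (hf : ContinuousOn f Ω)
    (g : EuclideanSpace ℂ (Fin n) → EReal) (hg : IsPSHOn Ω g)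
    (hgf : ∀ z ∈ Ω, g z ≤ ((f z : ℝ) : EReal))
    (N : Set (EuclideanSpace ℂ (Fin n))) (hN : IsOpen N) (hNΩ : N ⊆ Ω)
    (hclos : closure (Ω \ Ω₂) ∩ Ω ⊆ N)
    (heq : ∀ z ∈ N, g z = ((f z : ℝ) : EReal)) :
    ∀ z ∈ Ω₂, pshEnvelope Ω₂ f z = pshEnvelope Ω f z := by
  have hcl' : Ω \ Ω₂ ⊆ N := fun x hx => hclos ⟨subset_closure hx, hx.1⟩
  intro z hz
  apply le_antisymm
  · refine sSup_le ?_
    rintro t ⟨u, hu, huf, rfl⟩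
    classical
    have hp := psh_glue hΩ hΩ₂ hsub hu hg hN hcl'
      (fun x hxN hx2 => by rw [heq x hxN]; exact huf x hx2)
    refine le_trans ?_ (le_sSup ⟨_, hp, ?_, rfl⟩)
    · simp [hz]
    · intro w hw
      by_cases h : w ∈ Ω₂
      · simp only [h, if_true]
        exact sup_le (huf w h) (hgf w hw)
      · simp only [h, if_false]
        exact hgf w hw
  · refine sSup_le ?_
    rintro t ⟨u, hu, huf, rfl⟩
    have hp := psh_restrict hΩ₂ hsub hu hg hN hcl'
      (fun x hxN => by rw [heq x hxN]; exact EReal.coe_ne_bot _)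
    refine le_trans ?_ (le_sSup ⟨_, hp, ?_, rfl⟩)
    · exact le_sup_left
    · intro w hw
      exact sup_le (huf w (hsub hw)) (hgf w (hsub hw))
end
end
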